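/- arXiv:0811.3072 — 12 statements merged into one kernel-verified Lean document; each statement's English description precedes it below -/
import Mathlib

section
/- Let A and B be C*-algebras, D : A → B a linear map with ‖D(a)‖ ≤ ‖a‖ for all a ∈ A, and W : B → A a *-homomorphism such that W(D(a)) = a for every a ∈ A. Assume moreover that B equals the smallest closed *-subalgebra of B containing D(A). Then ker W coincides with the quasicommutator ideal of B, i.e. with the smallest closed two-sided ideal of B containing all elements D(a₁)D(a₂) − D(a₁a₂) with a₁, a₂ ∈ A. -/
/-!
The quotient of `B` by its quasicommutator ideal `J` would be a C*-algebra in which `D` becomes a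
contractive algebra homomorphism, hence a *-homomorphism; so `D ∘ W` and the identity induce
*-homomorphisms into it that agree on `D(A)`, which generates `B`. Therefore `b ≡ D (W b)` modulo
`J` for every `b`, and `W b = 0` forces `b ∈ J`. The other inclusion is clear.

Instead of forming the quotient, everything is done with congruences modulo `J`, positivity in the
quotient being replaced by the hereditary property: if `star x * x ≤ j` with `j ∈ J`, then
`x ∈ J`. That a contractive homomorphism preserves adjoints comes from the fact that contractions
`u`, `v` with `u * y = x` and `v * x = y` satisfy `star u * x = y`.
-/

section HereditaryIdeal

variable {B : Type*} [NonUnitalCStarAlgebra B]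

theorem exists_norm_sub_mul_mul_mul_self_le {r : B} (hr : IsSelfAdjoint r) {ε : ℝ} (hε : 0 < ε) :
    ∃ k : B, ‖r - r * (k * (r * r))‖ ≤ ε := by
  let f : ℝ → ℝ := fun t ↦ t ^ 2 / (t ^ 4 + ε ^ 4)
  have hden (t : ℝ) : 0 < t ^ 4 + ε ^ 4 := by positivity
  have hf : Continuous f := by fun_prop (disch := exact fun t ↦ (hden t).ne')
  have hcfc : r - r * (cfcₙ f r * (r * r)) = cfcₙ (fun t ↦ t - t * (f t * (t * t))) r := by
    rw [cfcₙ_sub .., cfcₙ_mul .., cfcₙ_mul .., cfcₙ_mul .., cfcₙ_id' ℝ r]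
  refine ⟨cfcₙ f r, hcfc ▸ norm_cfcₙ_le fun t _ ↦ ?_⟩
  have heq : t - t * (f t * (t * t)) = t * ε ^ 4 / (t ^ 4 + ε ^ 4) := by
    have := (hden t).ne'
    simp only [f]
    field_simp
    ring
  rw [heq, norm_div, norm_mul, Real.norm_of_nonneg (hden t).le,
    Real.norm_of_nonneg (pow_pos hε 4).le, div_le_iff₀ (hden t), Real.norm_eq_abs,
    ← Even.pow_abs (by decide : Even 4) t]
  have : |t| * ε ^ 3 ≤ |t| ^ 4 + ε ^ 4 := by
    nlinarith [sq_nonneg (|t| - ε), sq_nonneg (|t| ^ 2 - ε ^ 2), sq_nonneg (|t| * ε - ε ^ 2),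
      sq_nonneg (|t| ^ 2)]
  nlinarith

variable [PartialOrder B] [StarOrderedRing B]

theorem norm_sub_mul_le_of_star_mul_self_le {x y : B} (h : star x * x ≤ star y * y) (g : B) :
    ‖x - x * g‖ ≤ ‖y - y * g‖ := by
  obtain ⟨w, hw⟩ := CStarAlgebra.nonneg_iff_eq_star_mul_self.mp (sub_nonneg.mpr h)
  have hsum : star (y - y * g) * (y - y * g)
      = star (x - x * g) * (x - x * g) + star (w - w * g) * (w - w * g) := by
    have hy : star y * y = star x * x + star w * w := by rw [← hw, add_sub_cancel]
    have expand (v : B) : star (v - v * g) * (v - v * g) =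
        star v * v - star v * v * g - star g * (star v * v) + star g * (star v * v) * g := by
      rw [star_sub, star_mul]; noncomm_ring
    simp only [expand, hy]; noncomm_ring
  refine (mul_self_le_mul_self_iff (norm_nonneg _) (norm_nonneg _)).mpr ?_
  simp only [← CStarRing.norm_star_mul_self, hsum]
  exact CStarAlgebra.norm_le_norm_of_nonneg_of_le (star_mul_self_nonneg _)
    (le_add_of_nonneg_right (star_mul_self_nonneg _))

theorem mem_of_star_mul_self_le {L : Set B} (hL : IsClosed L)
    (hmul : ∀ b, ∀ x ∈ L, b * x ∈ L) {x j : B} (hj : j ∈ L) (hx : star x * x ≤ j) : x ∈ L := by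
  have hj₀ : 0 ≤ j := (star_mul_self_nonneg x).trans hx
  set r := CFC.sqrt j
  have hr : IsSelfAdjoint r := (CFC.sqrt_nonneg j).isSelfAdjoint
  have hrr : r * r = j := CFC.sqrt_mul_sqrt_self j
  rw [← hL.closure_eq, Metric.mem_closure_iff]
  intro ε hε
  obtain ⟨k, hk⟩ := exists_norm_sub_mul_mul_mul_self_le hr (half_pos hε)
  refine ⟨x * (k * j), hmul _ _ (hmul _ _ hj), ?_⟩
  calc dist x (x * (k * j)) = ‖x - x * (k * j)‖ := dist_eq_norm _ _
    _ ≤ ‖r - r * (k * j)‖ :=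
      norm_sub_mul_le_of_star_mul_self_le (by rwa [hr.star_eq, hrr]) _
    _ < ε := by rw [← hrr]; linarith

end HereditaryIdeal

theorem exists_continuous_approx_id_with_local_unit {δ : ℝ} (hδ : 0 < δ) :
    ∃ c e : ℝ → ℝ, Continuous c ∧ Continuous e ∧ e 0 = 0 ∧ (∀ t, |e t| ≤ 1) ∧
      (∀ t, e t * c t = c t) ∧ (∀ t, |c t| ≤ |t|) ∧ ∀ t, |t - c t| ≤ δ := by
  refine ⟨fun t ↦ t - max (-δ) (min δ t), fun t ↦ min 1 (|t| / δ), by fun_prop, by fun_prop,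
    by simp, fun t ↦ ?_, fun t ↦ ?_, fun t ↦ ?_, fun t ↦ ?_⟩
  · rw [abs_of_nonneg (by positivity)]
    exact min_le_left _ _
  · rcases le_total |t| δ with ht | ht
    · obtain ⟨h₁, h₂⟩ := abs_le.mp ht
      simp [h₁, h₂]
    · simp only [min_eq_left ((one_le_div hδ).mpr ht), one_mul]
  · grind
  · grind

theorem exists_isStarNormal_norm_sub_add_star_le {A : Type*} [NonUnitalCStarAlgebra A] {a : A}
    (ha : IsSelfAdjoint a) (ha' : ‖a‖ ≤ 2) {δ : ℝ} (hδ : 0 < δ) :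
    ∃ u : A, IsStarNormal u ∧ ‖u‖ ≤ 1 ∧ u * star u * (u + star u) = u + star u ∧
      ‖a - (u + star u)‖ ≤ δ := by
  obtain ⟨c, e, hc, he, he₀, he₁, hec, hct, hcδ⟩ := exists_continuous_approx_id_with_local_unit hδ
  have hc₀ : c 0 = 0 := by simpa using hct 0
  -- On the spectrum `‖f‖ = e` and `f + star f = 2 * cos (arccos (c / 2)) = c`.
  let f : ℂ → ℂ := fun z ↦ e z.re * Complex.exp (Real.arccos (c z.re / 2) * Complex.I)
  have hf : Continuous f := by fun_prop
  have hf₀ : f 0 = 0 := by simp [f, he₀]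
  have hadd : cfcₙ f a + star (cfcₙ f a) = cfcₙ (fun z ↦ (c z.re : ℂ)) a := by
    rw [← cfcₙ_star, ← cfcₙ_add ..]
    refine cfcₙ_congr fun z hz ↦ ?_
    have hcz : |c z.re| ≤ 2 :=
      (hct _).trans <| (Complex.abs_re_le_norm z).trans <|
        (NonUnitalIsometricContinuousFunctionalCalculus.norm_quasispectrum_le a hz).trans ha'
    obtain ⟨h₁, h₂⟩ := abs_le.mp hcz
    have hcos : Real.cos (Real.arccos (c z.re / 2)) = c z.re / 2 :=
      Real.cos_arccos (by linarith) (by linarith)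
    apply Complex.ext
    · simp [f, Complex.exp_re, hcos]
      linarith [hec z.re]
    · simp [f]
  have hnorm (z : ℂ) : ‖f z‖ = |e z.re| := by simp [f, Complex.norm_exp_ofReal_mul_I]
  have hmul : cfcₙ f a * star (cfcₙ f a) = cfcₙ (fun z ↦ ((e z.re * e z.re : ℝ) : ℂ)) a := by
    rw [← cfcₙ_star, ← cfcₙ_mul f (fun z ↦ star (f z)) a hf.continuousOn hf₀
      hf.star.continuousOn (by simp [hf₀])]
    refine cfcₙ_congr fun z _ ↦ ?_
    simp only [Complex.star_def, Complex.mul_conj', hnorm, pow_two, ← Complex.ofReal_mul,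
      abs_mul_abs_self]
  refine ⟨cfcₙ f a, cfcₙ_predicate f a, norm_cfcₙ_le fun z _ ↦ ?_, ?_, ?_⟩
  · exact (hnorm z).trans_le (he₁ z.re)
  · rw [hadd, hmul, ← cfcₙ_mul ..]
    refine cfcₙ_congr fun z _ ↦ ?_
    simp only [← Complex.ofReal_mul, mul_assoc, hec]
  · rw [hadd]
    nth_rw 1 [← cfcₙ_id' ℂ a]
    rw [← cfcₙ_sub ..]
    refine norm_cfcₙ_le fun z hz ↦ ?_
    have hz' : (z.re : ℂ) = z := ha.quasispectrumRestricts.rightInvOn hz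
    rw [← hz']
    simpa [← Complex.ofReal_sub] using hcδ z.re

section ClosedIdeal

/-- Closed two-sided ideals of a C*-algebra, as a predicate on submodules, so that equality in the
quotient C*-algebra `B / J` is available as the congruence `x ≡ y [SMOD J]`. -/
structure IsClosedIdeal {B : Type*} [NonUnitalCStarAlgebra B] (J : Submodule ℂ B) : Prop where
  isClosed : IsClosed (J : Set B)
  mul_mem_left : ∀ b, ∀ x ∈ J, b * x ∈ J
  mul_mem_right : ∀ b, ∀ x ∈ J, x * b ∈ J

variable {B : Type*} [NonUnitalCStarAlgebra B]

namespace IsClosedIdeal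

variable {J : Submodule ℂ B} (hJ : IsClosedIdeal J)
include hJ

theorem mul_smodEq_mul {x x' y y' : B} (hx : x ≡ x' [SMOD J]) (hy : y ≡ y' [SMOD J]) :
    x * y ≡ x' * y' [SMOD J] := by
  rw [SModEq.sub_mem] at *
  have := J.add_mem (hJ.mul_mem_right y _ hx) (hJ.mul_mem_left x' _ hy)
  rwa [sub_mul, mul_sub, sub_add_sub_cancel] at this

theorem star_mem {x : B} (hx : x ∈ J) : star x ∈ J := by
  let : PartialOrder B := CStarAlgebra.spectralOrder B
  have : StarOrderedRing B := CStarAlgebra.spectralOrderedRing B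
  exact mem_of_star_mul_self_le hJ.isClosed hJ.mul_mem_left (hJ.mul_mem_right (star x) x hx)
    (by rw [star_star])

theorem star_smodEq_star {x y : B} (h : x ≡ y [SMOD J]) : star x ≡ star y [SMOD J] := by
  rw [SModEq.sub_mem] at *
  simpa using hJ.star_mem h

theorem isClosed_setOf_smodEq {X : Type*} [TopologicalSpace X] {f g : X → B} (hf : Continuous f)
    (hg : Continuous g) : IsClosed {x | f x ≡ g x [SMOD J]} := by
  simp only [SModEq.sub_mem]
  exact hJ.isClosed.preimage (hf.sub hg)

end IsClosedIdeal

theorem star_mul_mul_self_le_of_norm_le_one [PartialOrder B] [StarOrderedRing B] {u : B}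
    (hu : ‖u‖ ≤ 1) (x : B) : star (u * x) * (u * x) ≤ star x * x := by
  have huu : ‖star u * u‖ ≤ 1 := by
    rw [CStarRing.norm_star_mul_self]; exact mul_le_one₀ hu (norm_nonneg u) hu
  calc star (u * x) * (u * x) = star x * (star u * u) * x := by simp only [star_mul, mul_assoc]
    _ ≤ ‖star u * u‖ • (star x * x) := CStarAlgebra.star_left_conjugate_le_norm_smul
    _ ≤ (1 : ℝ) • (star x * x) := smul_le_smul_of_nonneg_right huu (star_mul_self_nonneg x)
    _ = star x * x := one_smul _ _

theorem IsClosedIdeal.star_mul_smodEq {J : Submodule ℂ B} (hJ : IsClosedIdeal J) {u v x y : B}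
    (hu : ‖u‖ ≤ 1) (hv : ‖v‖ ≤ 1) (hx : u * y ≡ x [SMOD J]) (hy : v * x ≡ y [SMOD J]) :
    star u * x ≡ y [SMOD J] := by
  let : PartialOrder B := CStarAlgebra.spectralOrder B
  have : StarOrderedRing B := CStarAlgebra.spectralOrderedRing B
  set z := star u * x - y with hz
  set p := (star x * x - star (star u * x) * (star u * x)) +
    (star x * x - star (v * x) * (v * x)) with hp
  have hp₀ : 0 ≤ p := add_nonneg
    (sub_nonneg.mpr (star_mul_mul_self_le_of_norm_le_one ((norm_star u).trans_le hu) x))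
    (sub_nonneg.mpr (star_mul_mul_self_le_of_norm_le_one hv x))
  have hzp : star z * z + p ≡ 0 [SMOD J] :=
    calc star z * z + p
        = (star x * x - star x * (u * y)) + (star x * x - star (u * y) * x) +
            (star y * y - star (v * x) * (v * x)) := by
          rw [hz, hp]
          simp only [star_sub, star_mul, star_star, mul_sub, sub_mul, mul_assoc]
          abel
      _ ≡ (star x * x - star x * x) + (star x * x - star x * x) + (star y * y - star y * y)
            [SMOD J] :=
          ((SModEq.rfl.sub (hJ.mul_smodEq_mul .rfl hx)).add
            (SModEq.rfl.sub (hJ.mul_smodEq_mul (hJ.star_smodEq_star hx) .rfl))).add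
            (SModEq.rfl.sub (hJ.mul_smodEq_mul (hJ.star_smodEq_star hy) hy))
      _ = 0 := by simp only [sub_self, add_zero]
  exact SModEq.sub_mem.mpr <| mem_of_star_mul_self_le hJ.isClosed hJ.mul_mem_left
    (SModEq.zero.mp hzp) (le_add_of_nonneg_right hp₀)

end ClosedIdeal

section ContractiveHomModIdeal

open scoped CStarAlgebra

variable {A B : Type*} [NonUnitalCStarAlgebra A] [NonUnitalCStarAlgebra B]

theorem isClosedIdeal_ker (W : B →⋆ₙₐ[ℂ] A) : IsClosedIdeal (LinearMap.ker (W : B →ₗ[ℂ] A)) where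
  isClosed := isClosed_singleton.preimage (map_continuous W)
  mul_mem_left b x (hx : W x = 0) := show W (b * x) = 0 by rw [map_mul, hx, mul_zero]
  mul_mem_right b x (hx : W x = 0) := show W (x * b) = 0 by rw [map_mul, hx, zero_mul]

variable {J : Submodule ℂ B} {φ : A →ₗ[ℂ] B}

/-- A contractive linear map `A → B` that is multiplicative modulo `J`, standing for the induced
contractive algebra homomorphism `A → B / J`. -/
structure IsContractiveHomMod (J : Submodule ℂ B) (φ : A →ₗ[ℂ] B) : Prop where
  norm_apply_le : ∀ a, ‖φ a‖ ≤ ‖a‖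
  mul_smodEq : ∀ a b, φ a * φ b ≡ φ (a * b) [SMOD J]

namespace IsContractiveHomMod

variable (hφ : IsContractiveHomMod J φ)
include hφ

theorem continuous : Continuous φ :=
  AddMonoidHomClass.continuous_of_bound φ 1 (by simpa using hφ.norm_apply_le)

variable (hJ : IsClosedIdeal J)
include hJ

theorem star_map_mul_map_smodEq {u a : A} (hu : ‖u‖ ≤ 1) (hua : u * star u * a = a) :
    star (φ u) * φ a ≡ φ (star u * a) [SMOD J] := by
  refine hJ.star_mul_smodEq ((hφ.norm_apply_le u).trans hu)
    ((hφ.norm_apply_le (star u)).trans ((norm_star u).trans_le hu)) ?_ (hφ.mul_smodEq _ _)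
  simpa only [← mul_assoc, hua] using hφ.mul_smodEq u (star u * a)

theorem star_map_mul_self_smodEq {a : A} (ha : IsSelfAdjoint a) (ha' : ‖a‖ ≤ 2) :
    star (φ a) * φ a ≡ φ (a * a) [SMOD J] := by
  have hclosed : IsClosed {x | star (φ x) * φ x ≡ φ (x * x) [SMOD J]} := by
    have := hφ.continuous
    exact hJ.isClosed_setOf_smodEq (by fun_prop) (by fun_prop)
  suffices a ∈ closure {x | star (φ x) * φ x ≡ φ (x * x) [SMOD J]} by
    rwa [hclosed.closure_eq] at this
  refine Metric.mem_closure_iff.mpr fun ε hε ↦ ?_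
  obtain ⟨u, hu, hu₁, huu, hau⟩ := exists_isStarNormal_norm_sub_add_star_le ha ha' (half_pos hε)
  refine ⟨u + star u, ?_, by rw [dist_eq_norm]; linarith⟩
  have h₁ := hφ.star_map_mul_map_smodEq hJ hu₁ huu
  have h₂ := hφ.star_map_mul_map_smodEq hJ (u := star u) ((norm_star u).trans_le hu₁)
    (by rwa [star_star, hu.star_comm_self])
  simpa only [Set.mem_ofPred_eq, map_add, star_add, add_mul, star_star, add_comm] using h₁.add h₂

theorem map_star_smodEq (a : A) : φ (star a) ≡ star (φ a) [SMOD J] := by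
  let : PartialOrder A := CStarAlgebra.spectralOrder A
  have : StarOrderedRing A := CStarAlgebra.spectralOrderedRing A
  have ha : a ∈ Submodule.span ℂ ({x : A | 0 ≤ x} ∩ Metric.closedBall 0 1) := by
    simp only [CStarAlgebra.span_nonneg_inter_unitClosedBall, Submodule.mem_top]
  induction ha using Submodule.span_induction with
  | mem x hx =>
    obtain ⟨hx₀, hx₁⟩ := hx
    set s := CFC.sqrt x
    have hs : IsSelfAdjoint s := (CFC.sqrt_nonneg x).isSelfAdjoint
    have hss : s * s = x := CFC.sqrt_mul_sqrt_self x
    have hs₁ : ‖s‖ ≤ 2 := by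
      have : ‖s‖ * ‖s‖ ≤ 1 := by
        rw [← CStarRing.norm_star_mul_self, hs.star_eq, hss]; simpa using hx₁
      nlinarith
    -- `star (φ s) * φ s` is self-adjoint, hence so is `φ x` modulo `J`.
    have hsx := hss ▸ hφ.star_map_mul_self_smodEq hJ hs hs₁
    have hsx' := hJ.star_smodEq_star hsx
    rw [star_mul, star_star] at hsx'
    rw [(IsSelfAdjoint.of_nonneg hx₀).star_eq]
    exact hsx.symm.trans hsx'
  | zero => simp
  | add x y _ _ hx hy => simpa only [star_add, map_add] using hx.add hy
  | smul c x _ hx => simpa only [star_smul, map_smul] using hx.smul (star c)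

theorem smodEq_map_apply (W : B →⋆ₙₐ[ℂ] A) (hW : Function.LeftInverse W φ) {b : B}
    (hb : b ∈ (NonUnitalStarAlgebra.adjoin ℂ (Set.range φ)).topologicalClosure) :
    b ≡ φ (W b) [SMOD J] := by
  let S : NonUnitalStarSubalgebra ℂ B :=
    { carrier := {b | b ≡ φ (W b) [SMOD J]}
      zero_mem' := by simp
      add_mem' hx hy := by simpa using hx.add hy
      smul_mem' c x hx := by simpa using hx.smul c
      mul_mem' {x y} hx hy := by
        simpa using (hJ.mul_smodEq_mul hx hy).trans (hφ.mul_smodEq (W x) (W y))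
      star_mem' {x} hx := by
        change star x ≡ φ (W (star x)) [SMOD J]
        rw [map_star]
        exact (hJ.star_smodEq_star hx).trans (hφ.map_star_smodEq hJ (W x)).symm }
  have hS : IsClosed (S : Set B) :=
    hJ.isClosed_setOf_smodEq continuous_id (hφ.continuous.comp (map_continuous W))
  have hφS : Set.range φ ⊆ S := by
    rintro _ ⟨a, rfl⟩
    change φ a ≡ φ (W (φ a)) [SMOD J]
    rw [hW a]
  exact NonUnitalStarSubalgebra.topologicalClosure_minimal _
    (NonUnitalStarAlgebra.adjoin_le hφS) hS hb

end IsContractiveHomMod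

end ContractiveHomModIdeal

/-- With `D`, `W` as before, if `B` is the smallest closed *-subalgebra of
itself containing the range of `D`, then the kernel of `W` coincides with the smallest closed
two-sided ideal of `B` containing all quasicommutators `D a₁ * D a₂ - D (a₁ * a₂)`. The
smallest closed ideal is expressed as the intersection of all closed subsets of `B` that
contain the quasicommutators, contain `0`, and are closed under addition, scalar
multiplication, and two-sided multiplication by arbitrary elements of `B`. -/
theorem stmt1 {A B : Type*}
    [NonUnitalNormedRing A] [StarRing A] [CStarRing A] [NormedSpace ℂ A]
    [IsScalarTower ℂ A A] [SMulCommClass ℂ A A] [StarModule ℂ A] [CompleteSpace A]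
    [NonUnitalNormedRing B] [StarRing B] [CStarRing B] [NormedSpace ℂ B]
    [IsScalarTower ℂ B B] [SMulCommClass ℂ B B] [StarModule ℂ B] [CompleteSpace B]
    (D : A →ₗ[ℂ] B) (hD : ∀ a : A, ‖D a‖ ≤ ‖a‖)
    (W : B →⋆ₙₐ[ℂ] A) (hWD : ∀ a : A, W (D a) = a)
    (hgen : (NonUnitalStarAlgebra.adjoin ℂ (Set.range D)).topologicalClosure = ⊤) :
    {b : B | W b = 0} =
      ⋂₀ {J : Set B | IsClosed J ∧
        {x : B | ∃ a₁ a₂ : A, x = D a₁ * D a₂ - D (a₁ * a₂)} ⊆ J ∧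
        (0 : B) ∈ J ∧
        (∀ x ∈ J, ∀ y ∈ J, x + y ∈ J) ∧
        (∀ (c : ℂ), ∀ x ∈ J, c • x ∈ J) ∧
        (∀ (b : B), ∀ x ∈ J, b * x ∈ J ∧ x * b ∈ J)} := by
  let : NonUnitalCStarAlgebra A := {}
  let : NonUnitalCStarAlgebra B := {}
  refine Set.Subset.antisymm ?_ (Set.sInter_subset_of_mem ?_)
  · rintro b hb J ⟨hclosed, hquasi, hzero, hadd, hsmul, hmul⟩
    let I : Submodule ℂ B :=
      { carrier := J
        zero_mem' := hzero
        add_mem' := fun hx hy ↦ hadd _ hx _ hy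
        smul_mem' := hsmul }
    have hI : IsClosedIdeal I :=
      ⟨hclosed, fun b x hx ↦ (hmul b x hx).1, fun b x hx ↦ (hmul b x hx).2⟩
    have hDI : IsContractiveHomMod I D :=
      ⟨hD, fun a₁ a₂ ↦ SModEq.sub_mem.mpr (hquasi ⟨a₁, a₂, rfl⟩)⟩
    have hbI : b ≡ D (W b) [SMOD I] := hDI.smodEq_map_apply hI W hWD (hgen ▸ trivial)
    rw [show W b = 0 from hb, map_zero] at hbI
    exact SModEq.zero.mp hbI
  · let K : Submodule ℂ B := LinearMap.ker (W : B →ₗ[ℂ] A)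
    have hK : IsClosedIdeal K := isClosedIdeal_ker W
    refine ⟨hK.isClosed, ?_, K.zero_mem, fun x hx y hy ↦ K.add_mem hx hy,
      fun c x hx ↦ K.smul_mem c hx, fun b x hx ↦ ⟨hK.mul_mem_left b x hx, hK.mul_mem_right b x hx⟩⟩
    rintro _ ⟨a₁, a₂, rfl⟩
    simp [hWD]
end

section
/- Let A be a unital C*-algebra, I a closed two-sided ideal of A, B a unital C*-algebra, and π : A → B a unital *-homomorphism whose restriction to I is injective. Then for every a ∈ A the following are equivalent: (i) a is invertible in A; (ii) π(a) is invertible in B and a is invertible modulo I, i.e. there exists b ∈ A with ab − 1 ∈ I and ba − 1 ∈ I. -/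
/-! The range of a *-homomorphism `π` of unital C⋆-algebras is inverse-closed. If `x` is normal and
`π x` is invertible, its inverse is the continuous function `z ↦ z⁻¹` of `π x`; extended from the
spectrum of `π x` to all of `ℂ`, this function can be applied to `x` itself. The general case
follows from `u⁻¹ = (star u * u)⁻¹ * star u`. Hence `π a` is invertible exactly when `a` is
invertible modulo `ker π`. If `b` and `c` invert `a` modulo `I` and `J`, then `c + b - c * a * b`
inverts it modulo `I ⊓ J`, because `1 - a * (c + b - c * a * b) = (1 - a * c) * (1 - a * b)`, and
likewise on the other side. Finally `I ⊓ ker π = ⊥` by injectivity of `π` on `I`. -/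

section Ring

variable {R : Type*} [Ring R] {I J : Ideal R} {a : R}

/-- Invertibility of `a` modulo `I`; for a two-sided ideal, invertibility in the quotient ring.
Stated through elements of `R` so that it makes sense for a left ideal. -/
def IsUnitModulo (I : Ideal R) (a : R) : Prop :=
  ∃ b : R, a * b - 1 ∈ I ∧ b * a - 1 ∈ I

theorem IsUnitModulo.mono (h : I ≤ J) (ha : IsUnitModulo I a) : IsUnitModulo J a :=
  let ⟨b, hab, hba⟩ := ha
  ⟨b, h hab, h hba⟩

theorem isUnitModulo_bot : IsUnitModulo (⊥ : Ideal R) a ↔ IsUnit a := by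
  simp only [IsUnitModulo, Ideal.mem_bot, sub_eq_zero, isUnit_iff_exists]

theorem isUnitModulo_inf [J.IsTwoSided] :
    IsUnitModulo (I ⊓ J) a ↔ IsUnitModulo I a ∧ IsUnitModulo J a := by
  refine ⟨fun h => ⟨h.mono inf_le_left, h.mono inf_le_right⟩, ?_⟩
  rintro ⟨⟨b, hab, hba⟩, ⟨c, hac, hca⟩⟩
  have mul_le_inf : J * I ≤ I ⊓ J := le_inf Ideal.mul_le_right Ideal.mul_le_left
  have right_defect : a * (c + b - c * a * b) - 1 = -((a * c - 1) * (a * b - 1)) := by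
    noncomm_ring
  have left_defect : (c + b - c * a * b) * a - 1 = -((c * a - 1) * (b * a - 1)) := by
    noncomm_ring
  refine ⟨c + b - c * a * b, ?_, ?_⟩
  · rw [right_defect]
    exact neg_mem (mul_le_inf (Ideal.mul_mem_mul hac hab))
  · rw [left_defect]
    exact neg_mem (mul_le_inf (Ideal.mul_mem_mul hca hba))

theorem inf_ker_eq_bot_of_injOn {S F : Type*} [Semiring S] [FunLike F R S] [RingHomClass F R S]
    {f : F} (hf : Set.InjOn f I) : I ⊓ RingHom.ker f = ⊥ :=
  (Submodule.eq_bot_iff _).2 fun _ ⟨hxI, hxf⟩ => hf hxI I.zero_mem (by simpa using hxf)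

end Ring

section StarAlgHom

variable {A B : Type*} [CStarAlgebra A] [CStarAlgebra B] {π : A →⋆ₐ[ℂ] B}

open scoped CStarAlgebra in
theorem cfc_map_mem_range (c : A) [IsStarNormal c] {f : ℂ → ℂ}
    (hf : ContinuousOn f (spectrum ℂ (π c))) : cfc f (π c) ∈ π.range := by
  obtain ⟨g, hg⟩ := ContinuousMap.exists_restrict_eq (spectrum.isClosed (π c))
    ⟨_, hf.domRestrict⟩
  have hgf : (spectrum ℂ (π c)).EqOn g f := fun z hz => DFunLike.congr_fun hg ⟨z, hz⟩
  have hπc : IsStarNormal (π c) := .map π c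
  refine ⟨cfc g c, ?_⟩
  calc π (cfc g c) = cfc g (π c) := π.map_cfc g c
    _ = cfc f (π c) := cfc_congr hgf

theorem inv_mem_range_of_isStarNormal (c : A) [IsStarNormal c] {u : Bˣ} (hu : π c = u) :
    (↑u⁻¹ : B) ∈ π.range := by
  have hnormal : IsStarNormal (u : B) := hu ▸ .map π c
  have hinv : ContinuousOn (·⁻¹ : ℂ → ℂ) (spectrum ℂ (u : B)) :=
    continuousOn_inv₀.mono fun _ hz => spectrum.ne_zero_of_mem_of_unit hz
  rw [← cfc_inv_id (R := ℂ) u, ← hu]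
  exact cfc_map_mem_range c (hu ▸ hinv)

theorem inv_mem_range {u : Bˣ} (hu : (u : B) ∈ π.range) : (↑u⁻¹ : B) ∈ π.range := by
  obtain ⟨a, ha : π a = u⟩ := hu
  have hnormal : IsStarNormal (star a * a) := (IsSelfAdjoint.star_mul_self a).isStarNormal
  have hmap : π (star a * a) = (star u * u : Bˣ) := by
    rw [map_mul, map_star, ha, Units.val_mul, Units.coe_star]
  have hinv : u⁻¹ = (star u * u)⁻¹ * star u := by group
  rw [hinv, Units.val_mul, Units.coe_star]
  exact mul_mem (inv_mem_range_of_isStarNormal (star a * a) hmap) (star_mem ⟨a, ha⟩)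

theorem isUnitModulo_ker {a : A} : IsUnitModulo (RingHom.ker π) a ↔ IsUnit (π a) := by
  simp only [IsUnitModulo, RingHom.mem_ker, map_sub, map_mul, map_one, sub_eq_zero]
  constructor
  · rintro ⟨b, hab, hba⟩
    exact isUnit_iff_exists.2 ⟨π b, hab, hba⟩
  · rintro ⟨u, hu⟩
    obtain ⟨b, hb : π b = ↑u⁻¹⟩ := inv_mem_range ⟨a, hu.symm⟩
    exact ⟨b, by simp [hb, ← hu], by simp [hb, ← hu]⟩

theorem stmt2_general {I : Ideal A} (hπ : Set.InjOn π I) (a : A) :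
    IsUnit a ↔ IsUnit (π a) ∧ IsUnitModulo I a := by
  rw [← isUnitModulo_bot, ← inf_ker_eq_bot_of_injOn hπ, isUnitModulo_inf, isUnitModulo_ker,
    and_comm]

end StarAlgHom

/-- Let `A`, `B` be unital C*-algebras, `I` a closed two-sided ideal of `A`,
and `π : A → B` a unital *-homomorphism injective on `I`. Then `a ∈ A` is invertible iff
`π a` is invertible and `a` is invertible modulo `I`. -/
theorem stmt2 {A B : Type*}
    [NormedRing A] [StarRing A] [CStarRing A] [CompleteSpace A]
    [NormedAlgebra ℂ A] [StarModule ℂ A]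
    [NormedRing B] [StarRing B] [CStarRing B] [CompleteSpace B]
    [NormedAlgebra ℂ B] [StarModule ℂ B]
    (I : TwoSidedIdeal A) (hI : IsClosed (I : Set A))
    (π : A →⋆ₐ[ℂ] B) (hπ : Set.InjOn π (I : Set A)) (a : A) :
    IsUnit a ↔ (IsUnit (π a) ∧ ∃ b : A, a * b - 1 ∈ I ∧ b * a - 1 ∈ I) := by
  let : CStarAlgebra A := {}
  let : CStarAlgebra B := {}
  exact stmt2_general (I := TwoSidedIdeal.asIdeal I) hπ a
end

section
/- The smallest closed *-subalgebra of F containing all sequences (P_n A P_n)_{n≥1} with A ∈ O_N coincides with the smallest closed *-subalgebra of F containing the N sequences (P_n S_j P_n)_{n≥1}, j ∈ Ω. -/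
/-!
Write a word in the isometries as `w = S i₁ * ⋯ * S iₖ`. The relations `star (S i) * S j = δᵢⱼ` let
every starred factor be moved to the right, so the *-algebra generated by the `S i` is spanned by
the monomials `w * star w'`. Since `S i` maps `e k` to a basis vector of index at least `k`,
`P n * S i * P n = P n * S i`; hence the hermitian map `a ↦ (P n * a * P n)ₙ` is multiplicative on
products `S i * a`, and sends a monomial to the product of the compressions of its factors. The
empty word is not a product of generators, but `1 = ∑ i, S i * star (S i)` is a sum of monomials in
nonempty words. The passage to closures is the continuity of the compression.
-/

open Set

theorem map_mul_mem_of_mem_closure {A B ι σ : Type*} [Monoid A] [Mul B] [SetLike σ B]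
    [MulMemClass σ B] {S : ι → A} {Φ : A → B} {G : σ}
    (map_mul : ∀ i a, Φ (S i * a) = Φ (S i) * Φ a) (hG : ∀ i, Φ (S i) ∈ G) {w a : A}
    (hw : w ∈ Submonoid.closure (range S)) (ha : Φ a ∈ G) : Φ (w * a) ∈ G := by
  induction hw using Submonoid.closure_induction_left with
  | one => rwa [one_mul]
  | mul_left _ hi w _ ih =>
    obtain ⟨i, rfl⟩ := hi
    rw [mul_assoc, map_mul]
    exact mul_mem (hG i) ih

section Cuntz

variable {R A B ι : Type*} [CommSemiring R] [Semiring A] [Algebra R A] {S : ι → A}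

theorem mul_mem_span_of_forall_mul_mem {a : A} {s : Set A}
    (h : ∀ x ∈ s, a * x ∈ Submodule.span R s) {x : A} (hx : x ∈ Submodule.span R s) :
    a * x ∈ Submodule.span R s :=
  Submodule.span_le (p := (Submodule.span R s).comap (LinearMap.mulLeft R a)).2 h hx

variable [StarRing A]

/-- A Cuntz family: isometries `S i` with pairwise orthogonal ranges whose range projections sum to
`1`. Stated in a *-ring, so that it covers every representation of the Cuntz relations. -/
structure IsCuntzFamily [Fintype ι] (S : ι → A) : Prop where
  star_mul_self (i : ι) : star (S i) * S i = 1
  star_mul_of_ne {i j : ι} (hij : i ≠ j) : star (S i) * S j = 0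
  sum_mul_star : ∑ i, S i * star (S i) = 1

/-- The monomials `w * star w'` with `w` and `w'` words in the family `S`, written `S_α S_β^*` for
multi-indices `α` and `β` in the literature on Cuntz algebras. -/
def cuntzMonomials (S : ι → A) : Set A :=
  image2 (fun w w' ↦ w * star w') (Submonoid.closure (range S)) (Submonoid.closure (range S))

theorem one_mem_cuntzMonomials : 1 ∈ cuntzMonomials S :=
  ⟨1, one_mem _, 1, one_mem _, by simp⟩

theorem mul_mem_cuntzMonomials (i : ι) {a : A} (ha : a ∈ cuntzMonomials S) :
    S i * a ∈ cuntzMonomials S := by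
  obtain ⟨w, hw, w', hw', rfl⟩ := ha
  exact ⟨S i * w, mul_mem (Submonoid.mem_closure_of_mem (mem_range_self i)) hw, w', hw',
    mul_assoc _ _ _⟩

theorem IsCuntzFamily.star_mul_mem_cuntzMonomials_or_eq_zero [Fintype ι] (hS : IsCuntzFamily S)
    (i : ι) {a : A} (ha : a ∈ cuntzMonomials S) :
    star (S i) * a ∈ cuntzMonomials S ∨ star (S i) * a = 0 := by
  obtain ⟨w, hw, w', hw', rfl⟩ := ha
  induction hw using Submonoid.closure_induction_left with
  | one =>
    exact .inl ⟨1, one_mem _, w' * S i,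
      mul_mem hw' (Submonoid.mem_closure_of_mem (mem_range_self i)), by simp⟩
  | mul_left _ hj w hw _ =>
    obtain ⟨j, rfl⟩ := hj
    obtain rfl | hij := eq_or_ne i j
    · exact .inl ⟨w, hw, w', hw', by simp [← mul_assoc, hS.star_mul_self]⟩
    · exact .inr (by simp [← mul_assoc, hS.star_mul_of_ne hij])

variable [NonUnitalSemiring B] [StarRing B] [Module R B]
  {Φ : A →ₗ[R] B} {G : NonUnitalStarSubalgebra R B}

theorem IsCuntzFamily.map_one_mem [Fintype ι] (hS : IsCuntzFamily S)
    (map_star : ∀ a, Φ (star a) = star (Φ a)) (map_mul : ∀ i a, Φ (S i * a) = Φ (S i) * Φ a)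
    (hG : ∀ i, Φ (S i) ∈ G) : Φ 1 ∈ G := by
  simp only [← hS.sum_mul_star, map_sum, map_mul, map_star]
  exact sum_mem fun i _ ↦ mul_mem (hG i) (star_mem (hG i))

variable [StarRing R] [StarModule R A]

theorem mem_of_mem_adjoin_of_forall_mul_mem {s : Set A} {V : Submodule R A} (hone : 1 ∈ V)
    (hmul : ∀ a ∈ s ∪ star s, ∀ v ∈ V, a * v ∈ V) {a : A}
    (ha : a ∈ NonUnitalStarAlgebra.adjoin R s) : a ∈ V := by
  have words_mul_mem : ∀ w ∈ Subsemigroup.closure (s ∪ star s), ∀ v ∈ V, w * v ∈ V := by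
    intro w hw
    induction hw using Subsemigroup.closure_induction with
    | mem w hw => exact hmul w hw
    | mul w w' _ _ ih ih' =>
      intro v hv
      rw [mul_assoc]
      exact ih _ (ih' v hv)
  have adjoin_le : (NonUnitalStarAlgebra.adjoin R s).toSubmodule ≤ V := by
    rw [NonUnitalStarAlgebra.adjoin_eq_span, Submodule.span_le]
    exact fun w hw ↦ mul_one w ▸ words_mul_mem w hw 1 hone
  exact adjoin_le ha

theorem IsCuntzFamily.mem_span_cuntzMonomials [Fintype ι] (hS : IsCuntzFamily S) {a : A}
    (ha : a ∈ NonUnitalStarAlgebra.adjoin R (range S)) :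
    a ∈ Submodule.span R (cuntzMonomials S) := by
  refine mem_of_mem_adjoin_of_forall_mul_mem (Submodule.subset_span one_mem_cuntzMonomials) ?_ ha
  rintro b (⟨i, rfl⟩ | ⟨i, hi⟩) v hv
  · exact mul_mem_span_of_forall_mul_mem
      (fun x hx ↦ Submodule.subset_span (mul_mem_cuntzMonomials i hx)) hv
  · obtain rfl : star (S i) = b := star_eq_iff_star_eq.2 hi.symm
    refine mul_mem_span_of_forall_mul_mem (fun x hx ↦ ?_) hv
    obtain hmem | hzero := hS.star_mul_mem_cuntzMonomials_or_eq_zero i hx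
    · exact Submodule.subset_span hmem
    · exact hzero ▸ zero_mem _

theorem IsCuntzFamily.map_mem_of_mem_adjoin [Fintype ι] (hS : IsCuntzFamily S)
    (map_star : ∀ a, Φ (star a) = star (Φ a)) (map_mul : ∀ i a, Φ (S i * a) = Φ (S i) * Φ a)
    (hG : ∀ i, Φ (S i) ∈ G) {a : A} (ha : a ∈ NonUnitalStarAlgebra.adjoin R (range S)) :
    Φ a ∈ G := by
  have word_mem {w : A} (hw : w ∈ Submonoid.closure (range S)) : Φ w ∈ G :=
    mul_one w ▸ map_mul_mem_of_mem_closure map_mul hG hw (hS.map_one_mem map_star map_mul hG)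
  have monomial_mem : cuntzMonomials S ⊆ G.toSubmodule.comap Φ := by
    rintro _ ⟨w, hw, w', hw', rfl⟩
    exact map_mul_mem_of_mem_closure map_mul hG hw (map_star w' ▸ star_mem (word_mem hw'))
  exact Submodule.span_le.2 monomial_mem (hS.mem_span_cuntzMonomials ha)

variable [TopologicalSpace A] [IsSemitopologicalSemiring A] [ContinuousStar A]
  [ContinuousConstSMul R A] [TopologicalSpace B] [IsSemitopologicalSemiring B] [ContinuousStar B]
  [ContinuousConstSMul R B] [IsScalarTower R B B] [SMulCommClass R B B] [StarModule R B]

theorem IsCuntzFamily.topologicalClosure_adjoin_image_eq [Fintype ι] (hS : IsCuntzFamily S)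
    (Φ : A →L[R] B) (map_star : ∀ a, Φ (star a) = star (Φ a))
    (map_mul : ∀ i a, Φ (S i * a) = Φ (S i) * Φ a) :
    (NonUnitalStarAlgebra.adjoin R
        (Φ '' (NonUnitalStarAlgebra.adjoin R (range S)).topologicalClosure)).topologicalClosure
      = (NonUnitalStarAlgebra.adjoin R (range fun i ↦ Φ (S i))).topologicalClosure := by
  apply le_antisymm
  · refine NonUnitalStarSubalgebra.topologicalClosure_minimal _
      (NonUnitalStarAlgebra.adjoin_le ?_) (NonUnitalStarSubalgebra.isClosed_topologicalClosure _)
    rintro _ ⟨a, ha, rfl⟩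
    refine map_mem_closure Φ.continuous ha fun x hx ↦ ?_
    exact hS.map_mem_of_mem_adjoin (Φ := Φ.toLinearMap) map_star map_mul
      (fun i ↦ NonUnitalStarAlgebra.subset_adjoin R _ (mem_range_self i)) hx
  · refine NonUnitalStarSubalgebra.topologicalClosure_mono (NonUnitalStarAlgebra.adjoin_mono ?_)
    rintro _ ⟨i, rfl⟩
    exact mem_image_of_mem Φ (NonUnitalStarSubalgebra.le_topologicalClosure _
      (NonUnitalStarAlgebra.subset_adjoin R _ (mem_range_self i)))

end Cuntz

section Compression

open BoundedContinuousFunction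

variable {𝕜 A κ : Type*} [NormedField 𝕜] [NormedRing A] [StarRing A] [CStarRing A]
  [NormedAlgebra 𝕜 A] [TopologicalSpace κ] [DiscreteTopology κ] {P : κ → A}

theorem norm_mul_mul_le_of_isStarProjection {A : Type*} [NonUnitalNormedRing A] [StarRing A]
    [CStarRing A] {p : A} (hp : IsStarProjection p) (a : A) : ‖p * a * p‖ ≤ ‖a‖ :=
  calc ‖p * a * p‖ ≤ ‖p‖ * ‖a‖ * ‖p‖ := norm_mul₃_le
    _ ≤ 1 * ‖a‖ * 1 := by gcongr <;> exact hp.norm_le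
    _ = ‖a‖ := by ring

variable (𝕜) in
/-- Compression to a family of projections: the map `a ↦ (P n * a * P n)ₙ` into the bounded
families, which are encoded as bounded continuous functions on the discrete space of indices. -/
noncomputable def compression (hP : ∀ n, IsStarProjection (P n)) : A →L[𝕜] κ →ᵇ A :=
  LinearMap.mkContinuous
    { toFun a := ofNormedAddCommGroupDiscrete (fun n ↦ P n * a * P n) ‖a‖
        fun n ↦ norm_mul_mul_le_of_isStarProjection (hP n) a
      map_add' a b := by ext n; simp [mul_add, add_mul]
      map_smul' c a := by ext n; simp }
    1 fun a ↦ by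
      rw [one_mul]
      exact norm_ofNormedAddCommGroup_le _ (norm_nonneg a) fun n ↦
        norm_mul_mul_le_of_isStarProjection (hP n) a

@[simp]
theorem compression_apply (hP : ∀ n, IsStarProjection (P n)) (a : A) (n : κ) :
    compression 𝕜 hP a n = P n * a * P n :=
  rfl

theorem compression_star (hP : ∀ n, IsStarProjection (P n)) (a : A) :
    compression 𝕜 hP (star a) = star (compression 𝕜 hP a) := by
  ext n
  simp [(hP n).isSelfAdjoint.star_eq, mul_assoc]

theorem compression_mul (hP : ∀ n, IsStarProjection (P n)) {s : A}
    (hs : ∀ n, P n * s * P n = P n * s) (a : A) :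
    compression 𝕜 hP (s * a) = compression 𝕜 hP s * compression 𝕜 hP a := by
  ext n
  calc P n * (s * a) * P n = P n * s * P n * a * P n := by rw [hs, mul_assoc (P n) s]
    _ = P n * s * (P n * P n) * a * P n := by rw [(hP n).isIdempotentElem.eq]
    _ = P n * s * P n * (P n * a * P n) := by simp only [mul_assoc]

theorem stmt3_general {ι : Type*} [Fintype ι] [StarRing 𝕜] [StarModule 𝕜 A] {S : ι → A}
    (hS : IsCuntzFamily S) (hP : ∀ n, IsStarProjection (P n))
    (hPS : ∀ n i, P n * S i * P n = P n * S i) :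
    (NonUnitalStarAlgebra.adjoin 𝕜
        {f : κ →ᵇ A | ∃ a ∈ (NonUnitalStarAlgebra.adjoin 𝕜 (range S)).topologicalClosure,
          ∀ n, f n = P n * a * P n}).topologicalClosure
    = (NonUnitalStarAlgebra.adjoin 𝕜
        {f : κ →ᵇ A | ∃ i, ∀ n, f n = P n * S i * P n}).topologicalClosure := by
  have eq_compression_iff (f : κ →ᵇ A) (a : A) :
      (∀ n, f n = P n * a * P n) ↔ compression 𝕜 hP a = f := by
    simp [BoundedContinuousFunction.ext_iff, eq_comm]
  simp only [eq_compression_iff]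
  exact hS.topologicalClosure_adjoin_image_eq (compression 𝕜 hP) (compression_star hP)
    fun i ↦ compression_mul hP fun n ↦ hPS n i

end Compression

section HilbertBasis

variable {𝕜 H ι κ : Type*} [RCLike 𝕜] [NormedAddCommGroup H] [InnerProductSpace 𝕜 H]
  (e : HilbertBasis κ 𝕜 H)

theorem eq_of_forall_apply_hilbertBasis_eq {E : Type*} [NormedAddCommGroup E] [NormedSpace 𝕜 E]
    {T U : H →L[𝕜] E} (h : ∀ k, T (e k) = U (e k)) : T = U :=
  ContinuousLinearMap.ext_on (Submodule.dense_iff_topologicalClosure_eq_top.2 e.dense_span)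
    (forall_mem_range.2 h)

theorem eq_of_forall_inner_hilbertBasis_eq {x y : H} (h : ∀ k, inner 𝕜 (e k) x = inner 𝕜 (e k) y) :
    x = y := by
  refine e.repr.injective (lp.ext (funext fun k ↦ ?_))
  rw [e.repr_apply_apply, e.repr_apply_apply, h]

theorem inner_hilbertBasis [DecidableEq κ] (k l : κ) :
    inner 𝕜 (e k) (e l) = if k = l then 1 else 0 :=
  orthonormal_iff_ite.1 e.orthonormal k l

theorem mul_mul_eq_mul_of_forall_apply_hilbertBasis {p : κ → Prop} [DecidablePred p]
    {P T : H →L[𝕜] H} {σ : κ → κ} (hP : ∀ k, P (e k) = if p k then e k else 0)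
    (hT : ∀ k, T (e k) = e (σ k)) (hσ : ∀ k, p (σ k) → p k) : P * T * P = P * T := by
  refine eq_of_forall_apply_hilbertBasis_eq e fun k ↦ ?_
  by_cases hk : p k
  · simp [hP, hk]
  · simp [hP, hT, hk, mt (hσ k) hk]

variable [CompleteSpace H]

theorem isStarProjection_of_forall_apply_hilbertBasis {p : κ → Prop} [DecidablePred p]
    {P : H →L[𝕜] H} (hP : ∀ k, P (e k) = if p k then e k else 0) : IsStarProjection P where
  isIdempotentElem := by
    refine eq_of_forall_apply_hilbertBasis_eq e fun k ↦ ?_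
    by_cases hk : p k <;> simp [hP, hk]
  isSelfAdjoint := by
    classical
    refine eq_of_forall_apply_hilbertBasis_eq e fun k ↦
      eq_of_forall_inner_hilbertBasis_eq e fun l ↦ ?_
    rw [ContinuousLinearMap.star_eq_adjoint, ContinuousLinearMap.adjoint_inner_right, hP, hP]
    obtain rfl | hlk := eq_or_ne l k
    · split_ifs <;> simp
    · split_ifs <;> simp [inner_hilbertBasis, hlk]

theorem star_mul_eq_ite_of_forall_apply_hilbertBasis [DecidableEq ι] {S : ι → H →L[𝕜] H}
    {σ : κ × ι → κ} (hσ : Function.Injective σ) (hS : ∀ i k, S i (e k) = e (σ (k, i))) (i j : ι) :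
    star (S i) * S j = if i = j then 1 else 0 := by
  classical
  refine eq_of_forall_apply_hilbertBasis_eq e fun k ↦
    eq_of_forall_inner_hilbertBasis_eq e fun l ↦ ?_
  rw [mul_apply_eq_comp, ContinuousLinearMap.star_eq_adjoint,
    ContinuousLinearMap.adjoint_inner_right, hS, hS, inner_hilbertBasis]
  by_cases hij : i = j <;> simp [hij, hσ.eq_iff, inner_hilbertBasis]

theorem isCuntzFamily_of_forall_apply_hilbertBasis [Fintype ι] {S : ι → H →L[𝕜] H}
    {σ : κ × ι ≃ κ} (hS : ∀ i k, S i (e k) = e (σ (k, i))) : IsCuntzFamily S where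
  star_mul_self i := by
    classical
    simp [star_mul_eq_ite_of_forall_apply_hilbertBasis e σ.injective hS]
  star_mul_of_ne hij := by
    classical
    simp [star_mul_eq_ite_of_forall_apply_hilbertBasis e σ.injective hS, hij]
  sum_mul_star := by
    classical
    refine eq_of_forall_apply_hilbertBasis_eq e fun m ↦ ?_
    obtain ⟨⟨k, j⟩, rfl⟩ := σ.surjective m
    have sum_mul_self : (∑ i, S i * star (S i)) * S j = S j := by
      simp [Finset.sum_mul, mul_assoc,
        star_mul_eq_ite_of_forall_apply_hilbertBasis e σ.injective hS]
    simpa [hS] using DFunLike.congr_fun sum_mul_self (e k)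

end HilbertBasis

/-- Model of the situation: `H` is a Hilbert space with orthonormal basis
`(e k)_{k ∈ ℕ}` (so `H ≅ ℓ²(ℤ⁺)`); `P n` is the orthogonal projection onto the span of
`e 0, …, e (n-1)`; `S i` (for `i ∈ Ω = Fin N`) is the isometry with `S i (e r) = e (r*N+i)`.
The algebra `F` of bounded matrix sequences is modelled by bounded sequences of operators on
`H` (the sequence `(PₙAPₙ)` has `n`-th entry `Pₙ A Pₙ`, an operator supported on the range of
`Pₙ`, i.e. an `n×n` matrix). The claim: the smallest closed *-subalgebra of `F` containing
all sequences `(Pₙ A Pₙ)` with `A` in the concrete Cuntz algebra `O_N` equals the smallest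
closed *-subalgebra of `F` containing the sequences `(Pₙ S_j Pₙ)`, `j ∈ Ω`. -/
theorem stmt3 {H : Type*} [NormedAddCommGroup H] [InnerProductSpace ℂ H] [CompleteSpace H]
    (e : HilbertBasis ℕ ℂ H) (N : ℕ) (hN : 2 ≤ N)
    (S : Fin N → H →L[ℂ] H)
    (hS : ∀ (i : Fin N) (r : ℕ), S i (e r) = e (r * N + (i : ℕ)))
    (P : ℕ → H →L[ℂ] H)
    (hP : ∀ n k : ℕ, P n (e k) = if k < n then e k else 0) :
    (NonUnitalStarAlgebra.adjoin ℂ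
        {f : BoundedContinuousFunction ℕ (H →L[ℂ] H) |
          ∃ A ∈ (NonUnitalStarAlgebra.adjoin ℂ (Set.range S)).topologicalClosure,
            ∀ n : ℕ, f n = P n * A * P n}).topologicalClosure
    = (NonUnitalStarAlgebra.adjoin ℂ
        {f : BoundedContinuousFunction ℕ (H →L[ℂ] H) |
          ∃ j : Fin N, ∀ n : ℕ, f n = P n * S j * P n}).topologicalClosure := by
  have : NeZero N := ⟨by lia⟩
  have le_index (i : Fin N) (k : ℕ) : k ≤ k * N + i := by nlinarith
  exact stmt3_general
    (isCuntzFamily_of_forall_apply_hilbertBasis e (σ := (Nat.divModEquiv N).symm) hS)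
    (fun n ↦ isStarProjection_of_forall_apply_hilbertBasis e (hP n)) fun n i ↦
      mul_mul_eq_mul_of_forall_apply_hilbertBasis e (hP n) (hS i) fun k ↦ (le_index i k).trans_lt
end

section
/- For every n ≥ 1 and all i, j ∈ Ω with i ≠ j the following hold: (i) (P_nS_iP_n)(P_nS_i^*P_n)(P_nS_iP_n) = P_nS_iP_n, i.e. P_nS_iP_n is a partial isometry, and its range projection is P_nS_iS_i^*P_n; (ii) (P_nS_iS_i^*P_n)(P_nS_jS_j^*P_n) = 0; (iii) P_nS_i^*P_nS_jP_n = 0; (iv) Σ_{i∈Ω} P_nS_iP_nS_i^*P_n = P_n. -/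
/-!
The projection `p = Pₙ` is diagonal in the basis `e`, and so is every `Sᵢ Sᵢ*`, hence these commute.
Moreover `Sᵢ*` maps the range of `p` into itself, because `rN + i < n` forces `r < n`; that is,
`p Sᵢ* p = Sᵢ* p`. The four assertions follow formally from these two facts, the Cuntz relations
`Sᵢ* Sⱼ = δᵢⱼ` and `∑ᵢ Sᵢ Sᵢ* = 1`.
-/

section Compression

variable {R : Type*}

theorem compression_mul_star_compression [Semigroup R] [StarMul R] {p s : R}
    (hp : IsStarProjection p) (hps : p * star s * p = star s * p) :
    (p * s * p) * star (p * s * p) = p * (s * star s) * p := by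
  have hstar : star (p * s * p) = p * star s * p := by
    simp only [star_mul, hp.isSelfAdjoint.star_eq, mul_assoc]
  calc (p * s * p) * star (p * s * p)
      = p * s * (p * p) * (star s * p) := by rw [hstar]; simp only [mul_assoc]
    _ = p * s * (p * star s * p) := by simp only [hp.isIdempotentElem.eq, mul_assoc]
    _ = p * (s * star s) * p := by simp only [hps, mul_assoc]

theorem compression_mul_star_mul_compression [Semigroup R] [StarMul R] {p s : R}
    (hp : IsStarProjection p) (hps : p * star s * p = star s * p)
    (hcomm : Commute p (s * star s)) (hs : s * star s * s = s) :
    (p * s * p) * star (p * s * p) * (p * s * p) = p * s * p := by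
  calc (p * s * p) * star (p * s * p) * (p * s * p)
      = p * (s * star s) * (p * p) * s * p := by
        rw [compression_mul_star_compression hp hps]; simp only [mul_assoc]
    _ = p * (s * star s * p) * s * p := by simp only [hp.isIdempotentElem.eq, mul_assoc]
    _ = p * p * (s * star s * s) * p := by simp only [← hcomm.eq, mul_assoc]
    _ = p * s * p := by rw [hs, hp.isIdempotentElem.eq]

theorem compression_mul_compression_eq_zero [SemigroupWithZero R] {p a b : R}
    (hp : IsIdempotentElem p) (hcomm : Commute p a) (hab : a * b = 0) :
    (p * a * p) * (p * b * p) = 0 := by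
  calc (p * a * p) * (p * b * p)
      = p * (a * (p * p)) * b * p := by simp only [mul_assoc]
    _ = p * (p * (a * b)) * p := by rw [hp.eq, ← hcomm.eq]; simp only [mul_assoc]
    _ = 0 := by simp only [hab, mul_zero, zero_mul]

theorem mul_mul_eq_zero_of_commute [SemigroupWithZero R] {p x t u : R}
    (hxt : x * t = 0) (htu : t * u * t = t) (hcomm : Commute p (t * u)) : x * p * t = 0 := by
  calc x * p * t = x * (p * (t * u)) * t := by
        conv_lhs => rw [← htu]
        simp only [mul_assoc]
    _ = x * t * u * p * t := by rw [hcomm.eq]; simp only [mul_assoc]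
    _ = 0 := by simp only [hxt, zero_mul]

theorem sum_compression_mul_star {Ω : Type*} [Fintype Ω] [Semiring R] [Star R] {p : R} {s : Ω → R}
    (hp : IsIdempotentElem p) (hps : ∀ i, p * star (s i) * p = star (s i) * p)
    (hsum : ∑ i, s i * star (s i) = 1) :
    ∑ i, p * s i * p * star (s i) * p = p := by
  calc ∑ i, p * s i * p * star (s i) * p
      = ∑ i, p * (s i * star (s i)) * p :=
        Finset.sum_congr rfl fun i _ ↦ by
          calc p * s i * p * star (s i) * p
              = p * s i * (p * star (s i) * p) := by simp only [mul_assoc]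
            _ = p * (s i * star (s i)) * p := by simp only [hps, mul_assoc]
    _ = p * (∑ i, s i * star (s i)) * p := by rw [Finset.mul_sum, Finset.sum_mul]
    _ = p := by rw [hsum, mul_one, hp.eq]

end Compression

section ProdMk

variable {α β γ : Type*} {φ : α × β → γ}

theorem injective_apply_prodMk_left (hφ : φ.Injective) (b : β) :
    (fun a ↦ φ (a, b)).Injective :=
  hφ.comp (Prod.mk_left_injective b)

theorem apply_prodMk_notMem_range (hφ : φ.Injective) {b c : β} (hbc : b ≠ c) (a : α) :
    φ (a, c) ∉ Set.range fun x ↦ φ (x, b) := by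
  rintro ⟨x, hx⟩
  exact hbc (congrArg Prod.snd (hφ hx))

end ProdMk

section HilbertBasis

variable {𝕜 H ι : Type*} [RCLike 𝕜] [NormedAddCommGroup H] [InnerProductSpace 𝕜 H]

theorem eq_of_inner_hilbertBasis_eq (e : HilbertBasis ι 𝕜 H) {x y : H}
    (h : ∀ k, inner 𝕜 (e k) x = inner 𝕜 (e k) y) : x = y := by
  apply e.repr.injective
  ext k
  simpa only [HilbertBasis.repr_apply_apply] using h k

theorem eq_of_apply_hilbertBasis_eq {F : Type*} [AddCommMonoid F] [Module 𝕜 F] [TopologicalSpace F]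
    [T2Space F] (e : HilbertBasis ι 𝕜 H) {A B : H →L[𝕜] F} (h : ∀ k, A (e k) = B (e k)) : A = B :=
  ContinuousLinearMap.ext_on (Submodule.dense_iff_topologicalClosure_eq_top.mpr e.dense_span)
    (Set.forall_mem_range.mpr h)

variable [CompleteSpace H] {e : HilbertBasis ι 𝕜 H} {p : H →L[𝕜] H} {A : ι → Prop}
  [DecidablePred A]

theorem isStarProjection_of_apply_basis (hp : ∀ k, p (e k) = if A k then e k else 0) :
    IsStarProjection p where
  isIdempotentElem := eq_of_apply_hilbertBasis_eq e fun k ↦ by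
    by_cases hk : A k <;> simp [hp, hk]
  isSelfAdjoint := eq_of_apply_hilbertBasis_eq e fun k ↦ eq_of_inner_hilbertBasis_eq e fun l ↦ by
    rw [ContinuousLinearMap.star_eq_adjoint, ContinuousLinearMap.adjoint_inner_right, hp, hp]
    obtain rfl | hlk := eq_or_ne l k
    · by_cases hl : A l <;> simp [hl]
    · have hlk' : inner 𝕜 (e l) (e k) = 0 := e.orthonormal.inner_eq_zero hlk
      by_cases hl : A l <;> by_cases hk : A k <;> simp [hl, hk, hlk']

variable {T : H →L[𝕜] H} {f : ι → ι}

theorem star_apply_basis_map (hT : ∀ r, T (e r) = e (f r)) (hf : f.Injective) (r : ι) :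
    star T (e (f r)) = e r := by
  classical
  refine eq_of_inner_hilbertBasis_eq e fun l ↦ ?_
  simp only [ContinuousLinearMap.star_eq_adjoint, ContinuousLinearMap.adjoint_inner_right, hT,
    orthonormal_iff_ite.mp e.orthonormal, hf.eq_iff]

theorem star_apply_basis_of_notMem_range (hT : ∀ r, T (e r) = e (f r)) {k : ι}
    (hk : k ∉ Set.range f) : star T (e k) = 0 := by
  refine eq_of_inner_hilbertBasis_eq e fun l ↦ ?_
  rw [ContinuousLinearMap.star_eq_adjoint, ContinuousLinearMap.adjoint_inner_right, hT,
    inner_zero_right]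
  exact e.orthonormal.inner_eq_zero fun hl ↦ hk ⟨l, hl⟩

theorem star_mul_self_of_basis_map (hT : ∀ r, T (e r) = e (f r)) (hf : f.Injective) :
    star T * T = 1 :=
  eq_of_apply_hilbertBasis_eq e fun r ↦ by
    simp only [mul_apply_eq_comp, hT, star_apply_basis_map hT hf, one_apply_eq_self]

theorem star_mul_eq_zero_of_basis_map {U : H →L[𝕜] H} {g : ι → ι}
    (hT : ∀ r, T (e r) = e (f r)) (hU : ∀ r, U (e r) = e (g r))
    (hfg : ∀ r, g r ∉ Set.range f) : star T * U = 0 :=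
  eq_of_apply_hilbertBasis_eq e fun r ↦ by
    simp only [mul_apply_eq_comp, hU, star_apply_basis_of_notMem_range hT (hfg r), zero_apply]

theorem commute_mul_star_of_basis_map (hp : ∀ k, p (e k) = if A k then e k else 0)
    (hT : ∀ r, T (e r) = e (f r)) (hf : f.Injective) : Commute p (T * star T) :=
  eq_of_apply_hilbertBasis_eq e fun k ↦ by
    by_cases hk : k ∈ Set.range f
    · obtain ⟨r, rfl⟩ := hk
      by_cases hr : A (f r) <;> simp [hp, hr, hT, star_apply_basis_map hT hf]
    · by_cases hAk : A k <;> simp [hp, hAk, star_apply_basis_of_notMem_range hT hk]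

theorem mul_star_mul_of_basis_map (hp : ∀ k, p (e k) = if A k then e k else 0)
    (hT : ∀ r, T (e r) = e (f r)) (hf : f.Injective) (hA : ∀ r, A (f r) → A r) :
    p * star T * p = star T * p :=
  eq_of_apply_hilbertBasis_eq e fun k ↦ by
    by_cases hAk : A k
    · by_cases hk : k ∈ Set.range f
      · obtain ⟨r, rfl⟩ := hk
        simp [hp, hAk, hA r hAk, star_apply_basis_map hT hf]
      · simp [hp, hAk, star_apply_basis_of_notMem_range hT hk]
    · simp [hp, hAk]

theorem sum_mul_star_of_basis_equiv {Ω : Type*} [Fintype Ω] {φ : ι × Ω ≃ ι} {S : Ω → H →L[𝕜] H}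
    (hS : ∀ i r, S i (e r) = e (φ (r, i))) : ∑ i, S i * star (S i) = 1 :=
  eq_of_apply_hilbertBasis_eq e fun k ↦ by
    obtain ⟨⟨r, j⟩, rfl⟩ := φ.surjective k
    have hterm : ∀ i ≠ j, S i (star (S i) (e (φ (r, j)))) = 0 := fun i hij ↦ by
      rw [star_apply_basis_of_notMem_range (hS i) (apply_prodMk_notMem_range φ.injective hij r),
        map_zero]
    simp only [sum_apply, mul_apply_eq_comp, one_apply_eq_self]
    rw [Fintype.sum_eq_single j hterm,
      star_apply_basis_map (hS j) (injective_apply_prodMk_left φ.injective j), hS]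

end HilbertBasis

theorem stmt4_general {𝕜 H ι Ω : Type*} [RCLike 𝕜] [NormedAddCommGroup H] [InnerProductSpace 𝕜 H]
    [CompleteSpace H] [Fintype Ω] (e : HilbertBasis ι 𝕜 H) (φ : ι × Ω ≃ ι)
    (S : Ω → H →L[𝕜] H) (hS : ∀ i r, S i (e r) = e (φ (r, i)))
    (A : ι → Prop) [DecidablePred A] (hA : ∀ i r, A (φ (r, i)) → A r)
    (p : H →L[𝕜] H) (hp : ∀ k, p (e k) = if A k then e k else 0) {i j : Ω} (hij : i ≠ j) :
    ((p * S i * p) * star (p * S i * p) * (p * S i * p) = p * S i * p) ∧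
    ((p * S i * p) * star (p * S i * p) = p * (S i * star (S i)) * p) ∧
    ((p * (S i * star (S i)) * p) * (p * (S j * star (S j)) * p) = 0) ∧
    (p * star (S i) * p * S j * p = 0) ∧
    (∑ k, p * S k * p * star (S k) * p = p) := by
  have hinj k : (fun r ↦ φ (r, k)).Injective := injective_apply_prodMk_left φ.injective k
  have hproj : IsStarProjection p := isStarProjection_of_apply_basis hp
  have hinv k : p * star (S k) * p = star (S k) * p :=
    mul_star_mul_of_basis_map hp (hS k) (hinj k) (hA k)
  have hcomm k : Commute p (S k * star (S k)) :=
    commute_mul_star_of_basis_map hp (hS k) (hinj k)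
  have hpartial k : S k * star (S k) * S k = S k := by
    rw [mul_assoc, star_mul_self_of_basis_map (hS k) (hinj k), mul_one]
  have horth : star (S i) * S j = 0 :=
    star_mul_eq_zero_of_basis_map (hS i) (hS j) (apply_prodMk_notMem_range φ.injective hij)
  have hranges : S i * star (S i) * (S j * star (S j)) = 0 := by
    rw [mul_assoc, ← mul_assoc (star (S i)), horth, zero_mul, mul_zero]
  have hcross : star (S i) * p * S j = 0 :=
    mul_mul_eq_zero_of_commute horth (hpartial j) (hcomm j)
  exact ⟨compression_mul_star_mul_compression hproj (hinv i) (hcomm i) (hpartial i),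
    compression_mul_star_compression hproj (hinv i),
    compression_mul_compression_eq_zero hproj.isIdempotentElem (hcomm i) hranges,
    by rw [mul_assoc p, mul_assoc p, hcross, mul_zero, zero_mul],
    sum_compression_mul_star hproj.isIdempotentElem hinv (sum_mul_star_of_basis_equiv hS)⟩

/-- With `H`, basis `e`, projections `P n` and Cuntz isometries `S i` as in
the context: for `n ≥ 1` and `i ≠ j` in `Ω`, (i) `Pₙ Sᵢ Pₙ` is a partial isometry with range
projection `Pₙ Sᵢ Sᵢ* Pₙ`; (ii) the range projections for `i ≠ j` are orthogonal;
(iii) `Pₙ Sᵢ* Pₙ Sⱼ Pₙ = 0`; (iv) `Σᵢ Pₙ Sᵢ Pₙ Sᵢ* Pₙ = Pₙ`. -/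
theorem stmt4 {H : Type*} [NormedAddCommGroup H] [InnerProductSpace ℂ H] [CompleteSpace H]
    (e : HilbertBasis ℕ ℂ H) (N : ℕ) (hN : 2 ≤ N)
    (S : Fin N → H →L[ℂ] H)
    (hS : ∀ (i : Fin N) (r : ℕ), S i (e r) = e (r * N + (i : ℕ)))
    (P : ℕ → H →L[ℂ] H)
    (hP : ∀ n k : ℕ, P n (e k) = if k < n then e k else 0)
    (n : ℕ) (hn : 1 ≤ n) (i j : Fin N) (hij : i ≠ j) :
    ((P n * S i * P n) * star (P n * S i * P n) * (P n * S i * P n) = P n * S i * P n) ∧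
    ((P n * S i * P n) * star (P n * S i * P n) = P n * (S i * star (S i)) * P n) ∧
    ((P n * (S i * star (S i)) * P n) * (P n * (S j * star (S j)) * P n) = 0) ∧
    (P n * star (S i) * P n * S j * P n = 0) ∧
    (∑ k : Fin N, P n * S k * P n * star (S k) * P n = P n) := by
  have : NeZero N := ⟨by omega⟩
  exact stmt4_general e (Nat.divModEquiv N).symm S hS (· < n)
    (fun k r ↦ (Nat.le_add_right_of_le (Nat.le_mul_of_pos_right r N.pos_of_neZero)).trans_lt)
    (P n) (hP n) hij
end

section
/- For every k ≥ 1, every multi-index i = (i_1,…,i_k) ∈ Ω^k and every n ≥ 1, the operator V := P_nS_{i_1}P_nS_{i_2}P_n⋯P_nS_{i_k}P_n is a partial isometry, i.e. VV^*V = V. -/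
/-!
The operators `S i` send distinct basis vectors to distinct basis vectors, and `P n` fixes some
basis vectors and kills the others. Each of them therefore moves the basis along a partial injection
`f` of the index set. Such operators are closed under composition, and over an orthonormal basis the
adjoint moves the basis along the inverse `f⁻¹`. The identity `V V* V = V` thus reduces to
`f f⁻¹ f = f`.
-/

open ContinuousLinearMap
open scoped InnerProduct InnerProductSpace

section PartialInjections

variable {ι κ : Type*}

theorem pequiv_trans_symm_trans_self (f : ι ≃. κ) : (f.trans f.symm).trans f = f := by
  ext a b
  simp only [PEquiv.self_trans_symm, PEquiv.trans_eq_some, PEquiv.ofSet_eq_some_iff,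
    Set.mem_ofPred_eq, Option.isSome_iff_exists]
  constructor
  · rintro ⟨_, ⟨rfl, -⟩, hab⟩
    exact hab
  · intro hab
    exact ⟨a, ⟨rfl, b, hab⟩, hab⟩

/-- An injective function `σ`, such as the index map `r ↦ r * N + j` of `S j`, regarded as a partial
injection; its inverse is `Function.partialInv σ`, undefined off the range of `σ`. -/
noncomputable def pequivOfInjective (σ : ι → κ) (hσ : Function.Injective σ) : ι ≃. κ where
  toFun a := some (σ a)
  invFun := Function.partialInv σ
  inv a b := (hσ.isPartialInv a b).trans Option.some_inj.symm

theorem mul_add_fin_injective {N : ℕ} (j : Fin N) :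
    Function.Injective fun r : ℕ => r * N + (j : ℕ) := fun _ _ h =>
  Nat.eq_of_mul_eq_mul_right j.pos (Nat.add_right_cancel h)

end PartialInjections

section Operators

variable {R ι κ μ E F G : Type*} [Semiring R]
  [AddCommMonoid E] [Module R E] [TopologicalSpace E]
  [AddCommMonoid F] [Module R F] [TopologicalSpace F]
  [AddCommMonoid G] [Module R G] [TopologicalSpace G]

/-- `V` moves the family `v` to the family `w` along the partial injection `f`: it sends `v r` to
`w (f r)`, and to `0` where `f` is undefined (encoded as `f r = none`). -/
def MapsAlong (v : ι → E) (w : κ → F) (f : ι ≃. κ) (V : E →L[R] F) : Prop :=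
  ∀ r, V (v r) = (f r).elim 0 w

namespace MapsAlong

theorem id (v : ι → E) : MapsAlong v v (PEquiv.refl ι) (ContinuousLinearMap.id R E) :=
  fun _ => rfl

theorem comp {u : ι → E} {v : κ → F} {w : μ → G} {f : ι ≃. κ} {g : κ ≃. μ}
    {V : F →L[R] G} {W : E →L[R] F} (hV : MapsAlong v w g V) (hW : MapsAlong u v f W) :
    MapsAlong u w (f.trans g) (V ∘L W) := by
  intro r
  change V (W (u r)) = ((f r).bind g).elim 0 w
  rw [hW r]
  cases f r with
  | none => exact map_zero V
  | some s => exact hV s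

theorem eq_of_dense_span [T2Space F] {v : ι → E} {w : κ → F} {f : ι ≃. κ} {V W : E →L[R] F}
    (hv : Dense (Submodule.span R (Set.range v) : Set E))
    (hV : MapsAlong v w f V) (hW : MapsAlong v w f W) : V = W :=
  ContinuousLinearMap.ext_on hv <| Set.forall_mem_range.2 fun r => (hV r).trans (hW r).symm

theorem of_injective {v : ι → E} {w : κ → F} {σ : ι → κ} {V : E →L[R] F}
    (hσ : Function.Injective σ) (hV : ∀ r, V (v r) = w (σ r)) :
    MapsAlong v w (pequivOfInjective σ hσ) V :=
  hV

theorem of_eq_ite {v : ι → E} {p : ι → Prop} [DecidablePred p] {V : E →L[R] E}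
    (hV : ∀ r, V (v r) = if p r then v r else 0) :
    MapsAlong v v (PEquiv.ofSet {r | p r}) V := by
  intro r
  change V (v r) = (if p r then some r else none).elim 0 v
  rw [hV r]
  split_ifs <;> rfl

end MapsAlong

variable (R) in
/-- The monoid of operators that move the family `v` into itself along some partial injection of
its index set; it contains every word in such operators. -/
def partialInjectionSubmonoid (v : ι → E) : Submonoid (E →L[R] E) where
  carrier := {V | ∃ f : ι ≃. ι, MapsAlong v v f V}
  one_mem' := ⟨_, MapsAlong.id v⟩
  mul_mem' := fun ⟨_, hV⟩ ⟨_, hW⟩ => ⟨_, hV.comp hW⟩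

end Operators

section Adjoint

variable {𝕜 ι κ E F : Type*} [RCLike 𝕜]
  [NormedAddCommGroup E] [InnerProductSpace 𝕜 E]
  [NormedAddCommGroup F] [InnerProductSpace 𝕜 F]

theorem inner_option_elim [DecidableEq ι] {v : ι → E} (hv : Orthonormal 𝕜 v) (r : ι)
    (o : Option ι) : ⟪v r, o.elim 0 v⟫_𝕜 = if o = some r then 1 else 0 := by
  cases o with
  | none => simp
  | some s => simp [orthonormal_iff_ite.1 hv, eq_comm]

theorem option_elim_inner [DecidableEq ι] {v : ι → E} (hv : Orthonormal 𝕜 v) (r : ι)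
    (o : Option ι) : ⟪o.elim 0 v, v r⟫_𝕜 = if o = some r then 1 else 0 := by
  rw [← inner_conj_symm, inner_option_elim hv, apply_ite (starRingEnd 𝕜), map_one, map_zero]

theorem dense_span_range_hilbertBasis (b : HilbertBasis ι 𝕜 E) :
    Dense (Submodule.span 𝕜 (Set.range b) : Set E) :=
  Submodule.dense_iff_topologicalClosure_eq_top.2 b.dense_span

theorem hilbertBasis_ext_inner (b : HilbertBasis ι 𝕜 E) {x y : E}
    (h : ∀ r, ⟪b r, x⟫_𝕜 = ⟪b r, y⟫_𝕜) : x = y := by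
  apply b.repr.injective
  ext r
  simpa only [b.repr_apply_apply] using h r

variable [CompleteSpace E] [CompleteSpace F]

theorem MapsAlong.adjoint {b : HilbertBasis ι 𝕜 E} {w : κ → F} (hw : Orthonormal 𝕜 w)
    {f : ι ≃. κ} {V : E →L[𝕜] F} (hV : MapsAlong b w f V) : MapsAlong w b f.symm (V†) := by
  classical
  intro s
  refine hilbertBasis_ext_inner b fun r => ?_
  calc ⟪b r, (V†) (w s)⟫_𝕜
      = ⟪(f r).elim 0 w, w s⟫_𝕜 := by rw [adjoint_inner_right, hV r]
    _ = if f r = some s then 1 else 0 := option_elim_inner hw s (f r)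
    _ = if f.symm s = some r then 1 else 0 := if_congr f.eq_some_iff.symm rfl rfl
    _ = ⟪b r, (f.symm s).elim 0 b⟫_𝕜 := (inner_option_elim b.orthonormal r (f.symm s)).symm

theorem MapsAlong.comp_adjoint_comp_self {b : HilbertBasis ι 𝕜 E} {w : κ → F}
    (hw : Orthonormal 𝕜 w) {f : ι ≃. κ} {V : E →L[𝕜] F} (hV : MapsAlong b w f V) :
    V ∘L V† ∘L V = V := by
  have hVVV : MapsAlong b w f (V ∘L V† ∘L V) := by
    simpa only [pequiv_trans_symm_trans_self] using hV.comp ((hV.adjoint hw).comp hV)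
  exact hVVV.eq_of_dense_span (dense_span_range_hilbertBasis b) hV

theorem mul_star_mul_self_of_mem_partialInjectionSubmonoid {b : HilbertBasis ι 𝕜 E}
    {V : E →L[𝕜] E} (hV : V ∈ partialInjectionSubmonoid 𝕜 b) : V * star V * V = V := by
  obtain ⟨f, hf⟩ := hV
  exact hf.comp_adjoint_comp_self b.orthonormal

theorem stmt5_general {α : Type*} (e : HilbertBasis ι 𝕜 E) (S : α → E →L[𝕜] E)
    (σ : α → ι → ι) (hσ : ∀ a, Function.Injective (σ a)) (hS : ∀ a r, S a (e r) = e (σ a r))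
    (P : E →L[𝕜] E) (p : ι → Prop) [DecidablePred p]
    (hP : ∀ r, P (e r) = if p r then e r else 0) {k : ℕ} (i : Fin k → α) :
    (P * (List.ofFn fun t => S (i t) * P).prod) *
      star (P * (List.ofFn fun t => S (i t) * P).prod) *
      (P * (List.ofFn fun t => S (i t) * P).prod)
    = P * (List.ofFn fun t => S (i t) * P).prod := by
  have P_mem : P ∈ partialInjectionSubmonoid 𝕜 e := ⟨_, .of_eq_ite hP⟩
  have S_mem (a : α) : S a ∈ partialInjectionSubmonoid 𝕜 e := ⟨_, .of_injective (hσ a) (hS a)⟩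
  have letters_mem : ∀ V ∈ List.ofFn fun t => S (i t) * P, V ∈ partialInjectionSubmonoid 𝕜 e :=
    (List.forall_mem_ofFn_iff).2 fun t => mul_mem (S_mem (i t)) P_mem
  exact mul_star_mul_self_of_mem_partialInjectionSubmonoid
    (mul_mem P_mem (list_prod_mem letters_mem))

end Adjoint

/-- For every `k ≥ 1`, every multi-index `i ∈ Ω^k` and every `n ≥ 1`, the
operator `V := Pₙ S_{i₁} Pₙ S_{i₂} Pₙ ⋯ Pₙ S_{i_k} Pₙ` is a partial isometry: `V V* V = V`. -/
theorem stmt5 {H : Type*} [NormedAddCommGroup H] [InnerProductSpace ℂ H] [CompleteSpace H]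
    (e : HilbertBasis ℕ ℂ H) (N : ℕ) (hN : 2 ≤ N)
    (S : Fin N → H →L[ℂ] H)
    (hS : ∀ (i : Fin N) (r : ℕ), S i (e r) = e (r * N + (i : ℕ)))
    (P : ℕ → H →L[ℂ] H)
    (hP : ∀ n k : ℕ, P n (e k) = if k < n then e k else 0)
    (k : ℕ) (hk : 1 ≤ k) (i : Fin k → Fin N) (n : ℕ) (hn : 1 ≤ n) :
    (P n * (List.ofFn fun t => S (i t) * P n).prod) *
      star (P n * (List.ofFn fun t => S (i t) * P n).prod) *
      (P n * (List.ofFn fun t => S (i t) * P n).prod)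
    = P n * (List.ofFn fun t => S (i t) * P n).prod := by
  exact stmt5_general e S (fun j r => r * N + j) mul_add_fin_injective hS (P n) (· < n) (hP n) i
end

section
/- For every k ≥ 1, every multi-index i = (i_1,…,i_k) ∈ Ω^k and every n ≥ 1, one has P_n S_i^* P_n S_i P_n = P_m, where m := ⌈(n − v_{i,k})/N^k⌉ (least integer ≥ (n − v_{i,k})/N^k) if n > v_{i,k}, and m := 0 otherwise. -/
/-!
The word `T = S_{i₁} ⋯ S_{i_k}` carries `e_r` to `e_{r N^k + v}`, and `T*` undoes this. Hence
`Pₙ T* Pₙ T Pₙ` fixes `e_r` when both `r < n` and `r N^k + v < n`, and kills it otherwise. The first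
condition follows from the second, which says `r < ⌈(n - v) / N^k⌉`.
-/

open ContinuousLinearMap

section HilbertBasis

variable {𝕜 E F ι κ : Type*} [RCLike 𝕜] [NormedAddCommGroup E] [InnerProductSpace 𝕜 E]

theorem continuousLinearMap_ext_hilbertBasis [AddCommGroup F] [Module 𝕜 F] [TopologicalSpace F]
    [T2Space F] (e : HilbertBasis ι 𝕜 E) {T U : E →L[𝕜] F} (h : ∀ r, T (e r) = U (e r)) : T = U :=
  ContinuousLinearMap.ext_on (Submodule.dense_iff_topologicalClosure_eq_top.2 e.dense_span)
    (Set.forall_mem_range.2 h)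

variable [CompleteSpace E] [NormedAddCommGroup F] [InnerProductSpace 𝕜 F] [CompleteSpace F]

theorem adjoint_apply_of_apply_hilbertBasis (e : HilbertBasis ι 𝕜 E) {b : κ → F}
    (hb : Orthonormal 𝕜 b) {f : ι → κ} (hf : f.Injective) {T : E →L[𝕜] F}
    (hT : ∀ r, T (e r) = b (f r)) (r : ι) : adjoint T (b (f r)) = e r := by
  classical
  apply e.repr.injective
  ext s
  rw [e.repr_apply_apply, e.repr_apply_apply, adjoint_inner_right, hT,
    orthonormal_iff_ite.1 hb, orthonormal_iff_ite.1 e.orthonormal]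
  simp only [hf.eq_iff]

end HilbertBasis

section CoordinateProjection

variable {𝕜 E F ι κ : Type*} [RCLike 𝕜] [NormedAddCommGroup E] [InnerProductSpace 𝕜 E]

/-- `P` is the projection onto the coordinates in `s` along those outside `s`, for the coordinate
system given by the family `e`. The notion only constrains `P` on the closed span of `e`; it
determines `P` when `e` is a Hilbert basis. -/
def IsCoordinateProjection (e : ι → E) (s : Set ι) (P : E →L[𝕜] E) : Prop :=
  ∀ r, P (e r) = s.indicator e r

namespace IsCoordinateProjection

theorem unique {e : HilbertBasis ι 𝕜 E} {s : Set ι} {P Q : E →L[𝕜] E}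
    (hP : IsCoordinateProjection e s P) (hQ : IsCoordinateProjection e s Q) : P = Q :=
  continuousLinearMap_ext_hilbertBasis e fun r => (hP r).trans (hQ r).symm

variable [CompleteSpace E] [NormedAddCommGroup F] [InnerProductSpace 𝕜 F] [CompleteSpace F]

theorem compression {e : HilbertBasis ι 𝕜 E} {b : κ → F} (hb : Orthonormal 𝕜 b)
    {s : Set ι} {t : Set κ} {P : E →L[𝕜] E} {Q : F →L[𝕜] F}
    (hP : IsCoordinateProjection e s P) (hQ : IsCoordinateProjection b t Q)
    {f : ι → κ} (hf : f.Injective) {T : E →L[𝕜] F} (hT : ∀ r, T (e r) = b (f r)) :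
    IsCoordinateProjection e (s ∩ f ⁻¹' t) (P ∘L adjoint T ∘L Q ∘L T ∘L P) := by
  classical
  intro r
  simp only [comp_apply, hP r, Set.indicator_apply, Set.mem_inter_iff, Set.mem_preimage]
  by_cases hs : r ∈ s
  · by_cases ht : f r ∈ t
    · simp [hs, ht, hT, hQ (f r), adjoint_apply_of_apply_hilbertBasis e hb hf hT, hP r]
    · simp [hs, ht, hT, hQ (f r)]
  · simp [hs]

end IsCoordinateProjection

end CoordinateProjection

theorem prod_ofFn_smul_affine {M X : Type*} [Monoid M] [MulAction M X] (e : ℕ → X) (N : ℕ)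
    {k : ℕ} {S : Fin k → M} {d : Fin k → ℕ} (hS : ∀ t r, S t • e r = e (r * N + d t)) (r : ℕ) :
    (List.ofFn S).prod • e r = e (r * N ^ k + ∑ t : Fin k, d t * N ^ (t : ℕ)) := by
  induction k with
  | zero => simp
  | succ k ih =>
    have hsum : ∑ t : Fin (k + 1), d t * N ^ (t : ℕ)
        = (∑ t : Fin k, d t.succ * N ^ (t : ℕ)) * N + d 0 := by
      simp only [Fin.sum_univ_succ, Fin.val_zero, Fin.val_succ, Finset.sum_mul, pow_succ, mul_assoc]
      ring
    rw [List.ofFn_succ, List.prod_cons, mul_smul, ih fun t => hS t.succ, hS, hsum]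
    congr 1
    ring

theorem lt_sub_ceilDiv_iff {M : ℕ} (hM : 0 < M) (n v r : ℕ) :
    r < (n - v) ⌈/⌉ M ↔ r * M + v < n := by
  rw [← not_le, ceilDiv_le_iff_le_mul hM, not_le, lt_tsub_iff_right, mul_comm]

theorem ite_add_sub_one_div_eq_sub_ceilDiv (n v M : ℕ) :
    (if v < n then (n - v + M - 1) / M else 0) = (n - v) ⌈/⌉ M := by
  split_ifs with h
  · rfl
  · rw [Nat.sub_eq_zero_of_le (not_lt.1 h), zero_ceilDiv]

theorem Iio_inter_preimage_affine_Iio {M : ℕ} (hM : 0 < M) (n v : ℕ) :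
    Set.Iio n ∩ (fun r => r * M + v) ⁻¹' Set.Iio n = Set.Iio ((n - v) ⌈/⌉ M) := by
  ext r
  simp only [Set.mem_inter_iff, Set.mem_preimage, Set.mem_Iio, lt_sub_ceilDiv_iff hM]
  have : r ≤ r * M := Nat.le_mul_of_pos_right r hM
  omega

theorem stmt6_general {𝕜 H : Type*} [RCLike 𝕜] [NormedAddCommGroup H] [InnerProductSpace 𝕜 H]
    [CompleteSpace H] (e : HilbertBasis ℕ 𝕜 H) {N : ℕ} (hN : 0 < N) {k : ℕ}
    {S : Fin k → H →L[𝕜] H} {d : Fin k → ℕ} (hS : ∀ t r, S t (e r) = e (r * N + d t))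
    {P : ℕ → H →L[𝕜] H} (hP : ∀ n r, P n (e r) = if r < n then e r else 0) (n : ℕ) :
    P n * star (List.ofFn S).prod * P n * (List.ofFn S).prod * P n
      = P ((n - ∑ t : Fin k, d t * N ^ (t : ℕ)) ⌈/⌉ N ^ k) := by
  set v := ∑ t : Fin k, d t * N ^ (t : ℕ)
  have hM : 0 < N ^ k := pow_pos hN k
  have hproj (m : ℕ) : IsCoordinateProjection e (Set.Iio m) (P m) := fun r => by
    simp only [hP, Set.indicator_apply, Set.mem_Iio]
  have hword (r : ℕ) : (List.ofFn S).prod (e r) = e (r * N ^ k + v) :=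
    prod_ofFn_smul_affine (M := H →L[𝕜] H) e N hS r
  have hinj : Function.Injective fun r => r * N ^ k + v :=
    (add_left_injective v).comp (mul_left_injective₀ hM.ne')
  have hcomp := (hproj n).compression e.orthonormal (hproj n) hinj hword
  rw [Iio_inter_preimage_affine_Iio hM] at hcomp
  exact hcomp.unique (hproj _)

/-- For `k ≥ 1`, a multi-index `i ∈ Ω^k` and `n ≥ 1`, one has
`Pₙ S_i* Pₙ S_i Pₙ = P_m` where `S_i = S_{i₁} ⋯ S_{i_k}`, `v = v_{i,k} = Σ_t i_{t+1} N^t`,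
and `m = ⌈(n - v)/N^k⌉` if `n > v`, else `m = 0`. (For naturals `1 ≤ a`, `1 ≤ b`,
`⌈a/b⌉ = (a + b - 1)/b` with floor division.) -/
theorem stmt6 {H : Type*} [NormedAddCommGroup H] [InnerProductSpace ℂ H] [CompleteSpace H]
    (e : HilbertBasis ℕ ℂ H) (N : ℕ) (hN : 2 ≤ N)
    (S : Fin N → H →L[ℂ] H)
    (hS : ∀ (i : Fin N) (r : ℕ), S i (e r) = e (r * N + (i : ℕ)))
    (P : ℕ → H →L[ℂ] H)
    (hP : ∀ n k : ℕ, P n (e k) = if k < n then e k else 0)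
    (k : ℕ) (hk : 1 ≤ k) (i : Fin k → Fin N) (n : ℕ) (hn : 1 ≤ n) :
    P n * star ((List.ofFn fun t => S (i t)).prod) * P n *
        (List.ofFn fun t => S (i t)).prod * P n
      = P (if (∑ t : Fin k, (i t : ℕ) * N ^ (t : ℕ)) < n
            then (n - (∑ t : Fin k, (i t : ℕ) * N ^ (t : ℕ)) + N ^ k - 1) / N ^ k
            else 0) := by
  rw [ite_add_sub_one_div_eq_sub_ceilDiv]
  exact stmt6_general e (by omega) (fun t => hS (i t)) hP n
end

section
/- Let k ≥ 1, i = (i_1,…,i_k) ∈ Ω^k, j ∈ ℤ⁺ and n = N^j. Then P_n S_i^* P_n S_i P_n equals 0 if j < k and N^j ≤ v_{i,k}; equals P_1 if j < k and N^j > v_{i,k}; and equals P_{N^{j−k}} if j ≥ k. -/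
/-!
Each `S i` appends a lowest base-`N` digit to the index of a basis vector, so the word operator
`A = S_{i₁} ⋯ S_{i_k}` acts on the basis by `e r ↦ e (r * N ^ k + v)`, where `v < N ^ k` has the
digits `i₁, …, i_k`, lowest first. This map of indices is injective, so `star A` undoes it.
Hence `Pₙ * star A * Pₙ * A * Pₙ` fixes `e r` when `r * N ^ k + v < n`, that is when
`r < ⌈(n - v) / N ^ k⌉` with the difference truncated at `0`, and kills it otherwise. For
`n = N ^ j` the rounded-up quotient is `0`, `1` or `N ^ (j - k)`.
-/

theorem sum_fin_mul_pow_lt {N k : ℕ} (i : Fin k → Fin N) :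
    ∑ t : Fin k, (i t : ℕ) * N ^ (t : ℕ) < N ^ k :=
  finFunctionFinEquiv_apply i ▸ (finFunctionFinEquiv i).isLt

theorem lt_tsub_ceilDiv_iff {M : ℕ} (hM : 0 < M) (r v n : ℕ) :
    r < (n - v) ⌈/⌉ M ↔ r * M + v < n := by
  rw [(gc_mul_ceilDiv hM).lt_iff_lt, lt_tsub_iff_right, mul_comm]

theorem mul_tsub_ceilDiv_of_lt {M v : ℕ} (hv : v < M) (q : ℕ) : (q * M - v) ⌈/⌉ M = q := by
  refine eq_of_forall_lt_iff fun r => ?_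
  rw [lt_tsub_ceilDiv_iff (Nat.zero_lt_of_lt hv)]
  refine ⟨fun h => lt_of_mul_lt_mul_right (le_self_add.trans_lt h) M.zero_le, fun h => ?_⟩
  calc r * M + v < (r + 1) * M := by rw [add_one_mul]; gcongr
    _ ≤ q * M := by gcongr; exact h

theorem ceilDiv_eq_one {M a : ℕ} (ha : 0 < a) (haM : a ≤ M) : a ⌈/⌉ M = 1 := by
  have hM : 0 < M := ha.trans_le haM
  refine le_antisymm ((ceilDiv_le_iff_le_mul hM).2 (by rwa [mul_one])) ?_
  exact (gc_mul_ceilDiv hM).lt_iff_lt.2 (by rwa [mul_zero])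

theorem pow_tsub_ceilDiv_pow_of_lt {N k v : ℕ} (hv : v < N ^ k) (j : ℕ) :
    (N ^ j - v) ⌈/⌉ N ^ k = if j < k then (if N ^ j ≤ v then 0 else 1) else N ^ (j - k) := by
  split_ifs with hjk hjv
  · rw [Nat.sub_eq_zero_of_le hjv, zero_ceilDiv]
  · have hN : 0 < N := Nat.pos_of_ne_zero fun h => by simp [h, Nat.ne_zero_of_lt hjk] at hv
    have hpow : N ^ j ≤ N ^ k := Nat.pow_le_pow_right hN hjk.le
    exact ceilDiv_eq_one (by omega) (by omega)
  · rw [← pow_sub_mul_pow N (not_lt.1 hjk), mul_tsub_ceilDiv_of_lt hv]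

theorem prod_ofFn_smul_of_smul_eq_mul_add {G X : Type*} [Monoid G] [MulAction G X]
    {e : ℕ → X} {N : ℕ} {S : Fin N → G}
    (hS : ∀ (i : Fin N) (r : ℕ), S i • e r = e (r * N + i)) {k : ℕ} (i : Fin k → Fin N) (r : ℕ) :
    (List.ofFn fun t => S (i t)).prod • e r
      = e (r * N ^ k + ∑ t : Fin k, (i t : ℕ) * N ^ (t : ℕ)) := by
  induction k with
  | zero => simp
  | succ k ih =>
    rw [List.ofFn_succ, List.prod_cons, mul_smul, ih, hS, Fin.sum_univ_succ]
    congr 1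
    simp only [Fin.val_succ, Fin.val_zero, pow_zero, mul_one, pow_succ, add_mul, Finset.sum_mul,
      mul_assoc]
    ring

section HilbertBasis

variable {𝕜 ι H : Type*} [RCLike 𝕜] [NormedAddCommGroup H] [InnerProductSpace 𝕜 H]

theorem eq_of_forall_apply_hilbertBasis_eq_s7 {F : Type*} [AddCommMonoid F] [Module 𝕜 F]
    [TopologicalSpace F] [T2Space F] (e : HilbertBasis ι 𝕜 H) {A B : H →L[𝕜] F}
    (h : ∀ r, A (e r) = B (e r)) : A = B :=
  ContinuousLinearMap.ext_on (Submodule.dense_iff_topologicalClosure_eq_top.2 e.dense_span)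
    (Set.forall_mem_range.2 h)

variable [CompleteSpace H]

theorem adjoint_apply_of_orthonormal {F : Type*} [NormedAddCommGroup F] [InnerProductSpace 𝕜 F]
    [CompleteSpace F] (e : HilbertBasis ι 𝕜 H) {f : ι → F} (hf : Orthonormal 𝕜 f)
    {A : H →L[𝕜] F} (hA : ∀ r, A (e r) = f r) (r : ι) :
    ContinuousLinearMap.adjoint A (f r) = e r := by
  classical
  refine e.repr.injective (lp.ext (funext fun m => ?_))
  rw [e.repr_apply_apply, e.repr_apply_apply, ContinuousLinearMap.adjoint_inner_right, hA,
    orthonormal_iff_ite.1 hf, orthonormal_iff_ite.1 e.orthonormal]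

theorem compression_apply_hilbertBasis (e : HilbertBasis ι 𝕜 H) {σ : ι → ι}
    (hσ : Function.Injective σ) {A : H →L[𝕜] H} (hA : ∀ r, A (e r) = e (σ r)) {p : ι → Prop}
    [DecidablePred p] {Q : H →L[𝕜] H} (hQ : ∀ r, Q (e r) = if p r then e r else 0) (r : ι) :
    (Q * star A * Q * A * Q) (e r) = if p r ∧ p (σ r) then e r else 0 := by
  have hstar : star A (e (σ r)) = e r :=
    adjoint_apply_of_orthonormal e (e.orthonormal.comp σ hσ) hA r
  by_cases hr : p r <;> by_cases hσr : p (σ r) <;> simp [hQ, hA, hstar, hr, hσr]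

theorem compression_eq_of_apply_eq_mul_add (e : HilbertBasis ℕ 𝕜 H) {A : H →L[𝕜] H} {M v : ℕ}
    (hM : 0 < M) (hA : ∀ r, A (e r) = e (r * M + v)) {P : ℕ → H →L[𝕜] H}
    (hP : ∀ n k : ℕ, P n (e k) = if k < n then e k else 0) (n : ℕ) :
    P n * star A * P n * A * P n = P ((n - v) ⌈/⌉ M) := by
  have hinj : Function.Injective fun r => r * M + v :=
    (add_left_injective v).comp (mul_left_injective₀ hM.ne')
  refine eq_of_forall_apply_hilbertBasis_eq_s7 e fun r => ?_
  have hle : r ≤ r * M + v := (Nat.le_mul_of_pos_right r hM).trans le_self_add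
  rw [compression_apply_hilbertBasis e hinj hA (hP n), hP]
  simp only [lt_tsub_ceilDiv_iff hM, and_iff_right_of_imp hle.trans_lt]

theorem stmt7_general (e : HilbertBasis ℕ 𝕜 H) {N : ℕ} {S : Fin N → H →L[𝕜] H}
    (hS : ∀ (i : Fin N) (r : ℕ), S i (e r) = e (r * N + (i : ℕ))) {P : ℕ → H →L[𝕜] H}
    (hP : ∀ n k : ℕ, P n (e k) = if k < n then e k else 0) {k : ℕ} (i : Fin k → Fin N) (n : ℕ) :
    P n * star ((List.ofFn fun t => S (i t)).prod) * P n *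
        (List.ofFn fun t => S (i t)).prod * P n
      = P ((n - ∑ t : Fin k, (i t : ℕ) * N ^ (t : ℕ)) ⌈/⌉ N ^ k) :=
  compression_eq_of_apply_eq_mul_add e (Nat.zero_lt_of_lt (sum_fin_mul_pow_lt i))
    (prod_ofFn_smul_of_smul_eq_mul_add (G := H →L[𝕜] H) (e := e) hS i) hP n

end HilbertBasis

/-- Let `k ≥ 1`, `i ∈ Ω^k`, `j ∈ ℤ⁺` and `n = N^j`. Then
`Pₙ S_i* Pₙ S_i Pₙ` equals `0` if `j < k` and `N^j ≤ v_{i,k}`; equals `P 1` if `j < k` and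
`N^j > v_{i,k}`; and equals `P (N^(j-k))` if `j ≥ k`. -/
theorem stmt7 {H : Type*} [NormedAddCommGroup H] [InnerProductSpace ℂ H] [CompleteSpace H]
    (e : HilbertBasis ℕ ℂ H) (N : ℕ) (hN : 2 ≤ N)
    (S : Fin N → H →L[ℂ] H)
    (hS : ∀ (i : Fin N) (r : ℕ), S i (e r) = e (r * N + (i : ℕ)))
    (P : ℕ → H →L[ℂ] H)
    (hP : ∀ n k : ℕ, P n (e k) = if k < n then e k else 0)
    (k : ℕ) (hk : 1 ≤ k) (i : Fin k → Fin N) (j : ℕ) :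
    P (N ^ j) * star ((List.ofFn fun t => S (i t)).prod) * P (N ^ j) *
        (List.ofFn fun t => S (i t)).prod * P (N ^ j)
      = if j < k then
          (if N ^ j ≤ ∑ t : Fin k, (i t : ℕ) * N ^ (t : ℕ) then 0 else P 1)
        else P (N ^ (j - k)) := by
  have hP0 : P 0 = 0 := eq_of_forall_apply_hilbertBasis_eq_s7 e fun r => by simp [hP]
  rw [stmt7_general e hS hP, pow_tsub_ceilDiv_pow_of_lt (sum_fin_mul_pow_lt i), apply_ite P,
    apply_ite P, hP0]
end

section
/- The ideal G_η of norm-null sequences is contained in S_η(O_N), i.e. every sequence (A_n)_{n≥0} of complex N^n×N^n matrices with ‖A_n‖ → 0 belongs to the smallest closed *-subalgebra of F_η containing all sequences (P_{N^n}AP_{N^n})_{n≥0} with A ∈ O_N. -/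
/-!
The compression `D` of a word `S_{i_1} ⋯ S_{i_k}` maps `e_r` to `e_{r N^k + c}` as long as this
index stays below `N^n`, and to `0` otherwise; here `c < N^k` is the number with digits
`i_k, …, i_1`. So `D⋆ D` is the diagonal projection onto the `e_r` with `r N^k + c < N^n`. Taking
`k = m + 1`, the projections for `c = N^m - 1` and `c = N^m` differ only where
`r N^(m+1) + N^m = N^n`, that is, at `r = 0` and `n = m`: their difference is the sequence whose
only nonzero entry is the matrix unit `e_0 e_0⋆`, in position `m`. Multiplying by compressed words
on both sides gives every matrix unit in position `m`, hence every sequence with finitely many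
nonzero entries, and these are dense in the norm-null sequences.
-/

open Filter InnerProductSpace Topology
open scoped BoundedContinuousFunction

section SingleEntry

variable {α E : Type*} [TopologicalSpace α] [DiscreteTopology α] [DecidableEq α]

/-- The bounded function on a discrete space with value `x` at `a` and `0` elsewhere, as a linear
map in `x`; it is `Pi.single` with values in the bounded functions. -/
noncomputable def bcfSingle (𝕜 : Type*) [NormedField 𝕜] [SeminormedAddCommGroup E]
    [NormedSpace 𝕜 E] (a : α) : E →ₗ[𝕜] α →ᵇ E where
  toFun x := .ofNormedAddCommGroupDiscrete (Pi.single a x) ‖x‖ fun b => by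
    rcases eq_or_ne b a with rfl | h <;> simp [*]
  map_add' x y := DFunLike.coe_injective (Pi.single_add (f := fun _ => E) a x y)
  map_smul' c x := DFunLike.coe_injective (Pi.single_smul' a c x)

variable {𝕜 : Type*} [NormedField 𝕜]

@[simp]
theorem coe_bcfSingle [SeminormedAddCommGroup E] [NormedSpace 𝕜 E] (a : α) (x : E) :
    ⇑(bcfSingle 𝕜 a x) = Pi.single a x :=
  rfl

theorem mul_bcfSingle_mul [NonUnitalSeminormedRing E] [NormedSpace 𝕜 E] (a : α) (x : E)
    (g h : α →ᵇ E) : g * bcfSingle 𝕜 a x * h = bcfSingle 𝕜 a (g a * x * h a) := by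
  ext b
  rcases eq_or_ne b a with rfl | hb <;> simp [*]

theorem hasSum_bcfSingle [SeminormedAddCommGroup E] [NormedSpace 𝕜 E] {f : α →ᵇ E}
    (hf : Tendsto f cofinite (𝓝 0)) : HasSum (fun a => bcfSingle 𝕜 a (f a)) f := by
  refine Metric.tendsto_atTop.2 fun ε hε => ?_
  have hfin : {a | ¬ ‖f a‖ < ε / 2}.Finite :=
    (tendsto_zero_iff_norm_tendsto_zero.1 hf).eventually_lt_const (half_pos hε)
  refine ⟨hfin.toFinset, fun s hs => lt_of_le_of_lt ?_ (half_lt_self hε)⟩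
  refine (BoundedContinuousFunction.dist_le (half_pos hε).le).2 fun a => ?_
  have hsum : (∑ b ∈ s, bcfSingle 𝕜 b (f b)) a = if a ∈ s then f a else 0 := by
    simp [Finset.sum_pi_single]
  rw [hsum]
  split_ifs with ha
  · simpa using (half_pos hε).le
  · rw [dist_zero_left]
    by_contra hlt
    exact ha (hs (hfin.mem_toFinset.2 fun h => hlt h.le))

end SingleEntry

theorem subsemigroupClosure_subset_adjoin (R : Type*) {A : Type*} [CommSemiring R] [StarRing R]
    [NonUnitalSemiring A] [StarRing A] [Module R A] [IsScalarTower R A A] [SMulCommClass R A A]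
    [StarModule R A] (s : Set A) :
    (Subsemigroup.closure s : Set A) ⊆ NonUnitalStarAlgebra.adjoin R s := fun _ ha =>
  Subsemigroup.closure_le (S := (NonUnitalStarAlgebra.adjoin R s).toSubsemigroup).2
    (NonUnitalStarAlgebra.subset_adjoin R s) ha

section CompressionAlgebra

variable {R α : Type*} [TopologicalSpace α] [NonUnitalNormedRing R] [StarRing R]
  [NormedStarGroup R]

/-- The *-algebra generated by the bounded sequences `(Q n * A * Q n)` with `A ∈ T`. The closure of
`compressionAlgebra ℂ (fun n => P_{N^n}) O_N` is the algebra `S_η(O_N)`. -/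
noncomputable def compressionAlgebra (𝕜 : Type*) [NormedField 𝕜] [StarRing 𝕜] [NormedSpace 𝕜 R]
    [IsScalarTower 𝕜 R R] [SMulCommClass 𝕜 R R] [StarModule 𝕜 R]
    (Q : α → R) (T : Set R) : NonUnitalStarSubalgebra 𝕜 (α →ᵇ R) :=
  NonUnitalStarAlgebra.adjoin 𝕜 {g | ∃ A ∈ T, ∀ n, g n = Q n * A * Q n}

variable {𝕜 : Type*} [NormedField 𝕜] [StarRing 𝕜] [NormedSpace 𝕜 R]
  [IsScalarTower 𝕜 R R] [SMulCommClass 𝕜 R R] [StarModule 𝕜 R] {Q : α → R}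

theorem compressionAlgebra_mono {T T' : Set R} (h : T ⊆ T') :
    compressionAlgebra 𝕜 Q T ≤ compressionAlgebra 𝕜 Q T' :=
  NonUnitalStarAlgebra.adjoin_mono fun _ ⟨A, hA, hg⟩ => ⟨A, h hA, hg⟩

theorem exists_compression_mem_compressionAlgebra [DiscreteTopology α] (hQ : ∀ n, ‖Q n‖ ≤ 1)
    {T : Set R} {A : R} (hA : A ∈ T) :
    ∃ g ∈ compressionAlgebra 𝕜 Q T, ∀ n, g n = Q n * A * Q n := by
  have hbound (n : α) : ‖Q n * A * Q n‖ ≤ ‖A‖ :=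
    calc ‖Q n * A * Q n‖ ≤ ‖Q n‖ * ‖A‖ * ‖Q n‖ := norm_mul₃_le
      _ ≤ 1 * ‖A‖ * 1 := by gcongr <;> exact hQ n
      _ = ‖A‖ := by ring
  exact ⟨.ofNormedAddCommGroupDiscrete _ ‖A‖ hbound,
    NonUnitalStarAlgebra.subset_adjoin 𝕜 _ ⟨A, hA, fun _ => rfl⟩, fun _ => rfl⟩

end CompressionAlgebra

section HilbertBasis

variable {𝕜 H ι : Type*} [RCLike 𝕜] [NormedAddCommGroup H] [InnerProductSpace 𝕜 H]

theorem clm_ext_hilbertBasis {F : Type*} [TopologicalSpace F] [AddCommMonoid F] [Module 𝕜 F]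
    [T2Space F] (e : HilbertBasis ι 𝕜 H) {A B : H →L[𝕜] F} (h : ∀ k, A (e k) = B (e k)) :
    A = B :=
  ContinuousLinearMap.ext_on (Submodule.dense_iff_topologicalClosure_eq_top.2 e.dense_span)
    (Set.forall_mem_range.2 h)

theorem sum_rankOne_mul_mul_sum_rankOne (v : ι → H) (s : Finset ι) (X : H →L[𝕜] H) :
    (∑ a ∈ s, rankOne 𝕜 (v a) (v a)) * X * ∑ b ∈ s, rankOne 𝕜 (v b) (v b) =
      ∑ a ∈ s, ∑ b ∈ s, inner 𝕜 (v a) (X (v b)) • rankOne 𝕜 (v a) (v b) := by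
  simp only [Finset.sum_mul, Finset.mul_sum]
  rw [Finset.sum_comm]
  refine Finset.sum_congr rfl fun a _ => Finset.sum_congr rfl fun b _ => ?_
  ext x
  simp [smul_smul, mul_comm]

theorem mul_rankOne_mul_star [CompleteSpace H] (A B : H →L[𝕜] H) (x y : H) :
    A * rankOne 𝕜 x y * star B = rankOne 𝕜 (A x) (B y) := by
  ext z
  simp [ContinuousLinearMap.star_eq_adjoint, ContinuousLinearMap.adjoint_inner_right]

variable (e : HilbertBasis ι 𝕜 H)

theorem eq_sum_rankOne_of_apply_hilbertBasis [DecidableEq ι] {P : H →L[𝕜] H} {s : Finset ι}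
    (hP : ∀ k, P (e k) = if k ∈ s then e k else 0) : P = ∑ a ∈ s, rankOne 𝕜 (e a) (e a) :=
  clm_ext_hilbertBasis e fun k => by simp [hP, orthonormal_iff_ite.1 e.orthonormal]

variable [CompleteSpace H] {p : ι → Prop} [DecidablePred p]

theorem star_mul_self_apply_hilbertBasis {A : H →L[𝕜] H} {g : ι → ι}
    (hg : Set.InjOn g {r | p r}) (hA : ∀ r, A (e r) = if p r then e (g r) else 0) (r : ι) :
    (star A * A) (e r) = if p r then e r else 0 := by
  classical
  refine e.repr.injective (lp.ext <| funext fun s => ?_)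
  rw [e.repr_apply_apply, e.repr_apply_apply, mul_apply_eq_comp,
    ContinuousLinearMap.star_eq_adjoint, ContinuousLinearMap.adjoint_inner_right, hA, hA]
  have hinner := orthonormal_iff_ite.1 e.orthonormal
  by_cases hr : p r <;> by_cases hs : p s
  · simp [hr, hs, hinner, hg.eq_iff hs hr]
  · have hne : s ≠ r := fun h => hs (h ▸ hr)
    simp [hr, hs, hinner, hne]
  all_goals simp [hr]

theorem isStarProjection_of_apply_hilbertBasis {P : H →L[𝕜] H}
    (hP : ∀ k, P (e k) = if p k then e k else 0) : IsStarProjection P := by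
  have hPP : star P * P = P := clm_ext_hilbertBasis e fun k => by
    rw [star_mul_self_apply_hilbertBasis e (g := id) (Set.injOn_id _) (by simpa using hP), hP]
  have hstar : star P = P := by
    rw [← hPP, star_mul, star_star]
  exact ⟨by rwa [hstar] at hPP, hstar⟩

end HilbertBasis

theorem mul_pow_succ_add_pow_eq_pow_iff {N : ℕ} (hN : 2 ≤ N) {r m n : ℕ} :
    r * N ^ (m + 1) + N ^ m = N ^ n ↔ r = 0 ∧ n = m := by
  refine ⟨fun h => ?_, fun ⟨hr, hn⟩ => by simp [hr, hn]⟩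
  have hle : m ≤ n := (Nat.pow_le_pow_iff_right hN).1 (by omega)
  obtain ⟨d, rfl⟩ := Nat.exists_eq_add_of_le hle
  have hd : r * N + 1 = N ^ d := by
    refine Nat.eq_of_mul_eq_mul_left (show 0 < N ^ m by positivity) ?_
    rw [← pow_add, ← h]
    ring
  rcases Nat.eq_zero_or_pos d with rfl | hpos
  · have : r = 0 ∨ N = 0 := by simpa using hd
    omega
  · have hdvd : N ∣ 1 :=
      (Nat.dvd_add_right (Dvd.intro_left r rfl)).1 (hd ▸ dvd_pow_self N hpos.ne')
    have := Nat.le_of_dvd one_pos hdvd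
    omega

section Cuntz

variable {𝕜 H : Type*} [RCLike 𝕜] [NormedAddCommGroup H] [InnerProductSpace 𝕜 H]
  {e : HilbertBasis ℕ 𝕜 H} {N : ℕ} {S : Fin N → H →L[𝕜] H}

theorem exists_word_apply_eq_mul_pow_add
    (hS : ∀ (i : Fin N) (r : ℕ), S i (e r) = e (r * N + (i : ℕ))) {k c : ℕ}
    (hc : c < N ^ (k + 1)) :
    ∃ V ∈ Subsemigroup.closure (Set.range S), ∀ r, V (e r) = e (r * N ^ (k + 1) + c) := by
  have hmem (i : Fin N) : S i ∈ Subsemigroup.closure (Set.range S) :=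
    Subsemigroup.subset_closure ⟨i, rfl⟩
  induction k generalizing c with
  | zero => exact ⟨S ⟨c, by simpa using hc⟩, hmem _, by simp [hS]⟩
  | succ k ih =>
    have hN : 0 < N := Nat.pos_of_ne_zero (by rintro rfl; simp at hc)
    obtain ⟨V, hV, hVe⟩ := ih (Nat.div_lt_of_lt_mul (pow_succ' N (k + 1) ▸ hc))
    refine ⟨S ⟨c % N, Nat.mod_lt _ hN⟩ * V, mul_mem (hmem _) hV, fun r => ?_⟩
    have hdigits : (r * N ^ (k + 1) + c / N) * N + c % N = r * N ^ (k + 2) + c := by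
      rw [add_mul, add_assoc, Nat.div_add_mod']
      ring
    rw [mul_apply_eq_comp, hVe, hS, hdigits]

variable [CompleteSpace H] {P : ℕ → H →L[𝕜] H}

theorem exists_mem_compressionAlgebra_apply_eq_ite
    (hS : ∀ (i : Fin N) (r : ℕ), S i (e r) = e (r * N + (i : ℕ)))
    (hP : ∀ n k : ℕ, P n (e k) = if k < n then e k else 0) {k c : ℕ} (hc : c < N ^ (k + 1)) :
    ∃ g ∈ compressionAlgebra 𝕜 (fun n => P (N ^ n)) (Subsemigroup.closure (Set.range S) : Set _),
      ∀ n r, g n (e r) =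
        if r * N ^ (k + 1) + c < N ^ n then e (r * N ^ (k + 1) + c) else 0 := by
  obtain ⟨V, hV, hVe⟩ := exists_word_apply_eq_mul_pow_add hS hc
  obtain ⟨g, hg, hgV⟩ := exists_compression_mem_compressionAlgebra (𝕜 := 𝕜)
    (fun n => (isStarProjection_of_apply_hilbertBasis e (hP (N ^ n))).norm_le) hV
  refine ⟨g, hg, fun n r => ?_⟩
  have hr : r ≤ r * N ^ (k + 1) := Nat.le_mul_of_pos_right r (by omega)
  rw [hgV, mul_apply_eq_comp, mul_apply_eq_comp, hP]
  split_ifs with hrn h h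
  · rw [hVe, hP, if_pos h]
  · rw [hVe, hP, if_neg h]
  · omega
  · simp only [map_zero]

theorem bcfSingle_rankOne_zero_mem_compressionAlgebra (hN : 2 ≤ N)
    (hS : ∀ (i : Fin N) (r : ℕ), S i (e r) = e (r * N + (i : ℕ)))
    (hP : ∀ n k : ℕ, P n (e k) = if k < n then e k else 0) (m : ℕ) :
    bcfSingle 𝕜 m (rankOne 𝕜 (e 0) (e 0)) ∈
      compressionAlgebra 𝕜 (fun n => P (N ^ n)) (Subsemigroup.closure (Set.range S) : Set _) := by
  have hpos : 0 < N ^ m := by positivity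
  have hlt : N ^ m < N ^ (m + 1) := Nat.pow_lt_pow_succ hN
  obtain ⟨g, hg, hge⟩ := exists_mem_compressionAlgebra_apply_eq_ite hS hP
    (k := m) (c := N ^ m - 1) (by omega)
  obtain ⟨g', hg', hge'⟩ := exists_mem_compressionAlgebra_apply_eq_ite hS hP hlt
  have hinj (c : ℕ) : Function.Injective fun r => r * N ^ (m + 1) + c := fun a b hab =>
    Nat.eq_of_mul_eq_mul_right (hpos.trans hlt) (Nat.add_right_cancel hab)
  suffices bcfSingle 𝕜 m (rankOne 𝕜 (e 0) (e 0)) = star g * g - star g' * g' by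
    rw [this]
    exact sub_mem (mul_mem (star_mem hg) hg) (mul_mem (star_mem hg') hg')
  refine BoundedContinuousFunction.ext fun n => clm_ext_hilbertBasis e fun r => ?_
  have hsingle : bcfSingle 𝕜 m (rankOne 𝕜 (e 0) (e 0)) n (e r) =
      if r = 0 ∧ n = m then e r else 0 := by
    rcases eq_or_ne n m with rfl | hn
    · rcases eq_or_ne r 0 with rfl | hr <;>
        simp [e.orthonormal.norm_eq_one, e.orthonormal.inner_eq_zero, eq_comm, *]
    · simp [hn]
  have hdiff : (star g * g - star g' * g') n (e r) =
      (if r * N ^ (m + 1) + (N ^ m - 1) < N ^ n then e r else 0) -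
        if r * N ^ (m + 1) + N ^ m < N ^ n then e r else 0 := by
    rw [← star_mul_self_apply_hilbertBasis e (hinj _).injOn (hge n),
      ← star_mul_self_apply_hilbertBasis e (hinj _).injOn (hge' n)]
    rfl
  rw [hsingle, hdiff]
  simp only [← mul_pow_succ_add_pow_eq_pow_iff hN]
  split_ifs <;> first | omega | simp only [sub_self, sub_zero]

theorem bcfSingle_rankOne_mem_compressionAlgebra (hN : 2 ≤ N)
    (hS : ∀ (i : Fin N) (r : ℕ), S i (e r) = e (r * N + (i : ℕ)))
    (hP : ∀ n k : ℕ, P n (e k) = if k < n then e k else 0) {m a b : ℕ}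
    (ha : a < N ^ m) (hb : b < N ^ m) :
    bcfSingle 𝕜 m (rankOne 𝕜 (e a) (e b)) ∈
      compressionAlgebra 𝕜 (fun n => P (N ^ n)) (Subsemigroup.closure (Set.range S) : Set _) := by
  have hlt : N ^ m < N ^ (m + 1) := Nat.pow_lt_pow_succ hN
  obtain ⟨g, hg, hge⟩ := exists_mem_compressionAlgebra_apply_eq_ite hS hP (ha.trans hlt)
  obtain ⟨g', hg', hge'⟩ := exists_mem_compressionAlgebra_apply_eq_ite hS hP (hb.trans hlt)
  have hga : g m (e 0) = e a := by simp [hge, ha]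
  have hgb : g' m (e 0) = e b := by simp [hge', hb]
  have hconj : g * bcfSingle 𝕜 m (rankOne 𝕜 (e 0) (e 0)) * star g' =
      bcfSingle 𝕜 m (rankOne 𝕜 (e a) (e b)) := by
    rw [mul_bcfSingle_mul, BoundedContinuousFunction.star_apply, mul_rankOne_mul_star, hga, hgb]
  rw [← hconj]
  exact mul_mem (mul_mem hg (bcfSingle_rankOne_zero_mem_compressionAlgebra hN hS hP m))
    (star_mem hg')

theorem bcfSingle_mem_compressionAlgebra (hN : 2 ≤ N)
    (hS : ∀ (i : Fin N) (r : ℕ), S i (e r) = e (r * N + (i : ℕ)))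
    (hP : ∀ n k : ℕ, P n (e k) = if k < n then e k else 0) {m : ℕ} {X : H →L[𝕜] H}
    (hX : X = P (N ^ m) * X * P (N ^ m)) :
    bcfSingle 𝕜 m X ∈
      compressionAlgebra 𝕜 (fun n => P (N ^ n)) (Subsemigroup.closure (Set.range S) : Set _) := by
  have hPsum : P (N ^ m) = ∑ a ∈ Finset.range (N ^ m), rankOne 𝕜 (e a) (e a) :=
    eq_sum_rankOne_of_apply_hilbertBasis e (by simpa only [Finset.mem_range] using hP (N ^ m))
  rw [hX, hPsum, sum_rankOne_mul_mul_sum_rankOne]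
  simp only [map_sum, map_smul]
  exact sum_mem fun a ha => sum_mem fun b hb => SMulMemClass.smul_mem _ <|
    bcfSingle_rankOne_mem_compressionAlgebra hN hS hP (Finset.mem_range.1 ha)
      (Finset.mem_range.1 hb)

theorem stmt8_general (hN : 2 ≤ N)
    (hS : ∀ (i : Fin N) (r : ℕ), S i (e r) = e (r * N + (i : ℕ)))
    (hP : ∀ n k : ℕ, P n (e k) = if k < n then e k else 0) {f : ℕ →ᵇ (H →L[𝕜] H)}
    (hf : ∀ n, f n = P (N ^ n) * f n * P (N ^ n))
    (hf0 : Tendsto (fun n => ‖f n‖) atTop (𝓝 0)) :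
    f ∈ (compressionAlgebra 𝕜 (fun n => P (N ^ n))
      (Subsemigroup.closure (Set.range S) : Set _)).topologicalClosure := by
  have hsum : HasSum (fun m => bcfSingle 𝕜 m (f m)) f :=
    hasSum_bcfSingle (by rwa [tendsto_zero_iff_norm_tendsto_zero, Nat.cofinite_eq_atTop])
  exact mem_closure_of_tendsto hsum <| .of_forall fun s =>
    sum_mem fun m _ => bcfSingle_mem_compressionAlgebra hN hS hP (hf m)

end Cuntz

/-- `G_η ⊆ S_η(O_N)`: every bounded sequence `(A_n)` of operators with
`A_n = P_{N^n} A_n P_{N^n}` (i.e. an `N^n × N^n` matrix) and `‖A_n‖ → 0` belongs to the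
smallest closed *-subalgebra of `F_η` containing all sequences `(P_{N^n} A P_{N^n})` with `A`
in the concrete Cuntz algebra `O_N`. -/
theorem stmt8 {H : Type*} [NormedAddCommGroup H] [InnerProductSpace ℂ H] [CompleteSpace H]
    (e : HilbertBasis ℕ ℂ H) (N : ℕ) (hN : 2 ≤ N)
    (S : Fin N → H →L[ℂ] H)
    (hS : ∀ (i : Fin N) (r : ℕ), S i (e r) = e (r * N + (i : ℕ)))
    (P : ℕ → H →L[ℂ] H)
    (hP : ∀ n k : ℕ, P n (e k) = if k < n then e k else 0)
    (f : BoundedContinuousFunction ℕ (H →L[ℂ] H))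
    (hf : ∀ n : ℕ, f n = P (N ^ n) * f n * P (N ^ n))
    (hf0 : Filter.Tendsto (fun n => ‖f n‖) Filter.atTop (nhds 0)) :
    f ∈ (NonUnitalStarAlgebra.adjoin ℂ
        {g : BoundedContinuousFunction ℕ (H →L[ℂ] H) |
          ∃ A ∈ (NonUnitalStarAlgebra.adjoin ℂ (Set.range S)).topologicalClosure,
            ∀ n : ℕ, g n = P (N ^ n) * A * P (N ^ n)}).topologicalClosure := by
  exact NonUnitalStarSubalgebra.topologicalClosure_mono
    (compressionAlgebra_mono ((subsemigroupClosure_subset_adjoin ℂ _).trans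
      (NonUnitalStarSubalgebra.le_topologicalClosure _)))
    (stmt8_general hN hS hP hf hf0)
end

section
/- Under axioms (A1) and (A2), for every k ≥ 1 the smallest closed two-sided ideal of A containing e − p_k coincides with the smallest closed two-sided ideal of A containing e − p_1. -/
/-!
Applying (A1) to constant words gives `p k = b ^ k * a ^ k` with `a = s i` and `b = star a`, for any
fixed `i`. Telescoping `1 - b ^ k * a ^ k` into terms `b ^ j * (1 - b * a) * a ^ j` puts every
`1 - p k` in the ideal generated by `1 - p 1`. Conversely, `a` is a partial isometry, so
`(1 - b * a) * b = 0` and therefore `1 - p 1 = (1 - p 1) * (1 - p k)`. Hence the algebraic ideals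
already agree before taking closures.
-/

section Ring

variable {R : Type*} [Ring R]

theorem one_sub_pow_succ_mul_pow_succ (a b : R) (n : ℕ) :
    1 - b ^ (n + 1) * a ^ (n + 1) = (1 - b * a) + b * (1 - b ^ n * a ^ n) * a := by
  rw [pow_succ' b, pow_succ a]
  noncomm_ring

variable {a b : R}

theorem one_sub_pow_mul_pow_mem {I : TwoSidedIdeal R} (h : 1 - b * a ∈ I) (n : ℕ) :
    1 - b ^ n * a ^ n ∈ I := by
  induction n with
  | zero => simpa only [pow_zero, mul_one, sub_self] using I.zero_mem
  | succ n ih =>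
    rw [one_sub_pow_succ_mul_pow_succ]
    exact I.add_mem h (I.mul_mem_right _ _ (I.mul_mem_left _ _ ih))

theorem one_sub_mul_mul_one_sub_pow_mul_pow (h : b * a * b = b) {n : ℕ} (hn : n ≠ 0) :
    (1 - b * a) * (1 - b ^ n * a ^ n) = 1 - b * a := by
  obtain ⟨m, rfl⟩ := Nat.exists_eq_succ_of_ne_zero hn
  have annihilates : (1 - b * a) * b = 0 := by rw [sub_mul, one_mul, h, sub_self]
  calc
    (1 - b * a) * (1 - b ^ (m + 1) * a ^ (m + 1))
        = (1 - b * a) - (1 - b * a) * b * (b ^ m * a ^ (m + 1)) := by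
      rw [mul_sub, mul_one, pow_succ' b, mul_assoc b, ← mul_assoc]
    _ = 1 - b * a := by rw [annihilates, zero_mul, sub_zero]

theorem span_one_sub_pow_mul_pow (h : b * a * b = b) {n : ℕ} (hn : n ≠ 0) :
    TwoSidedIdeal.span {1 - b ^ n * a ^ n} = TwoSidedIdeal.span {1 - b * a} := by
  apply le_antisymm <;> rw [TwoSidedIdeal.span_le, Set.singleton_subset_iff]
  · exact one_sub_pow_mul_pow_mem (TwoSidedIdeal.subset_span (Set.mem_singleton _)) n
  · rw [← one_sub_mul_mul_one_sub_pow_mul_pow h hn]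
    exact TwoSidedIdeal.mul_mem_left _ _ _ (TwoSidedIdeal.subset_span (Set.mem_singleton _))

end Ring

theorem mul_star_self_mul_self_of_isIdempotentElem {A : Type*} [NonUnitalNormedRing A] [StarRing A]
    [CStarRing A] {a : A} (h : IsIdempotentElem (star a * a)) : a * star a * a = a := by
  have defect_eq_zero : star (a * (star a * a) - a) * (a * (star a * a) - a) = 0 := calc
    _ = star a * a * (star a * a) * (star a * a) - star a * a * (star a * a)
          - (star a * a * (star a * a) - star a * a) := by
      simp only [star_sub, star_mul, star_star]
      noncomm_ring
    _ = 0 := by simp only [h.eq, sub_self]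
  rw [mul_assoc]
  exact sub_eq_zero.mp ((CStarRing.star_mul_self_eq_zero_iff _).mp defect_eq_zero)

theorem stmt10_general {A : Type*} [NormedRing A] [StarRing A] [CStarRing A]
    {ι : Type*} [Nonempty ι] (s : ι → A) (p : ℕ → A)
    (hp : IsIdempotentElem (p 1))
    (hs : ∀ k : ℕ, 1 ≤ k → ∀ i : Fin k → ι,
      star ((List.ofFn fun t => s (i t)).prod) * (List.ofFn fun t => s (i t)).prod = p k)
    {k : ℕ} (hk : 1 ≤ k) :
    TwoSidedIdeal.span {1 - p k} = TwoSidedIdeal.span {1 - p 1} := by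
  obtain ⟨i⟩ := ‹Nonempty ι›
  have p_eq (n : ℕ) (hn : 1 ≤ n) : p n = star (s i) ^ n * s i ^ n := by
    simpa only [List.ofFn_const, List.prod_replicate, star_pow] using (hs n hn fun _ => i).symm
  have p_one : p 1 = star (s i) * s i := by simpa only [pow_one] using p_eq 1 le_rfl
  rw [p_eq k hk, p_one]
  have partial_isometry : s i * star (s i) * s i = s i :=
    mul_star_self_mul_self_of_isIdempotentElem (p_one ▸ hp)
  have star_partial_isometry : star (s i) * s i * star (s i) = star (s i) := by
    simpa only [star_mul, star_star, mul_assoc] using congrArg star partial_isometry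
  exact span_one_sub_pow_mul_pow star_partial_isometry (Nat.one_le_iff_ne_zero.mp hk)

/-- Under axioms (A1), (A2), for every `k ≥ 1` the smallest closed
two-sided ideal of `A` containing `1 - p k` (realized as the topological closure of the
two-sided ideal generated by `1 - p k`) coincides with the smallest closed two-sided ideal
containing `1 - p 1`. -/
theorem stmt10 {A : Type*} [NormedRing A] [StarRing A] [CStarRing A] [CompleteSpace A]
    [NormedAlgebra ℂ A] [StarModule ℂ A]
    (N : ℕ) (hN : 2 ≤ N) (s : Fin N → A) (p : ℕ → A)
    (hp0 : p 0 = 1)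
    (hproj : ∀ k : ℕ, IsSelfAdjoint (p k) ∧ p k * p k = p k)
    (hA1 : ∀ (k : ℕ), 1 ≤ k → ∀ i : Fin k → Fin N,
      star ((List.ofFn fun t => s (i t)).prod) * (List.ofFn fun t => s (i t)).prod = p k)
    (hA2 : ∑ i : Fin N, s i * star (s i) = 1)
    (k : ℕ) (hk : 1 ≤ k) :
    closure ((TwoSidedIdeal.span {(1 : A) - p k} : TwoSidedIdeal A) : Set A)
      = closure ((TwoSidedIdeal.span {(1 : A) - p 1} : TwoSidedIdeal A) : Set A) := by
  have : NeZero N := ⟨by omega⟩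
  rw [stmt10_general s p (hproj 1).2 hA1 hk]
end

section
/- Under axioms (A1) and (A2), assume additionally that A equals the smallest closed *-subalgebra of A containing s_0,…,s_{N−1}, and let J be the smallest closed two-sided ideal of A containing e − p_1. If the only closed two-sided ideals of A containing J are J and A itself (i.e. the quotient of A by J is simple), then every closed two-sided ideal of A other than A itself is contained in J. -/
/-!
The projections `p k` almost commute with the generators: `p k * s j = s j * p (k + 1)`. Since `p k`
annihilates `1 - p 1` for `k ≥ 1`, it follows that `p k * c → 0` for every `c` in the ideal `J`
generated by `1 - p 1`. On the other hand `p k = ∑ j, s j * p (k + 1) * star (s j)`, so an ideal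
containing some `p k` contains `1`.

Hence `I + J` is not dense when `I` is closed and proper: if `x + y` is at distance less than `1`
from `1`, with `x ∈ I` and `y ∈ J`, then `p k` is eventually at distance less than `1` from
`p k * x ∈ I`, and an idempotent that close to a closed ideal belongs to it. By simplicity of the
quotient, the closure of `I + J` is then that of `J`, which therefore contains `I`.
-/

open Filter Topology TwoSidedIdeal

section Projections

variable {A : Type*} [NonUnitalNormedRing A] [StarRing A] [CStarRing A]

theorem mul_star_mul_self_of_isIdempotentElem {v : A} (hv : IsIdempotentElem (star v * v)) :
    v * (star v * v) = v := by
  rw [← sub_eq_zero, ← CStarRing.star_mul_self_eq_zero_iff]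
  calc star (v * (star v * v) - v) * (v * (star v * v) - v)
      = star v * v * (star v * v) * (star v * v) - star v * v * (star v * v)
          - (star v * v * (star v * v) - star v * v) := by
        simp only [star_sub, star_mul, star_star]
        noncomm_ring
    _ = 0 := by simp only [hv.eq, sub_self]

theorem mul_eq_mul_conj_of_isStarProjection {p v : A} (hp : IsStarProjection p)
    (hv : IsIdempotentElem (star v * v)) (hpv : IsIdempotentElem (star v * p * v)) :
    p * v = v * (star v * p * v) := by
  set q := star v * p * v with hq
  have hq_star : star q = q := (hp.isSelfAdjoint.conjugate' v).star_eq
  have hq_mul : q * (star v * v) = q := by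
    rw [hq, mul_assoc, mul_star_mul_self_of_isIdempotentElem hv]
  rw [← sub_eq_zero, ← CStarRing.star_mul_self_eq_zero_iff]
  calc star (p * v - v * q) * (p * v - v * q)
      = star v * (p * p) * v - q * q - q * q + q * (star v * v) * q := by
        rw [star_sub, star_mul, star_mul, hq_star, hp.isSelfAdjoint.star_eq, hq]
        noncomm_ring
    _ = 0 := by
        rw [hq_mul, hp.isIdempotentElem.eq, hpv.eq, ← hq]
        abel

end Projections

section ClosedIdeals

instance isTwoSided_closure {A : Type*} [Ring A] [TopologicalSpace A] [IsTopologicalRing A]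
    (I : Ideal A) [I.IsTwoSided] : I.closure.IsTwoSided where
  mul_mem_of_left b ha :=
    map_mem_closure (f := (· * b)) (continuous_mul_const b) ha fun _ hx ↦ I.mul_mem_right b hx

theorem mem_of_isIdempotentElem_of_norm_sub_lt_one {A : Type*} [SeminormedRing A] {p y : A}
    (hp : IsIdempotentElem p) {I : TwoSidedIdeal A} (hI : IsClosed (I : Set A)) (hy : y ∈ I)
    (hpy : ‖p - y‖ < 1) : p ∈ I := by
  have hmod : I.ringCon p (p - y) := by rwa [I.rel_iff, sub_sub_cancel]
  have hpow (n : ℕ) : p - (p - y) ^ (n + 1) ∈ I := by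
    rw [← I.rel_iff]
    have hmod_pow : I.ringCon (p ^ (n + 1)) ((p - y) ^ (n + 1)) := I.ringCon.pow (n + 1) hmod
    rwa [hp.pow_succ_eq] at hmod_pow
  have hlim : Tendsto (fun n ↦ p - (p - y) ^ (n + 1)) atTop (𝓝 p) := by
    simpa using ((tendsto_pow_atTop_nhds_zero_of_norm_lt_one hpy).comp
      (tendsto_add_atTop_nat 1)).const_sub p
  exact hI.mem_of_tendsto hlim (.of_forall hpow)

theorem mul_mem_of_topologicalClosure_adjoin_eq_top {R A : Type*} [CommSemiring R] [StarRing R]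
    [Semiring A] [StarRing A] [Algebra R A] [StarModule R A] [TopologicalSpace A]
    [IsSemitopologicalSemiring A] [ContinuousStar A] [ContinuousConstSMul R A] {S : Set A}
    (hS : (NonUnitalStarAlgebra.adjoin R S).topologicalClosure = ⊤) {V : Submodule R A}
    (hV : IsClosed (V : Set A)) (hmul : ∀ a ∈ S, ∀ c ∈ V, a * c ∈ V)
    (hstar : ∀ a ∈ S, ∀ c ∈ V, star a * c ∈ V) (a : A) {c : A} (hc : c ∈ V) : a * c ∈ V := by
  have hadjoin : ∀ a ∈ NonUnitalAlgebra.adjoin R (S ∪ star S), ∀ c ∈ V, a * c ∈ V := by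
    intro a ha
    induction ha using NonUnitalAlgebra.adjoin_induction with
    | mem a ha =>
      obtain ha | ha := ha
      · exact hmul a ha
      · simpa only [star_star] using hstar (star a) ha
    | add a b _ _ iha ihb =>
      intro c hc
      simpa only [add_mul] using V.add_mem (iha c hc) (ihb c hc)
    | zero => simp
    | mul a b _ _ iha ihb =>
      intro c hc
      simpa only [mul_assoc] using iha _ (ihb c hc)
    | smul r a _ iha =>
      intro c hc
      simpa only [smul_mul_assoc] using V.smul_mem r (iha c hc)
  have ha : a ∈ (NonUnitalStarAlgebra.adjoin R S).topologicalClosure := hS ▸ trivial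
  exact closure_minimal (fun b hb ↦ hadjoin b hb c hc) (hV.preimage (continuous_mul_const c)) ha

end ClosedIdeals

section AsymptoticAnnihilator

variable {ι R A : Type*} [CommSemiring R] {l : Filter ι} {p : ι → A} {c : A}

section Topological

variable [Semiring A] [Algebra R A] [TopologicalSpace A] [IsSemitopologicalSemiring A]
  [ContinuousConstSMul R A]

variable (R) in
/-- The asymptotic right annihilator of a family `p` along a filter `l`: the `R`-submodule of those
`c` with `p k * c → 0`. For the projections of a homogeneous Cuntz family generating `A` it is
a two-sided ideal, and it contains the one generated by `1 - p 1`. -/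
def asymptoticAnnihilator (p : ι → A) (l : Filter ι) : Submodule R A where
  carrier := {c | Tendsto (fun k ↦ p k * c) l (𝓝 0)}
  zero_mem' := by simpa using tendsto_const_nhds
  add_mem' ha hb := by simpa [mul_add] using ha.add hb
  smul_mem' r c hc := by simpa using hc.const_smul r

theorem mem_asymptoticAnnihilator :
    c ∈ asymptoticAnnihilator R p l ↔ Tendsto (fun k ↦ p k * c) l (𝓝 0) :=
  Iff.rfl

theorem mul_mem_asymptoticAnnihilator_right (hc : c ∈ asymptoticAnnihilator R p l) (a : A) :
    c * a ∈ asymptoticAnnihilator R p l := by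
  rw [mem_asymptoticAnnihilator] at hc ⊢
  simpa [mul_assoc] using hc.mul_const a

theorem mul_mem_asymptoticAnnihilator_left {a : A} {f : ι → ι} (hf : Tendsto f l l)
    (ha : ∀ᶠ k in l, p k * a = a * p (f k)) (hc : c ∈ asymptoticAnnihilator R p l) :
    a * c ∈ asymptoticAnnihilator R p l := by
  rw [mem_asymptoticAnnihilator] at hc ⊢
  have hlim : Tendsto (fun k ↦ a * (p (f k) * c)) l (𝓝 0) := by
    simpa using (hc.comp hf).const_mul a
  refine hlim.congr' (ha.mono fun k hk ↦ ?_)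
  rw [← mul_assoc, ← hk, mul_assoc]

end Topological

theorem isClosed_asymptoticAnnihilator [SeminormedRing A] [Algebra R A] [ContinuousConstSMul R A]
    {C : NNReal} (hp : ∀ k, ‖p k‖₊ ≤ C) :
    IsClosed (asymptoticAnnihilator R p l : Set A) := by
  have hLip (k : ι) : LipschitzWith C (p k * ·) :=
    AddMonoidHomClass.lipschitz_of_bound_nnnorm (AddMonoidHom.mulLeft (p k)) C fun c ↦
      (nnnorm_mul_le _ _).trans (by gcongr; exact hp k)
  exact (LipschitzWith.uniformEquicontinuous _ C hLip).equicontinuous.isClosed_setOfPred_tendsto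
    continuous_const

end AsymptoticAnnihilator

/-- Axioms (A1) and (A2): the initial projection of the product of `s` over a word depends only on
the length of the word, and the final projections of the `s i` sum to `1`. Words are lists, so that
the empty word yields the convention `p 0 = 1`. -/
structure IsHomogeneousCuntzFamily {ι A : Type*} [Fintype ι] [Semiring A] [StarRing A]
    (s : ι → A) (p : ℕ → A) : Prop where
  isStarProjection (k : ℕ) : IsStarProjection (p k)
  star_prod_mul_prod (w : List ι) : star (w.map s).prod * (w.map s).prod = p w.length
  sum_mul_star : ∑ i, s i * star (s i) = 1

namespace IsHomogeneousCuntzFamily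

variable {ι A : Type*} [Fintype ι] {s : ι → A} {p : ℕ → A}

section Algebraic

variable [Semiring A] [StarRing A]

theorem of_ofFn (hp0 : p 0 = 1) (hproj : ∀ k, IsStarProjection (p k))
    (hword : ∀ k, 1 ≤ k → ∀ i : Fin k → ι,
      star (List.ofFn fun t ↦ s (i t)).prod * (List.ofFn fun t ↦ s (i t)).prod = p k)
    (hsum : ∑ i, s i * star (s i) = 1) : IsHomogeneousCuntzFamily s p where
  isStarProjection := hproj
  star_prod_mul_prod w := by
    obtain rfl | hw := eq_or_ne w []
    · simp [hp0]
    · have hofFn : (List.ofFn fun t ↦ s (w.get t)) = w.map s := List.ofFn_getElem_eq_map w s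
      simpa only [hofFn] using hword w.length (List.length_pos_iff.mpr hw) w.get
  sum_mul_star := hsum

variable (h : IsHomogeneousCuntzFamily s p)
include h

theorem proj_zero : p 0 = 1 := by
  simpa using (h.star_prod_mul_prod []).symm

theorem star_mul_self (j : ι) : star (s j) * s j = p 1 := by
  simpa using h.star_prod_mul_prod [j]

theorem isIdempotentElem_star_mul_self (j : ι) : IsIdempotentElem (star (s j) * s j) :=
  h.star_mul_self j ▸ (h.isStarProjection 1).isIdempotentElem

theorem star_mul_proj_mul (k : ℕ) (j : ι) : star (s j) * p k * s j = p (k + 1) := by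
  have hk := h.star_prod_mul_prod (List.replicate k j)
  have hk' := h.star_prod_mul_prod (List.replicate k j ++ [j])
  simp only [List.map_append, List.prod_append, List.map_singleton, List.prod_singleton, star_mul,
    List.length_append, List.length_replicate, List.length_singleton] at hk hk'
  rw [← hk, ← hk']
  simp only [mul_assoc]

end Algebraic

section CStar

variable [NormedRing A] [StarRing A] [CStarRing A] (h : IsHomogeneousCuntzFamily s p)
include h

theorem proj_mul (k : ℕ) (j : ι) : p k * s j = s j * p (k + 1) := by
  rw [← h.star_mul_proj_mul k j]
  refine mul_eq_mul_conj_of_isStarProjection (h.isStarProjection k)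
    (h.isIdempotentElem_star_mul_self j) ?_
  rw [h.star_mul_proj_mul]
  exact (h.isStarProjection (k + 1)).isIdempotentElem

theorem proj_succ_mul_star (k : ℕ) (j : ι) : p (k + 1) * star (s j) = star (s j) * p k := by
  simpa only [star_mul, (h.isStarProjection _).isSelfAdjoint.star_eq] using
    congrArg star (h.proj_mul k j).symm

theorem proj_eq_sum (k : ℕ) : p k = ∑ j, s j * p (k + 1) * star (s j) := by
  simp_rw [← h.proj_mul, mul_assoc, ← Finset.mul_sum, h.sum_mul_star, mul_one]

theorem proj_succ_mul_one_sub (k : ℕ) : p (k + 1) * (1 - p 1) = 0 := by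
  obtain hι | ⟨⟨j⟩⟩ := isEmpty_or_nonempty ι
  · have : Subsingleton A := subsingleton_of_zero_eq_one (by simpa using h.sum_mul_star)
    exact Subsingleton.elim _ _
  · rw [mul_sub, mul_one, sub_eq_zero, ← h.star_mul_proj_mul k j, ← h.star_mul_self j,
      mul_assoc _ (s j), mul_star_mul_self_of_isIdempotentElem (h.isIdempotentElem_star_mul_self j)]

theorem one_mem_of_proj_mem {I : TwoSidedIdeal A} {k : ℕ} (hk : p k ∈ I) : 1 ∈ I := by
  induction k with
  | zero => exact h.proj_zero ▸ hk
  | succ k ih =>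
    refine ih ?_
    rw [h.proj_eq_sum]
    exact sum_mem fun j _ ↦ I.mul_mem_right _ _ (I.mul_mem_left _ _ hk)

variable {R : Type*} [CommSemiring R] [StarRing R] [Algebra R A] [StarModule R A]
  [ContinuousConstSMul R A]
  (hgen : (NonUnitalStarAlgebra.adjoin R (Set.range s)).topologicalClosure = ⊤)
include hgen

theorem mul_mem_asymptoticAnnihilator (a : A) {c : A}
    (hc : c ∈ asymptoticAnnihilator R p atTop) : a * c ∈ asymptoticAnnihilator R p atTop := by
  have hclosed : IsClosed (asymptoticAnnihilator R p atTop : Set A) :=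
    isClosed_asymptoticAnnihilator (C := 1) fun k ↦ (h.isStarProjection k).norm_le
  refine mul_mem_of_topologicalClosure_adjoin_eq_top hgen hclosed ?_ ?_ a hc
  · rintro _ ⟨j, rfl⟩ c hc
    exact mul_mem_asymptoticAnnihilator_left (tendsto_add_atTop_nat 1)
      (.of_forall fun k ↦ h.proj_mul k j) hc
  · rintro _ ⟨j, rfl⟩ c hc
    refine mul_mem_asymptoticAnnihilator_left (tendsto_sub_atTop_nat 1) ?_ hc
    filter_upwards [eventually_ge_atTop 1] with k hk
    simpa only [Nat.sub_add_cancel hk] using h.proj_succ_mul_star (k - 1) j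

theorem tendsto_proj_mul_of_mem_span {c : A} (hc : c ∈ span {1 - p 1}) :
    Tendsto (fun k ↦ p k * c) atTop (𝓝 0) := by
  let V := asymptoticAnnihilator R p atTop
  let K : TwoSidedIdeal A := .mk' V V.zero_mem V.add_mem
    (fun hx ↦ by simpa using h.mul_mem_asymptoticAnnihilator hgen (-1) hx)
    (fun hx ↦ h.mul_mem_asymptoticAnnihilator hgen _ hx)
    (fun hx ↦ mul_mem_asymptoticAnnihilator_right hx _)
  have hmem : 1 - p 1 ∈ V := by
    refine tendsto_const_nhds.congr' ?_
    filter_upwards [eventually_ge_atTop 1] with k hk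
    simpa only [Nat.sub_add_cancel hk] using (h.proj_succ_mul_one_sub (k - 1)).symm
  have hle : span {1 - p 1} ≤ K := by simpa [K, span_le] using hmem
  exact (mem_mk' ..).mp (hle hc)

theorem one_mem_of_one_mem_closure_sup {I : TwoSidedIdeal A} (hI : IsClosed (I : Set A))
    (hone : 1 ∈ closure ((I ⊔ span {1 - p 1} : TwoSidedIdeal A) : Set A)) : 1 ∈ I := by
  obtain ⟨_, hsup, hdist⟩ := Metric.mem_closure_iff.mp hone 1 one_pos
  obtain ⟨x, hx, y, hy, rfl⟩ := mem_sup.mp hsup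
  rw [dist_eq_norm] at hdist
  have hlim : Tendsto (fun k ↦ ‖1 - (x + y)‖ + ‖p k * y‖) atTop (𝓝 ‖1 - (x + y)‖) := by
    simpa using (h.tendsto_proj_mul_of_mem_span hgen hy).norm.const_add ‖1 - (x + y)‖
  obtain ⟨k, hk⟩ := (hlim.eventually_lt_const hdist).exists
  have hclose : ‖p k - p k * x‖ < 1 :=
    calc ‖p k - p k * x‖
        = ‖p k * (1 - (x + y)) + p k * y‖ := by congr 1; noncomm_ring
      _ ≤ ‖p k‖ * ‖1 - (x + y)‖ + ‖p k * y‖ :=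
        (norm_add_le _ _).trans (by gcongr; exact norm_mul_le _ _)
      _ ≤ ‖1 - (x + y)‖ + ‖p k * y‖ := by
        gcongr
        exact mul_le_of_le_one_left (norm_nonneg _) (h.isStarProjection k).norm_le
      _ < 1 := hk
  exact h.one_mem_of_proj_mem <| mem_of_isIdempotentElem_of_norm_sub_lt_one
    (h.isStarProjection k).isIdempotentElem hI (I.mul_mem_left _ _ hx) hclose

end CStar

end IsHomogeneousCuntzFamily

theorem stmt12_general {ι R A : Type*} [Fintype ι] [CommSemiring R] [StarRing R] [NormedRing A]
    [StarRing A] [CStarRing A] [Algebra R A] [StarModule R A] [ContinuousConstSMul R A]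
    {s : ι → A} {p : ℕ → A} (h : IsHomogeneousCuntzFamily s p)
    (hgen : (NonUnitalStarAlgebra.adjoin R (Set.range s)).topologicalClosure = ⊤)
    (hsimple : ∀ K : TwoSidedIdeal A, IsClosed (K : Set A) →
      closure (span {1 - p 1} : Set A) ⊆ K →
        (K : Set A) = closure (span {1 - p 1} : Set A) ∨ (K : Set A) = Set.univ)
    (I : TwoSidedIdeal A) (hI : IsClosed (I : Set A)) (hI' : (I : Set A) ≠ Set.univ) :
    (I : Set A) ⊆ closure (span {1 - p 1} : Set A) := by
  let K : TwoSidedIdeal A := (I ⊔ span {1 - p 1}).asIdeal.closure.toTwoSided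
  have hK : (K : Set A) = closure (I ⊔ span {1 - p 1} : TwoSidedIdeal A) := by simp [K]
  have hJK : closure (span {1 - p 1} : Set A) ⊆ K :=
    hK ▸ closure_mono (le_sup_right : span {1 - p 1} ≤ I ⊔ span {1 - p 1})
  obtain hKJ | hKtop := hsimple K (hK ▸ isClosed_closure) hJK
  · rw [← hKJ, hK]
    exact subset_closure.trans' (le_sup_left : I ≤ I ⊔ span {1 - p 1})
  · have hone : 1 ∈ I := h.one_mem_of_one_mem_closure_sup hgen hI (by rw [← hK, hKtop]; trivial)
    exact absurd (by rw [I.one_mem_iff.mp hone, coe_top]) hI'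

/-- Under axioms (A1), (A2), assume `A` is the smallest closed
*-subalgebra of itself containing `s 0, …, s (N-1)`, and let `J` be the smallest closed
two-sided ideal containing `1 - p 1`. If the only closed two-sided ideals of `A` containing
`J` are `J` and `A` itself, then every closed two-sided ideal of `A` other than `A` itself is
contained in `J`. -/
theorem stmt12 {A : Type*} [NormedRing A] [StarRing A] [CStarRing A] [CompleteSpace A]
    [NormedAlgebra ℂ A] [StarModule ℂ A]
    (N : ℕ) (hN : 2 ≤ N) (s : Fin N → A) (p : ℕ → A)
    (hp0 : p 0 = 1)
    (hproj : ∀ k : ℕ, IsSelfAdjoint (p k) ∧ p k * p k = p k)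
    (hA1 : ∀ (k : ℕ), 1 ≤ k → ∀ i : Fin k → Fin N,
      star ((List.ofFn fun t => s (i t)).prod) * (List.ofFn fun t => s (i t)).prod = p k)
    (hA2 : ∑ i : Fin N, s i * star (s i) = 1)
    (hgen : (NonUnitalStarAlgebra.adjoin ℂ (Set.range s)).topologicalClosure = ⊤)
    (hsimple : ∀ I : TwoSidedIdeal A, IsClosed (I : Set A) →
      closure ((TwoSidedIdeal.span {(1 : A) - p 1} : TwoSidedIdeal A) : Set A) ⊆ (I : Set A) →
      (I : Set A) = closure ((TwoSidedIdeal.span {(1 : A) - p 1} : TwoSidedIdeal A) : Set A) ∨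
      (I : Set A) = Set.univ)
    (I : TwoSidedIdeal A) (hIclosed : IsClosed (I : Set A))
    (hIproper : (I : Set A) ≠ Set.univ) :
    (I : Set A) ⊆ closure ((TwoSidedIdeal.span {(1 : A) - p 1} : TwoSidedIdeal A) : Set A) :=
  stmt12_general (.of_ofFn hp0 (fun k ↦ ⟨(hproj k).2, (hproj k).1⟩) hA1 hA2) hgen hsimple I
    hIclosed hIproper
end

section
/- For every k ≥ 1 and all multi-indices i, j ∈ Ω^k, the operators R_{N^n}P_{N^n}S_iS_j^*P_{N^n}R_{N^n} converge strongly (i.e. pointwise on ℓ²(ℤ⁺)) as n → ∞ to the operator S_{î}S_{ĵ}^*, where î := (N−1−i_1,…,N−1−i_k) denotes the dual multi-index of i = (i_1,…,i_k). -/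
/-!
The reversal `l ↦ MN - 1 - l` of `{0, …, MN - 1}` reverses the order of the `M` blocks of length
`N` and the order inside each block, which is the operator identity `R_{MN} S_i = S_{N-1-i} R_M`.
Iterating it gives `R_{MN^k} S_i = S_î R_M` for a multi-index `i` of length `k`. Since `R_n` is
self-adjoint with `R_n² = P_n`, the operators of the theorem are eventually equal to
`S_î P_{N^(n-k)} S_ĵ*`, and `P_n → 1` strongly.
-/

open Filter Topology

section General

variable {𝕜 H : Type*} [RCLike 𝕜] [NormedAddCommGroup H] [InnerProductSpace 𝕜 H]

section HilbertBasis

variable {ι : Type*} (e : HilbertBasis ι 𝕜 H)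

lemma ext_hilbertBasis {F : Type*} [AddCommMonoid F] [Module 𝕜 F] [TopologicalSpace F] [T2Space F]
    {A B : H →L[𝕜] F} (h : ∀ a, A (e a) = B (e a)) : A = B :=
  ContinuousLinearMap.ext_on (Submodule.dense_iff_topologicalClosure_eq_top.mpr e.dense_span)
    (Set.forall_mem_range.mpr h)

lemma isSelfAdjoint_of_hilbertBasis [CompleteSpace H] {A : H →L[𝕜] H}
    (h : ∀ a b, inner 𝕜 (A (e a)) (e b) = inner 𝕜 (e a) (A (e b))) : IsSelfAdjoint A := by
  refine ext_hilbertBasis e fun b => e.repr.injective ?_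
  ext a
  rw [e.repr_apply_apply, e.repr_apply_apply, ContinuousLinearMap.star_eq_adjoint,
    ContinuousLinearMap.adjoint_inner_right, h]

end HilbertBasis

/-- `P` is the orthogonal projection `P_n` onto the span of the first `n` basis vectors,
described by its action on the basis. -/
def IsTruncation (e : HilbertBasis ℕ 𝕜 H) (n : ℕ) (P : H →L[𝕜] H) : Prop :=
  ∀ k, P (e k) = if k < n then e k else 0

/-- `R` is the operator `R_n` that reverses the order of the first `n` basis vectors and kills
the others. -/
def IsReflection (e : HilbertBasis ℕ 𝕜 H) (n : ℕ) (R : H →L[𝕜] H) : Prop :=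
  ∀ k, R (e k) = if k < n then e (n - 1 - k) else 0

/-- `S` is the family of Cuntz isometries in which `S i` appends the least significant base-`N`
digit `i` to the index of a basis vector. -/
def IsCuntzFamily_s14 (e : HilbertBasis ℕ 𝕜 H) {N : ℕ} (S : Fin N → H →L[𝕜] H) : Prop :=
  ∀ i r, S i (e r) = e (r * N + (i : ℕ))

variable {e : HilbertBasis ℕ 𝕜 H}

lemma IsTruncation.apply_eq_sum {n : ℕ} {P : H →L[𝕜] H} (hP : IsTruncation e n P) (x : H) :
    P x = ∑ k ∈ Finset.range n, e.repr x k • e k := by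
  have h_image : HasSum (fun k => P (e.repr x k • e k)) (P x) := (e.hasSum_repr x).mapL P
  have h_support : ∀ k ∉ Finset.range n, P (e.repr x k • e k) = 0 := fun k hk => by
    rw [map_smul, hP, if_neg (Finset.mem_range.not.mp hk), smul_zero]
  rw [h_image.unique (hasSum_sum_of_ne_finset_zero h_support)]
  refine Finset.sum_congr rfl fun k hk => ?_
  rw [map_smul, hP, if_pos (Finset.mem_range.mp hk)]

lemma IsTruncation.tendsto_apply {P : ℕ → H →L[𝕜] H} (hP : ∀ n, IsTruncation e n (P n)) (x : H) :
    Tendsto (fun n => P n x) atTop (𝓝 x) := by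
  simpa only [(hP _).apply_eq_sum] using (e.hasSum_repr x).tendsto_sum_nat

namespace IsReflection

variable {n : ℕ} {P R : H →L[𝕜] H}

lemma isSelfAdjoint [CompleteSpace H] (hR : IsReflection e n R) : IsSelfAdjoint R := by
  refine isSelfAdjoint_of_hilbertBasis e fun a b => ?_
  have h_inner : ∀ c d, inner 𝕜 (e c) (e d) = if c = d then (1 : 𝕜) else 0 :=
    orthonormal_iff_ite.mp e.orthonormal
  have h_symm (ha : a < n) (hb : b < n) : n - 1 - a = b ↔ a = n - 1 - b := by omega
  rw [hR, hR]
  split_ifs with ha hb hb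
  · simp only [h_inner, h_symm ha hb]
  · rw [h_inner, if_neg (by omega), inner_zero_right]
  · rw [h_inner, if_neg (by omega), inner_zero_left]
  · rw [inner_zero_left, inner_zero_right]

lemma mul_truncation (hR : IsReflection e n R) (hP : IsTruncation e n P) : R * P = R := by
  refine ext_hilbertBasis e fun k => ?_
  rw [mul_apply_eq_comp, hP]
  split_ifs with hk
  · rfl
  · rw [map_zero, hR, if_neg hk]

lemma truncation_mul (hR : IsReflection e n R) (hP : IsTruncation e n P) : P * R = R := by
  refine ext_hilbertBasis e fun k => ?_
  rw [mul_apply_eq_comp, hR]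
  split_ifs with hk
  · rw [hP, if_pos (by omega)]
  · rw [map_zero]

lemma mul_self (hR : IsReflection e n R) (hP : IsTruncation e n P) : R * R = P := by
  refine ext_hilbertBasis e fun k => ?_
  rw [mul_apply_eq_comp, hR, hP]
  split_ifs with hk
  · rw [hR, if_pos (by omega), Nat.sub_sub_self (by omega)]
  · rw [map_zero]

end IsReflection

lemma sub_one_sub_mul_add {M N r : ℕ} (hr : r < M) (i : Fin N) :
    M * N - 1 - (r * N + i) = (M - 1 - r) * N + i.rev := by
  obtain ⟨d, rfl⟩ := Nat.exists_eq_add_of_lt hr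
  have h_expand : (r + d + 1) * N = r * N + d * N + N := by ring
  have h_quot : r + d + 1 - 1 - r = d := by omega
  rw [h_expand, h_quot, Fin.val_rev]
  omega

namespace IsCuntzFamily_s14

variable {N : ℕ} {S : Fin N → H →L[𝕜] H} {R : ℕ → H →L[𝕜] H}

lemma reflection_mul (hS : IsCuntzFamily_s14 e S) (hR : ∀ n, IsReflection e n (R n)) (M : ℕ)
    (i : Fin N) : R (M * N) * S i = S i.rev * R M := by
  refine ext_hilbertBasis e fun r => ?_
  have h_lt : r * N + i < M * N ↔ r < M := by
    rw [← Nat.div_lt_iff_lt_mul i.pos, Nat.add_comm, Nat.add_mul_div_right _ _ i.pos,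
      Nat.div_eq_of_lt i.isLt, zero_add]
  simp only [mul_apply_eq_comp, hS i r, hR _ _, h_lt]
  split_ifs with hr
  · rw [sub_one_sub_mul_add hr, hS]
  · rw [map_zero]

lemma reflection_mul_prod (hS : IsCuntzFamily_s14 e S) (hR : ∀ n, IsReflection e n (R n)) (M : ℕ)
    {k : ℕ} (i : Fin k → Fin N) :
    R (M * N ^ k) * (List.ofFn fun t => S (i t)).prod =
      (List.ofFn fun t => S (i t).rev).prod * R M := by
  induction k with
  | zero => simp
  | succ k ih =>
    rw [List.ofFn_succ, List.ofFn_succ, List.prod_cons, List.prod_cons, pow_succ, ← mul_assoc M,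
      ← mul_assoc (R _), hS.reflection_mul hR, mul_assoc, ih, mul_assoc]

lemma reflection_conj_prod_mul_star_prod [CompleteSpace H] {P : ℕ → H →L[𝕜] H}
    (hS : IsCuntzFamily_s14 e S) (hP : ∀ n, IsTruncation e n (P n))
    (hR : ∀ n, IsReflection e n (R n)) (M : ℕ) {k : ℕ} (i j : Fin k → Fin N) :
    R (M * N ^ k) * P (M * N ^ k) * (List.ofFn fun t => S (i t)).prod *
        star (List.ofFn fun t => S (j t)).prod * P (M * N ^ k) * R (M * N ^ k) =
      (List.ofFn fun t => S (i t).rev).prod * P M *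
        star (List.ofFn fun t => S (j t).rev).prod := by
  have h_adjoint : star (List.ofFn fun t => S (j t)).prod * R (M * N ^ k) =
      R M * star (List.ofFn fun t => S (j t).rev).prod := by
    simpa only [star_mul, (hR _).isSelfAdjoint.star_eq] using
      congrArg star (hS.reflection_mul_prod hR M j)
  rw [(hR _).mul_truncation (hP _), mul_assoc _ (P _) (R _), (hR _).truncation_mul (hP _),
    mul_assoc _ (star _) (R _), h_adjoint, hS.reflection_mul_prod hR, ← mul_assoc,
    mul_assoc _ (R M) (R M), (hR M).mul_self (hP M)]

end IsCuntzFamily_s14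

theorem stmt14_general [CompleteSpace H] {N : ℕ} (hN : 2 ≤ N) {S : Fin N → H →L[𝕜] H}
    (hS : IsCuntzFamily_s14 e S) {P : ℕ → H →L[𝕜] H} (hP : ∀ n, IsTruncation e n (P n))
    {R : ℕ → H →L[𝕜] H} (hR : ∀ n, IsReflection e n (R n)) {k : ℕ} (i j : Fin k → Fin N) (x : H) :
    Tendsto
      (fun n : ℕ =>
        (R (N ^ n) * P (N ^ n) * (List.ofFn fun t => S (i t)).prod *
          star (List.ofFn fun t => S (j t)).prod * P (N ^ n) * R (N ^ n)) x)
      atTop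
      (𝓝 (((List.ofFn fun t => S (i t).rev).prod *
          star (List.ofFn fun t => S (j t).rev).prod) x)) := by
  set A := (List.ofFn fun t => S (i t).rev).prod
  set B := (List.ofFn fun t => S (j t).rev).prod
  have h_size : Tendsto (fun n => N ^ (n - k)) atTop atTop :=
    (tendsto_pow_atTop_atTop_of_one_lt hN).comp (tendsto_sub_atTop_nat k)
  have h_limit : Tendsto (fun n => (A * P (N ^ (n - k)) * star B) x) atTop
      (𝓝 ((A * star B) x)) :=
    (A.continuous.tendsto _).comp ((IsTruncation.tendsto_apply hP (star B x)).comp h_size)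
  refine h_limit.congr' ?_
  filter_upwards [eventually_ge_atTop k] with n hn
  rw [← hS.reflection_conj_prod_mul_star_prod hP hR, pow_sub_mul_pow N hn]

end General

/-- With `H`, basis `e`, projections `P n`, Cuntz isometries `S i`, and
reflections `R n` (`R n (e k) = e (n-1-k)` for `k < n`, `0` otherwise): for every `k ≥ 1` and
multi-indices `i, j ∈ Ω^k`, the operators `R_{N^n} P_{N^n} S_i S_j* P_{N^n} R_{N^n}` converge
strongly, as `n → ∞`, to `S_î S_ĵ*`, where `î` is the dual multi-index
`(N-1-i₁, …, N-1-i_k)` (realized componentwise by `Fin.rev`). -/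
theorem stmt14 {H : Type*} [NormedAddCommGroup H] [InnerProductSpace ℂ H] [CompleteSpace H]
    (e : HilbertBasis ℕ ℂ H) (N : ℕ) (hN : 2 ≤ N)
    (S : Fin N → H →L[ℂ] H)
    (hS : ∀ (i : Fin N) (r : ℕ), S i (e r) = e (r * N + (i : ℕ)))
    (P : ℕ → H →L[ℂ] H)
    (hP : ∀ n k : ℕ, P n (e k) = if k < n then e k else 0)
    (R : ℕ → H →L[ℂ] H)
    (hR : ∀ n k : ℕ, R n (e k) = if k < n then e (n - 1 - k) else 0)
    (k : ℕ) (hk : 1 ≤ k) (i j : Fin k → Fin N) (x : H) :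
    Filter.Tendsto
      (fun n : ℕ =>
        (R (N ^ n) * P (N ^ n) * (List.ofFn fun t => S (i t)).prod *
          star ((List.ofFn fun t => S (j t)).prod) * P (N ^ n) * R (N ^ n)) x)
      Filter.atTop
      (nhds (((List.ofFn fun t => S (Fin.rev (i t))).prod *
          star ((List.ofFn fun t => S (Fin.rev (j t))).prod)) x)) :=
  stmt14_general hN hS hP hR i j x
end

section
/- The C*-algebra C_N is simple: every closed two-sided ideal of C_N is either {0} or all of C_N. -/
/-- `J` is a closed two-sided ideal of (the C*-subalgebra of operators with carrier) `M`:
`J` is a closed subset of `M` containing `0`, closed under addition and complex scalar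
multiplication, and absorbing under left and right multiplication by elements of `M`. -/
def IsClosedIdealOf {X : Type*} [NonUnitalNormedRing X] [NormedSpace ℂ X]
    (M J : Set X) : Prop :=
  IsClosed J ∧ J ⊆ M ∧ (0 : X) ∈ J ∧
    (∀ x ∈ J, ∀ y ∈ J, x + y ∈ J) ∧
    (∀ (c : ℂ), ∀ x ∈ J, c • x ∈ J) ∧
    (∀ a ∈ M, ∀ x ∈ J, a * x ∈ J ∧ x * a ∈ J)

/-!
Write `Q n` for the projection onto level `n`, the `n`-th summand of `ℓ²(ℤ⁺, ℓ²(ℤ⁺))`, so that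
`Q 0 = Π₁`, and attach to a word `μ = i₁ ⋯ iₖ` the partial isometry `U_μ = Σ_{i₁} ⋯ Σ_{iₖ} Q L`.
If `w` is a polynomial in the `Σᵢ` and their adjoints, the Cuntz relations collapse `U_μ^* w U_ν` to
a scalar multiple `c Q L` as soon as `μ` is long enough. On the other hand every basis vector is the
image under some `U_μ` of a basis vector in an arbitrarily deep level, so each matrix coefficient of
`w` is bounded by the `|c|` of a suitable compression.

Let `x ≠ 0` lie in an ideal `J` of `C_N`, and let `w` approximate `x` to within half of a nonzero
matrix coefficient of `x`. Then `U_μ^* x U_ν ∈ J` is at distance less than `|c|` from `c Q L`, and a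
Neumann series gives `Q L ∈ J`. The identity `Q n = ∑ᵢ Σᵢ Q (n + 1) Σᵢ^*` now brings the projection
down to `Π₁ ∈ J`, whence `J = C_N`.
-/

/-- The smallest closed two-sided ideal of `M` containing `a`; the ideal `C_N` of the paper is
`closedIdealSpan T_N Π₁`. -/
def closedIdealSpan {X : Type*} [NonUnitalNormedRing X] [NormedSpace ℂ X]
    (M : Set X) (a : X) : Set X :=
  ⋂₀ {K : Set X | IsClosedIdealOf M K ∧ a ∈ K}

namespace IsClosedIdealOf

section NonUnital

variable {X : Type*} [NonUnitalNormedRing X] [NormedSpace ℂ X] {M C J : Set X} {x y a b : X}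

protected theorem isClosed (hJ : IsClosedIdealOf M J) : IsClosed J := hJ.1

protected theorem subset (hJ : IsClosedIdealOf M J) : J ⊆ M := hJ.2.1

protected theorem zero_mem (hJ : IsClosedIdealOf M J) : (0 : X) ∈ J := hJ.2.2.1

protected theorem add_mem (hJ : IsClosedIdealOf M J) (hx : x ∈ J) (hy : y ∈ J) : x + y ∈ J :=
  hJ.2.2.2.1 x hx y hy

protected theorem smul_mem (hJ : IsClosedIdealOf M J) (c : ℂ) (hx : x ∈ J) : c • x ∈ J :=
  hJ.2.2.2.2.1 c x hx

protected theorem mul_mem_left (hJ : IsClosedIdealOf M J) (ha : a ∈ M) (hx : x ∈ J) :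
    a * x ∈ J :=
  (hJ.2.2.2.2.2 a ha x hx).1

protected theorem mul_mem_right (hJ : IsClosedIdealOf M J) (hx : x ∈ J) (ha : a ∈ M) :
    x * a ∈ J :=
  (hJ.2.2.2.2.2 a ha x hx).2

protected theorem sub_mem (hJ : IsClosedIdealOf M J) (hx : x ∈ J) (hy : y ∈ J) : x - y ∈ J := by
  rw [sub_eq_add_neg, ← neg_one_smul ℂ y]
  exact hJ.add_mem hx (hJ.smul_mem _ hy)

protected theorem sum_mem {ι : Type*} [Fintype ι] (hJ : IsClosedIdealOf M J) {g : ι → X}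
    (hg : ∀ i, g i ∈ J) : ∑ i, g i ∈ J :=
  Finset.sum_induction g (· ∈ J) (fun _ _ => hJ.add_mem) hJ.zero_mem fun i _ => hg i

/-- Splitting an idempotent as `e = e * e * e` makes up for the fact that an ideal of an ideal of
`M` need not absorb multiplication by `M`. -/
theorem mul_mul_mem_of_isIdempotentElem (hC : IsClosedIdealOf M C) (hJ : IsClosedIdealOf C J)
    {e : X} (he : IsIdempotentElem e) (heJ : e ∈ J) (ha : a ∈ M) (hb : b ∈ M) :
    a * e * b ∈ J := by
  have heC : e ∈ C := hJ.subset heJ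
  have hsplit : a * e * b = a * e * e * (e * b) := by
    simp only [mul_assoc, he.mul_self_mul]
  rw [hsplit]
  exact hJ.mul_mem_right (hJ.mul_mem_left (hC.mul_mem_left ha heC) heJ) (hC.mul_mem_right heC hb)

end NonUnital

open Filter Topology in
/-- With `d = e - y` one has `e - d ^ (n + 2) = y + d * (e - d ^ (n + 1))`, so the partial sums
of the Neumann series for `e` stay in `J`. -/
theorem mem_of_norm_sub_lt_one {X : Type*} [NormedRing X] [NormedSpace ℂ X] {C J : Set X}
    (hJ : IsClosedIdealOf C J) {e y : X} (hy : y ∈ J) (hsub : e - y ∈ C)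
    (he : IsIdempotentElem e) (hye : y * e = y) (hlt : ‖e - y‖ < 1) : e ∈ J := by
  set d := e - y with hd
  have hde : d * e = d := by rw [hd, sub_mul, he.eq, hye]
  have hpow (n : ℕ) : e - d ^ (n + 1) ∈ J := by
    induction n with
    | zero => simpa [hd] using hy
    | succ n ih =>
      have hrec : e - d ^ (n + 1 + 1) = y + d * (e - d ^ (n + 1)) := by
        rw [mul_sub, hde, ← pow_succ', hd]
        abel
      rw [hrec]
      exact hJ.add_mem hy (hJ.mul_mem_left hsub ih)
  have hlim : Tendsto (fun n : ℕ => e - d ^ (n + 1)) atTop (𝓝 e) := by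
    simpa using tendsto_const_nhds.sub
      ((tendsto_pow_atTop_nhds_zero_of_norm_lt_one hlt).comp (tendsto_add_atTop_nat 1))
  exact hJ.isClosed.mem_of_tendsto hlim (Eventually.of_forall hpow)

end IsClosedIdealOf

theorem mem_closedIdealSpan_self {X : Type*} [NonUnitalNormedRing X] [NormedSpace ℂ X]
    (M : Set X) (a : X) : a ∈ closedIdealSpan M a :=
  fun _ hK => hK.2

/-- The hypothesis `IsClosedIdealOf M M` says that `M` is a closed subalgebra. -/
theorem isClosedIdealOf_closedIdealSpan {X : Type*} [NonUnitalNormedRing X] [NormedSpace ℂ X]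
    {M : Set X} {a : X} (hM : IsClosedIdealOf M M) (ha : a ∈ M) :
    IsClosedIdealOf M (closedIdealSpan M a) :=
  ⟨isClosed_sInter fun _ hK => hK.1.isClosed, fun _ hx => hx M ⟨hM, ha⟩,
    fun _ hK => hK.1.zero_mem,
    fun _ hx _ hy K hK => hK.1.add_mem (hx K hK) (hy K hK),
    fun c _ hx K hK => hK.1.smul_mem c (hx K hK),
    fun _ hb _ hx => ⟨fun K hK => hK.1.mul_mem_left hb (hx K hK),
      fun K hK => hK.1.mul_mem_right (hx K hK) hb⟩⟩

theorem closedIdealSpan_subset {X : Type*} [NormedRing X] [NormedAlgebra ℂ X] {M C J : Set X}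
    {a : X} (hM : IsClosedIdealOf M M) (h1 : (1 : X) ∈ M) (ha : a ∈ M) (hJ : IsClosedIdealOf C J)
    (hJa : ∀ t ∈ M, ∀ s ∈ M, t * a * s ∈ J) :
    closedIdealSpan M a ⊆ J := by
  let K : Set X := {x | x ∈ M ∧ ∀ t ∈ M, ∀ s ∈ M, t * x * s ∈ J}
  have hK : IsClosedIdealOf M K := by
    refine ⟨?_, fun x hx => hx.1, ⟨hM.zero_mem, fun t _ s _ => by simpa using hJ.zero_mem⟩,
      fun x hx y hy => ⟨hM.add_mem hx.1 hy.1, fun t ht s hs => ?_⟩,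
      fun c x hx => ⟨hM.smul_mem c hx.1, fun t ht s hs => ?_⟩,
      fun b hb x hx => ⟨⟨hM.mul_mem_left hb hx.1, fun t ht s hs => ?_⟩,
        ⟨hM.mul_mem_right hx.1 hb, fun t ht s hs => ?_⟩⟩⟩
    · have hKeq : K = M ∩ ⋂ t ∈ M, ⋂ s ∈ M, (fun x => t * x * s) ⁻¹' J := by
        ext x
        simp [K]
      rw [hKeq]
      exact hM.isClosed.inter <| isClosed_biInter fun t _ => isClosed_biInter fun s _ =>
        hJ.isClosed.preimage (by fun_prop)
    · rw [mul_add, add_mul]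
      exact hJ.add_mem (hx.2 t ht s hs) (hy.2 t ht s hs)
    · rw [mul_smul_comm, smul_mul_assoc]
      exact hJ.smul_mem c (hx.2 t ht s hs)
    · rw [← mul_assoc]
      exact hx.2 (t * b) (hM.mul_mem_left ht hb) s hs
    · rw [← mul_assoc, mul_assoc]
      exact hx.2 t ht (b * s) (hM.mul_mem_left hb hs)
  intro x hx
  have hxK : x ∈ K := hx K ⟨hK, ha, hJa⟩
  simpa using hxK.2 1 h1 1 h1

section GeneratedAlgebra

variable {ι B : Type*} [NonUnitalCStarAlgebra B]

/-- The closed *-algebra generated by a family of operators; the paper's `T_N` is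
`generatedAlgebra Σ`. -/
noncomputable abbrev generatedAlgebra (S : ι → B) : NonUnitalStarSubalgebra ℂ B :=
  (NonUnitalStarAlgebra.adjoin ℂ (Set.range S)).topologicalClosure

theorem mem_generatedAlgebra (S : ι → B) (i : ι) : S i ∈ generatedAlgebra S :=
  NonUnitalStarSubalgebra.le_topologicalClosure _
    (NonUnitalStarAlgebra.subset_adjoin ℂ _ (Set.mem_range_self i))

theorem isClosedIdealOf_generatedAlgebra (S : ι → B) :
    IsClosedIdealOf (generatedAlgebra S : Set B) (generatedAlgebra S) :=
  ⟨NonUnitalStarSubalgebra.isClosed_topologicalClosure _, subset_rfl, zero_mem _,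
    fun _ hx _ hy => add_mem hx hy, fun c _ hx => SMulMemClass.smul_mem c hx,
    fun _ ha _ hx => ⟨mul_mem ha hx, mul_mem hx ha⟩⟩

end GeneratedAlgebra

/-- The relations between the operators `S i = Σᵢ` and the projections `Q n` onto the `n`-th
coordinate of `ℓ²(ℤ⁺, ℓ²(ℤ⁺))`, so that `Q 0 = Π₁`. -/
structure IsCuntzShift {ι B : Type*} [Fintype ι] [Ring B] [StarRing B]
    (S : ι → B) (Q : ℕ → B) : Prop where
  star_mul_self (i : ι) : star (S i) * S i = 1 - Q 0
  star_mul_of_ne {i j : ι} (hij : i ≠ j) : star (S i) * S j = 0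
  sum_mul_star : ∑ i, S i * star (S i) = 1
  level_mul (n : ℕ) (i : ι) : Q n * S i = S i * Q (n + 1)
  level_zero_mul_succ (n : ℕ) : Q 0 * Q (n + 1) = 0

/-- The partial isometry `S i₁ * ⋯ * S iₖ * Q L` attached to the word `μ = i₁ ⋯ iₖ`. It vanishes
for `k > L`, and otherwise maps level `L` into level `L - k`. -/
def levelWord {ι B : Type*} [Mul B] (S : ι → B) (Q : ℕ → B) (L : ℕ) : List ι → B
  | [] => Q L
  | i :: μ => S i * levelWord S Q L μ

/-- The operators all of whose compressions by `levelWord S Q L μ` and `levelWord S Q L ν` are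
scalar multiples of `Q L`, once `μ` is long enough. -/
def eventuallyScalar {ι : Type*} (R : Type*) {B : Type*} [CommSemiring R] [Ring B] [StarRing B]
    [Algebra R B] (S : ι → B) (Q : ℕ → B) : Submodule R B where
  carrier := {w | ∃ d, ∀ L μ ν, d ≤ μ.length →
    star (levelWord S Q L μ) * w * levelWord S Q L ν ∈ Submodule.span R {Q L}}
  zero_mem' := ⟨0, fun L μ ν _ => by simp⟩
  add_mem' := by
    rintro v w ⟨d, hv⟩ ⟨d', hw⟩
    refine ⟨max d d', fun L μ ν hμ => ?_⟩
    rw [mul_add, add_mul]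
    exact add_mem (hv L μ ν (le_of_max_le_left hμ)) (hw L μ ν (le_of_max_le_right hμ))
  smul_mem' := by
    rintro c w ⟨d, hw⟩
    refine ⟨d, fun L μ ν hμ => ?_⟩
    rw [mul_smul_comm, smul_mul_assoc]
    exact Submodule.smul_mem _ c (hw L μ ν hμ)

theorem star_mul_mem_eventuallyScalar {ι R B : Type*} [CommSemiring R] [Ring B] [StarRing B]
    [Algebra R B] {S : ι → B} {Q : ℕ → B} {w : B} (hw : w ∈ eventuallyScalar R S Q) (i : ι) :
    star (S i) * w ∈ eventuallyScalar R S Q := by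
  obtain ⟨d, hd⟩ := hw
  refine ⟨d, fun L μ ν hμ => ?_⟩
  simpa only [levelWord, star_mul, mul_assoc] using
    hd L (i :: μ) ν (hμ.trans (Nat.le_succ μ.length))

namespace IsCuntzShift

section Algebra

variable {ι B : Type*} [Fintype ι] [Ring B] [StarRing B] {S : ι → B} {Q : ℕ → B}

theorem mul_level_zero (h : IsCuntzShift S Q) (i : ι) : S i * Q 0 = 0 := by
  have hS : S i * (1 - Q 0) = S i :=
    calc S i * (1 - Q 0) = S i * star (S i) * S i := by rw [← h.star_mul_self i, mul_assoc]
      _ = ∑ j, S j * star (S j) * S i := by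
        refine (Finset.sum_eq_single_of_mem (f := fun j => S j * star (S j) * S i) i
          (Finset.mem_univ i) fun j _ hj => ?_).symm
        rw [mul_assoc, h.star_mul_of_ne hj, mul_zero]
      _ = S i := by rw [← Finset.sum_mul, h.sum_mul_star, one_mul]
  simpa [mul_sub] using hS

theorem star_mul_level_mul (h : IsCuntzShift S Q) (i : ι) (n : ℕ) :
    star (S i) * Q n * S i = Q (n + 1) := by
  rw [mul_assoc, h.level_mul, ← mul_assoc, h.star_mul_self, sub_mul, one_mul,
    h.level_zero_mul_succ, sub_zero]

theorem sum_mul_level_succ_mul_star (h : IsCuntzShift S Q) (n : ℕ) :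
    ∑ i, S i * Q (n + 1) * star (S i) = Q n := by
  simp only [← h.level_mul, mul_assoc]
  rw [← Finset.mul_sum, h.sum_mul_star, mul_one]

variable [Nonempty ι]

theorem isStarProjection_level (h : IsCuntzShift S Q) (n : ℕ) : IsStarProjection (Q n) := by
  obtain ⟨i⟩ := ‹Nonempty ι›
  induction n with
  | zero =>
    rw [← isStarProjection_one_sub_iff, ← h.star_mul_self i]
    refine ⟨?_, IsSelfAdjoint.star_mul_self (S i)⟩
    calc star (S i) * S i * (star (S i) * S i) = star (S i) * (S i * (1 - Q 0)) := by
          rw [h.star_mul_self i, ← h.star_mul_self i, mul_assoc]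
      _ = star (S i) * S i := by rw [mul_sub, mul_one, h.mul_level_zero, sub_zero]
  | succ n ih =>
    rw [isStarProjection_iff']
    constructor
    · nth_rw 1 [← h.star_mul_level_mul i n]
      rw [mul_assoc, ← h.level_mul, ← mul_assoc, mul_assoc _ (Q n) (Q n), ih.isIdempotentElem.eq,
        h.star_mul_level_mul]
    · rw [← h.star_mul_level_mul i n]
      simp only [star_mul, star_star, ih.isSelfAdjoint.star_eq, mul_assoc]

theorem level_mul_level (h : IsCuntzShift S Q) (m n : ℕ) :
    Q m * Q n = if m = n then Q n else 0 := by
  obtain ⟨i⟩ := ‹Nonempty ι›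
  induction m generalizing n with
  | zero =>
    cases n with
    | zero => simpa using (h.isStarProjection_level 0).isIdempotentElem.eq
    | succ n => simpa using h.level_zero_mul_succ n
  | succ m ih =>
    cases n with
    | zero =>
      have := congrArg star (h.level_zero_mul_succ m)
      simpa [(h.isStarProjection_level _).isSelfAdjoint.star_eq] using this
    | succ n =>
      calc Q (m + 1) * Q (n + 1) = star (S i) * (Q m * Q n) * S i := by
            rw [← h.star_mul_level_mul i m, mul_assoc, ← h.level_mul]
            simp only [mul_assoc]
        _ = if m + 1 = n + 1 then Q (n + 1) else 0 := by
            rw [ih]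
            split_ifs <;> simp_all [h.star_mul_level_mul]

theorem level_mul_levelWord (h : IsCuntzShift S Q) (n L : ℕ) (μ : List ι) :
    Q n * levelWord S Q L μ = if n + μ.length = L then levelWord S Q L μ else 0 := by
  induction μ generalizing n with
  | nil =>
    rw [levelWord, h.level_mul_level, List.length_nil, add_zero]
  | cons i μ ih =>
    rw [levelWord, ← mul_assoc, h.level_mul, mul_assoc, ih, List.length_cons, mul_ite, mul_zero,
      add_right_comm, add_assoc]

theorem levelWord_mul_level (h : IsCuntzShift S Q) (L : ℕ) (μ : List ι) :
    levelWord S Q L μ * Q L = levelWord S Q L μ := by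
  induction μ with
  | nil => exact (h.isStarProjection_level L).isIdempotentElem.eq
  | cons i μ ih => rw [levelWord, mul_assoc, ih]

theorem star_mul_levelWord_cons (h : IsCuntzShift S Q) (i j : ι) (L : ℕ) (μ : List ι) :
    star (S i) * levelWord S Q L (j :: μ) = levelWord S Q L μ ∨
      star (S i) * levelWord S Q L (j :: μ) = 0 := by
  rcases ne_or_eq i j with hij | rfl
  · right
    rw [levelWord, ← mul_assoc, h.star_mul_of_ne hij, zero_mul]
  have hQ := h.level_mul_levelWord 0 L μ
  split_ifs at hQ with hL
  · right
    rw [levelWord, ← hQ, ← mul_assoc (S i), h.mul_level_zero, zero_mul, mul_zero]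
  · left
    rw [levelWord, ← mul_assoc, h.star_mul_self, sub_mul, one_mul, hQ, sub_zero]

end Algebra

section Scalar

variable {ι R B : Type*} [Fintype ι] [Nonempty ι] [CommSemiring R] [Ring B] [StarRing B]
  [Algebra R B] {S : ι → B} {Q : ℕ → B}

theorem star_levelWord_mul_levelWord_mem_span (h : IsCuntzShift S Q) (L : ℕ)
    (μ ν : List ι) :
    star (levelWord S Q L μ) * levelWord S Q L ν ∈ Submodule.span R {Q L} := by
  have hcons (i : ι) (κ : List ι) : Q L * levelWord S Q L (i :: κ) = 0 := by
    rw [h.level_mul_levelWord, if_neg (by simp)]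
  have hstar : star (Q L) = Q L := (h.isStarProjection_level L).isSelfAdjoint.star_eq
  induction μ generalizing ν with
  | nil =>
    cases ν with
    | nil =>
      rw [levelWord, hstar, (h.isStarProjection_level L).isIdempotentElem.eq]
      exact Submodule.mem_span_singleton_self _
    | cons j ν =>
      rw [levelWord, hstar, hcons]
      exact zero_mem _
  | cons i μ ih =>
    cases ν with
    | nil =>
      rw [levelWord.eq_1, ← hstar, ← star_mul, hcons, star_zero]
      exact zero_mem _
    | cons j ν =>
      rw [levelWord.eq_2 S Q L i μ, star_mul, mul_assoc]
      rcases h.star_mul_levelWord_cons i j L ν with hν | hν <;> rw [hν]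
      · exact ih ν
      · rw [mul_zero]
        exact zero_mem _

theorem one_mem_eventuallyScalar (h : IsCuntzShift S Q) : (1 : B) ∈ eventuallyScalar R S Q :=
  ⟨0, fun L μ ν _ => by
    simpa only [mul_one] using h.star_levelWord_mul_levelWord_mem_span L μ ν⟩

theorem mul_mem_eventuallyScalar (h : IsCuntzShift S Q) {w : B}
    (hw : w ∈ eventuallyScalar R S Q) (i : ι) : S i * w ∈ eventuallyScalar R S Q := by
  obtain ⟨d, hd⟩ := hw
  refine ⟨d + 1, fun L μ ν hμ => ?_⟩
  obtain _ | ⟨j, μ⟩ := μ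
  · simp at hμ
  have hmove : star (levelWord S Q L (j :: μ)) * (S i * w) =
      star (star (S i) * levelWord S Q L (j :: μ)) * w := by
    rw [star_mul, star_star, mul_assoc]
  rw [hmove]
  rcases h.star_mul_levelWord_cons i j L μ with hcons | hcons <;> rw [hcons]
  · exact hd L μ ν (by simpa using hμ)
  · simp

theorem mem_eventuallyScalar_of_mem_adjoin [StarRing R] [StarModule R B]
    (h : IsCuntzShift S Q) {w : B}
    (hw : w ∈ NonUnitalStarAlgebra.adjoin R (Set.range S)) : w ∈ eventuallyScalar R S Q := by
  have hmul : ∀ v ∈ eventuallyScalar R S Q, w * v ∈ eventuallyScalar R S Q := by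
    rw [← NonUnitalStarSubalgebra.mem_toNonUnitalSubalgebra,
      NonUnitalStarAlgebra.adjoin_toNonUnitalSubalgebra] at hw
    induction hw using NonUnitalAlgebra.adjoin_induction with
    | mem x hx =>
      intro v hv
      obtain ⟨i, rfl⟩ | ⟨i, hi⟩ := hx
      · exact h.mul_mem_eventuallyScalar hv i
      · rw [← star_star x, ← hi]
        exact star_mul_mem_eventuallyScalar hv i
    | zero => simp
    | add x y _ _ hx hy =>
      intro v hv
      rw [add_mul]
      exact add_mem (hx v hv) (hy v hv)
    | mul x y _ _ hx hy =>
      intro v hv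
      rw [mul_assoc]
      exact hx _ (hy v hv)
    | smul c x _ hx =>
      intro v hv
      rw [smul_mul_assoc]
      exact Submodule.smul_mem _ c (hx v hv)
  simpa using hmul 1 h.one_mem_eventuallyScalar

end Scalar

section CStarAlgebra

variable {ι B : Type*} [Fintype ι] [CStarAlgebra B] {S : ι → B} {Q : ℕ → B} {C J : Set B}

theorem one_mem_generatedAlgebra (h : IsCuntzShift S Q) : (1 : B) ∈ generatedAlgebra S := by
  rw [← h.sum_mul_star]
  exact sum_mem fun i _ =>
    mul_mem (mem_generatedAlgebra S i) (star_mem (mem_generatedAlgebra S i))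

variable [Nonempty ι]

theorem norm_generator_le_one (h : IsCuntzShift S Q) (i : ι) : ‖S i‖ ≤ 1 := by
  have hsq : ‖S i‖ ^ 2 ≤ 1 := by
    rw [sq, ← CStarRing.norm_star_mul_self, h.star_mul_self]
    exact (h.isStarProjection_level 0).one_sub.norm_le
  exact (sq_le_one_iff₀ (norm_nonneg _)).mp hsq

theorem norm_levelWord_le_one (h : IsCuntzShift S Q) (L : ℕ) (μ : List ι) :
    ‖levelWord S Q L μ‖ ≤ 1 := by
  induction μ with
  | nil => exact (h.isStarProjection_level L).norm_le
  | cons i μ ih =>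
    exact (norm_mul_le _ _).trans
      (mul_le_one₀ (h.norm_generator_le_one i) (norm_nonneg _) ih)

theorem level_zero_mem_generatedAlgebra (h : IsCuntzShift S Q) :
    Q 0 ∈ generatedAlgebra S := by
  obtain ⟨i⟩ := ‹Nonempty ι›
  have hQ : Q 0 = 1 - star (S i) * S i := by rw [h.star_mul_self, sub_sub_cancel]
  rw [hQ]
  exact sub_mem h.one_mem_generatedAlgebra
    (mul_mem (star_mem (mem_generatedAlgebra S i)) (mem_generatedAlgebra S i))

theorem level_mem (h : IsCuntzShift S Q) (hC : IsClosedIdealOf (generatedAlgebra S : Set B) C)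
    (h0 : Q 0 ∈ C) (n : ℕ) : Q n ∈ C := by
  obtain ⟨i⟩ := ‹Nonempty ι›
  induction n with
  | zero => exact h0
  | succ n ih =>
    rw [← h.star_mul_level_mul i]
    exact hC.mul_mem_right (hC.mul_mem_left (star_mem (mem_generatedAlgebra S i)) ih)
      (mem_generatedAlgebra S i)

theorem levelWord_mem (h : IsCuntzShift S Q)
    (hC : IsClosedIdealOf (generatedAlgebra S : Set B) C) (h0 : Q 0 ∈ C) (L : ℕ) (μ : List ι) :
    levelWord S Q L μ ∈ C := by
  induction μ with
  | nil => exact h.level_mem hC h0 L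
  | cons i μ ih => exact hC.mul_mem_left (mem_generatedAlgebra S i) ih

theorem star_levelWord_mem (h : IsCuntzShift S Q)
    (hC : IsClosedIdealOf (generatedAlgebra S : Set B) C) (h0 : Q 0 ∈ C) (L : ℕ) (μ : List ι) :
    star (levelWord S Q L μ) ∈ C := by
  induction μ with
  | nil =>
    rw [levelWord, (h.isStarProjection_level L).isSelfAdjoint.star_eq]
    exact h.level_mem hC h0 L
  | cons i μ ih =>
    rw [levelWord, star_mul]
    exact hC.mul_mem_right ih (star_mem (mem_generatedAlgebra S i))

theorem norm_compression_le (h : IsCuntzShift S Q) (L : ℕ) (μ ν : List ι) (x : B) :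
    ‖star (levelWord S Q L μ) * x * levelWord S Q L ν‖ ≤ ‖x‖ :=
  calc ‖star (levelWord S Q L μ) * x * levelWord S Q L ν‖
      ≤ ‖star (levelWord S Q L μ)‖ * ‖x‖ * ‖levelWord S Q L ν‖ := norm_mul₃_le
    _ ≤ 1 * ‖x‖ * 1 := by
      rw [norm_star]
      gcongr <;> exact h.norm_levelWord_le_one L _
    _ = ‖x‖ := by ring

theorem level_mem_of_norm_sub_lt (h : IsCuntzShift S Q)
    (hC : IsClosedIdealOf (generatedAlgebra S : Set B) C) (h0 : Q 0 ∈ C)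
    (hJ : IsClosedIdealOf C J) {x w : B} (hx : x ∈ J) {c : ℂ} {L : ℕ} {μ ν : List ι}
    (hw : star (levelWord S Q L μ) * w * levelWord S Q L ν = c • Q L) (hlt : ‖x - w‖ < ‖c‖) :
    Q L ∈ J := by
  have hc : 0 < ‖c‖ := (norm_nonneg _).trans_lt hlt
  set z := star (levelWord S Q L μ) * x * levelWord S Q L ν with hz
  have hzJ : c⁻¹ • z ∈ J := hJ.smul_mem _ <|
    hJ.mul_mem_right (hJ.mul_mem_left (h.star_levelWord_mem hC h0 L μ) hx)
      (h.levelWord_mem hC h0 L ν)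
  have hdist : ‖c • Q L - z‖ ≤ ‖x - w‖ := by
    rw [← hw, hz, ← sub_mul, ← mul_sub, norm_sub_rev x w]
    exact h.norm_compression_le L μ ν (w - x)
  have hclose : ‖Q L - c⁻¹ • z‖ < 1 := by
    have hfactor : Q L - c⁻¹ • z = c⁻¹ • (c • Q L - z) := by
      rw [smul_sub, inv_smul_smul₀ (norm_pos_iff.mp hc)]
    rw [hfactor, norm_smul, norm_inv, inv_mul_lt_one₀ hc]
    exact hdist.trans_lt hlt
  refine hJ.mem_of_norm_sub_lt_one hzJ
    (hC.sub_mem (h.level_mem hC h0 L) (hJ.subset hzJ))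
    (h.isStarProjection_level L).isIdempotentElem ?_ hclose
  rw [smul_mul_assoc, hz, mul_assoc, h.levelWord_mul_level]

theorem level_zero_mem_of_level_mem (h : IsCuntzShift S Q)
    (hC : IsClosedIdealOf (generatedAlgebra S : Set B) C) (hJ : IsClosedIdealOf C J) {L : ℕ}
    (hL : Q L ∈ J) : Q 0 ∈ J := by
  induction L with
  | zero => exact hL
  | succ L ih =>
    refine ih ?_
    rw [← h.sum_mul_level_succ_mul_star L]
    exact hJ.sum_mem fun i => hC.mul_mul_mem_of_isIdempotentElem hJ
      (h.isStarProjection_level (L + 1)).isIdempotentElem hL (mem_generatedAlgebra S i)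
      (star_mem (mem_generatedAlgebra S i))

theorem isClosedIdealOf_closedIdealSpan (h : IsCuntzShift S Q) :
    IsClosedIdealOf (generatedAlgebra S : Set B) (closedIdealSpan (generatedAlgebra S) (Q 0)) :=
  _root_.isClosedIdealOf_closedIdealSpan (isClosedIdealOf_generatedAlgebra S)
    h.level_zero_mem_generatedAlgebra

theorem eq_closedIdealSpan_of_level_mem (h : IsCuntzShift S Q)
    (hJ : IsClosedIdealOf (closedIdealSpan (generatedAlgebra S : Set B) (Q 0)) J) {L : ℕ}
    (hL : Q L ∈ J) : J = closedIdealSpan (generatedAlgebra S : Set B) (Q 0) := by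
  have hC := h.isClosedIdealOf_closedIdealSpan
  have h0 : Q 0 ∈ J := h.level_zero_mem_of_level_mem hC hJ hL
  refine hJ.subset.antisymm <| closedIdealSpan_subset (isClosedIdealOf_generatedAlgebra S)
    h.one_mem_generatedAlgebra h.level_zero_mem_generatedAlgebra hJ fun t ht s hs => ?_
  exact hC.mul_mul_mem_of_isIdempotentElem hJ
    (h.isStarProjection_level 0).isIdempotentElem h0 ht hs

end CStarAlgebra

end IsCuntzShift

section HilbertSpace

variable {κ H : Type*} [NormedAddCommGroup H] [InnerProductSpace ℂ H]

theorem hilbertBasis_ext_inner_s15 (f : HilbertBasis κ ℂ H) {x y : H}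
    (h : ∀ p, inner ℂ (f p) x = inner ℂ (f p) y) : x = y := by
  refine f.repr.injective (lp.ext (funext fun p => ?_))
  rw [f.repr_apply_apply, f.repr_apply_apply, h]

theorem hilbertBasis_ext_clm (f : HilbertBasis κ ℂ H) {A B : H →L[ℂ] H}
    (h : ∀ p, A (f p) = B (f p)) : A = B :=
  ContinuousLinearMap.ext_on
    (Submodule.dense_iff_topologicalClosure_eq_top.mpr f.dense_span)
    (Set.forall_mem_range.mpr h)

end HilbertSpace

/-- `S i f(m, r) = f(m - 1, e (r, i))` for `m ≥ 1` and `S i f(0, r) = 0`: these are the block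
Toeplitz operators `Σᵢ`, where `e` generalises the base-`N` bijection `(r, i) ↦ r * N + i`. -/
def IsDigitShift {ι β H : Type*} [NormedAddCommGroup H] [InnerProductSpace ℂ H]
    (f : HilbertBasis (ℕ × β) ℂ H) (e : β × ι ≃ β) (S : ι → H →L[ℂ] H) : Prop :=
  ∀ (i : ι) (m : ℕ) (r : β), S i (f (m, r)) = if m = 0 then 0 else f (m - 1, e (r, i))

/-- `Q n` is the orthogonal projection onto the `n`-th level, the closed span of the `f (n, r)`. -/
def IsLevelProjections {β H : Type*} [NormedAddCommGroup H] [InnerProductSpace ℂ H]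
    (f : HilbertBasis (ℕ × β) ℂ H) (Q : ℕ → H →L[ℂ] H) : Prop :=
  ∀ (n m : ℕ) (r : β), Q n (f (m, r)) = if m = n then f (m, r) else 0

namespace IsDigitShift

variable {ι β H : Type*} [NormedAddCommGroup H] [InnerProductSpace ℂ H]
  {f : HilbertBasis (ℕ × β) ℂ H} {e : β × ι ≃ β} {S : ι → H →L[ℂ] H} {Q : ℕ → H →L[ℂ] H}

theorem apply_zero (hS : IsDigitShift f e S) (i : ι) (r : β) : S i (f (0, r)) = 0 := by
  simp [hS i 0 r]

theorem apply_succ (hS : IsDigitShift f e S) (i : ι) (m : ℕ) (r : β) :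
    S i (f (m + 1, r)) = f (m, e (r, i)) := by
  simp [hS i (m + 1) r]

theorem exists_levelWord_apply_eq (hS : IsDigitShift f e S) (hQ : IsLevelProjections f Q)
    (k j : ℕ) (a : β) : ∃ μ : List ι, ∃ a' : β,
      μ.length = j ∧ levelWord S Q (k + j) μ (f (k + j, a')) = f (k, a) := by
  induction j generalizing k a with
  | zero => exact ⟨[], a, rfl, by simp [levelWord, hQ k]⟩
  | succ j ih =>
    obtain ⟨⟨r, i⟩, rfl⟩ := e.surjective a
    obtain ⟨μ, a', hμ, happ⟩ := ih (k + 1) r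
    refine ⟨i :: μ, a', by simp [hμ], ?_⟩
    rw [add_right_comm] at happ
    rw [levelWord, mul_apply_eq_comp, ← add_assoc, happ, hS.apply_succ]

variable [CompleteSpace H]

theorem star_apply [DecidableEq ι] (hS : IsDigitShift f e S) (i j : ι) (m : ℕ) (r : β) :
    star (S i) (f (m, e (r, j))) = if i = j then f (m + 1, r) else 0 := by
  classical
  refine hilbertBasis_ext_inner_s15 f fun ⟨n, s⟩ => ?_
  rw [ContinuousLinearMap.star_eq_adjoint, ContinuousLinearMap.adjoint_inner_right,
    apply_ite (inner ℂ (f (n, s))), inner_zero_right, orthonormal_iff_ite.mp f.orthonormal]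
  cases n with
  | zero => simp [hS.apply_zero]
  | succ n =>
    rw [hS.apply_succ, orthonormal_iff_ite.mp f.orthonormal, ← ite_and]
    refine if_congr ?_ rfl rfl
    simp only [Prod.mk.injEq, EmbeddingLike.apply_eq_iff_eq, add_left_inj]
    tauto

theorem exists_isLevelProjections [Nonempty ι] (hS : IsDigitShift f e S) {P : H →L[ℂ] H}
    (hP : ∀ m r, P (f (m, r)) = if m = 0 then f (m, r) else 0) :
    ∃ Q, Q 0 = P ∧ IsLevelProjections f Q := by
  classical
  obtain ⟨i⟩ := ‹Nonempty ι›
  let Q : ℕ → H →L[ℂ] H := Nat.rec P fun _ R => star (S i) * R * S i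
  refine ⟨Q, rfl, fun n => ?_⟩
  induction n with
  | zero => exact hP
  | succ n ih =>
    rintro (_ | m) r
    · rw [mul_apply_eq_comp, hS.apply_zero, map_zero, if_neg n.succ_ne_zero.symm]
    · change star (S i) (Q n (S i (f (m + 1, r)))) = _
      rw [hS.apply_succ, ih, apply_ite (⇑(star (S i))), hS.star_apply, if_pos rfl, map_zero]
      exact if_congr (Nat.succ_inj).symm rfl rfl

theorem isCuntzShift [Fintype ι] (hS : IsDigitShift f e S) (hQ : IsLevelProjections f Q) :
    IsCuntzShift S Q := by
  classical
  refine ⟨fun i => ?_, fun {i j} hij => ?_, ?_, fun n i => ?_, fun n => ?_⟩ <;>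
    refine hilbertBasis_ext_clm f fun ⟨m, r⟩ => ?_
  · cases m with
    | zero => simp [hS.apply_zero, hQ 0]
    | succ m => simp [hS.apply_succ, hS.star_apply, hQ 0]
  · cases m with
    | zero => simp [hS.apply_zero]
    | succ m => simp [hS.apply_succ, hS.star_apply, hij]
  · obtain ⟨⟨r, j⟩, rfl⟩ := e.surjective r
    simp [_root_.sum_apply, hS.star_apply, apply_ite, hS.apply_succ]
  · cases m with
    | zero => simp [hS.apply_zero, hQ (n + 1)]
    | succ m =>
      simp only [mul_apply_eq_comp, hS.apply_succ, hQ n, hQ (n + 1), Nat.succ_inj, apply_ite (S i),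
        map_zero]
  · simp only [mul_apply_eq_comp, hQ (n + 1), apply_ite (Q 0), hQ 0, map_zero]
    split_ifs <;> simp_all

end IsDigitShift

theorem exists_inner_hilbertBasis_ne_zero {κ H : Type*} [NormedAddCommGroup H]
    [InnerProductSpace ℂ H] (f : HilbertBasis κ ℂ H) {x : H →L[ℂ] H} (hx : x ≠ 0) :
    ∃ p q, inner ℂ (f p) (x (f q)) ≠ 0 := by
  by_contra! hzero
  refine hx (hilbertBasis_ext_clm f fun q => hilbertBasis_ext_inner_s15 f fun p => ?_)
  simpa using hzero p q

theorem norm_inner_apply_le_norm {H : Type*} [NormedAddCommGroup H]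
    [InnerProductSpace ℂ H] (x : H →L[ℂ] H) {ξ η : H} (hξ : ‖ξ‖ = 1) (hη : ‖η‖ = 1) :
    ‖inner ℂ ξ (x η)‖ ≤ ‖x‖ :=
  calc ‖inner ℂ ξ (x η)‖ ≤ ‖ξ‖ * ‖x η‖ := norm_inner_le_norm ξ (x η)
    _ = ‖x η‖ := by rw [hξ, one_mul]
    _ ≤ ‖x‖ := x.unit_le_opNorm η hη.le

section Simplicity

variable {ι β H : Type*} [Finite ι] [Nonempty ι] [NormedAddCommGroup H] [InnerProductSpace ℂ H]
  [CompleteSpace H] {f : HilbertBasis (ℕ × β) ℂ H} {e : β × ι ≃ β} {S : ι → H →L[ℂ] H}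
  {Q : ℕ → H →L[ℂ] H}

theorem IsDigitShift.exists_compression_eq_smul (hS : IsDigitShift f e S)
    (hQ : IsLevelProjections f Q) {w : H →L[ℂ] H}
    (hw : w ∈ NonUnitalStarAlgebra.adjoin ℂ (Set.range S)) (p q : ℕ × β) :
    ∃ (c : ℂ) (L : ℕ) (μ ν : List ι),
      star (levelWord S Q L μ) * w * levelWord S Q L ν = c • Q L ∧
        ‖inner ℂ (f p) (w (f q))‖ ≤ ‖c‖ := by
  have := Fintype.ofFinite ι
  have h : IsCuntzShift S Q := hS.isCuntzShift hQ
  obtain ⟨k, a⟩ := p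
  obtain ⟨l, b⟩ := q
  obtain ⟨d, hd⟩ := h.mem_eventuallyScalar_of_mem_adjoin hw
  obtain ⟨μ, a', hμ, ha⟩ := hS.exists_levelWord_apply_eq hQ k (l + d) a
  obtain ⟨ν, b', -, hb⟩ := hS.exists_levelWord_apply_eq hQ l (k + d) b
  set L := k + (l + d) with hL
  rw [show l + (k + d) = L by omega] at hb
  obtain ⟨c, hc⟩ := Submodule.mem_span_singleton.mp (hd L μ ν (by omega))
  refine ⟨c, L, μ, ν, hc.symm, ?_⟩
  have hcoeff :
      inner ℂ (f (k, a)) (w (f (l, b))) = inner ℂ (f (L, a')) ((c • Q L) (f (L, b'))) := by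
    rw [hc, ← ha, ← hb, mul_apply_eq_comp, mul_apply_eq_comp, ContinuousLinearMap.star_eq_adjoint,
      ContinuousLinearMap.adjoint_inner_right]
  rw [hcoeff]
  refine (norm_inner_apply_le_norm _ (f.orthonormal.1 _) (f.orthonormal.1 _)).trans ?_
  rw [norm_smul]
  exact mul_le_of_le_one_right (norm_nonneg c) (h.isStarProjection_level L).norm_le

theorem IsDigitShift.exists_level_mem (hS : IsDigitShift f e S) (hQ : IsLevelProjections f Q)
    {C J : Set (H →L[ℂ] H)} (hC : IsClosedIdealOf (generatedAlgebra S : Set (H →L[ℂ] H)) C)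
    (h0 : Q 0 ∈ C) (hJ : IsClosedIdealOf C J) {x : H →L[ℂ] H} (hx : x ∈ J) (hne : x ≠ 0) :
    ∃ L, Q L ∈ J := by
  have := Fintype.ofFinite ι
  obtain ⟨p, q, hpq⟩ := exists_inner_hilbertBasis_ne_zero f hne
  set t := inner ℂ (f p) (x (f q)) with ht
  have hxT : x ∈ closure (NonUnitalStarAlgebra.adjoin ℂ (Set.range S) : Set (H →L[ℂ] H)) :=
    hC.subset (hJ.subset hx)
  obtain ⟨w, hw, hxw⟩ := Metric.mem_closure_iff.mp hxT (‖t‖ / 2) (by positivity)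
  rw [dist_eq_norm] at hxw
  obtain ⟨c, L, μ, ν, hcompr, hc⟩ := hS.exists_compression_eq_smul hQ hw p q
  have hdiff : ‖t - inner ℂ (f p) (w (f q))‖ ≤ ‖x - w‖ := by
    rw [ht, ← inner_sub_right, ← sub_apply]
    exact norm_inner_apply_le_norm (x - w) (f.orthonormal.1 p) (f.orthonormal.1 q)
  have hlt : ‖x - w‖ < ‖c‖ := by
    linarith [norm_sub_norm_le t (inner ℂ (f p) (w (f q)))]
  exact ⟨L, (hS.isCuntzShift hQ).level_mem_of_norm_sub_lt hC h0 hJ hx hcompr hlt⟩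

theorem stmt15_general (f : HilbertBasis (ℕ × β) ℂ H) (e : β × ι ≃ β) {S : ι → H →L[ℂ] H}
    (hS : IsDigitShift f e S) {P : H →L[ℂ] H}
    (hP : ∀ m r, P (f (m, r)) = if m = 0 then f (m, r) else 0) {J : Set (H →L[ℂ] H)}
    (hJ : IsClosedIdealOf (closedIdealSpan (generatedAlgebra S : Set (H →L[ℂ] H)) P) J) :
    J = {0} ∨ J = closedIdealSpan (generatedAlgebra S : Set (H →L[ℂ] H)) P := by
  have := Fintype.ofFinite ι
  obtain ⟨Q, rfl, hQ⟩ := hS.exists_isLevelProjections hP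
  have h : IsCuntzShift S Q := hS.isCuntzShift hQ
  by_cases hzero : ∃ x ∈ J, x ≠ 0
  · obtain ⟨x, hx, hne⟩ := hzero
    obtain ⟨L, hL⟩ := hS.exists_level_mem hQ h.isClosedIdealOf_closedIdealSpan
      (mem_closedIdealSpan_self _ _) hJ hx hne
    exact Or.inr (h.eq_closedIdealSpan_of_level_mem hJ hL)
  · push Not at hzero
    exact Or.inl (Set.eq_singleton_iff_unique_mem.mpr ⟨hJ.zero_mem, hzero⟩)

end Simplicity

/-- `H2` models `ℓ²(ℤ⁺, ℓ²(ℤ⁺))`, with orthonormal basis `f (m, r)`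
(the vector whose `m`-th component is the `r`-th basis vector of `ℓ²(ℤ⁺)`). `Sg i` models the
block Toeplitz operator `Σᵢ` with `S i` on the first superdiagonal:
`Σᵢ f(m,r) = f(m-1, r*N+i)` for `m ≥ 1` and `Σᵢ f(0,r) = 0`. `Pi1` models
`Π₁ = diag(I,0,0,…)`. `T_N` is the smallest closed *-subalgebra containing the `Σᵢ`, and
`C_N` the smallest closed two-sided ideal of `T_N` containing `Π₁`. The claim: `C_N` is
simple — every closed two-sided ideal of `C_N` is `{0}` or `C_N`. -/
theorem stmt15 {H2 : Type*} [NormedAddCommGroup H2] [InnerProductSpace ℂ H2]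
    [CompleteSpace H2]
    (f : HilbertBasis (ℕ × ℕ) ℂ H2) (N : ℕ) (hN : 2 ≤ N)
    (Sg : Fin N → H2 →L[ℂ] H2)
    (hSg : ∀ (i : Fin N) (m r : ℕ),
      Sg i (f (m, r)) = if m = 0 then 0 else f (m - 1, r * N + (i : ℕ)))
    (Pi1 : H2 →L[ℂ] H2)
    (hPi1 : ∀ m r : ℕ, Pi1 (f (m, r)) = if m = 0 then f (m, r) else 0)
    (J : Set (H2 →L[ℂ] H2))
    (hJ : IsClosedIdealOf
      (⋂₀ {K : Set (H2 →L[ℂ] H2) |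
        IsClosedIdealOf
          ((NonUnitalStarAlgebra.adjoin ℂ (Set.range Sg)).topologicalClosure :
            Set (H2 →L[ℂ] H2)) K ∧ Pi1 ∈ K})
      J) :
    J = {0} ∨
      J = ⋂₀ {K : Set (H2 →L[ℂ] H2) |
        IsClosedIdealOf
          ((NonUnitalStarAlgebra.adjoin ℂ (Set.range Sg)).topologicalClosure :
            Set (H2 →L[ℂ] H2)) K ∧ Pi1 ∈ K} := by
  have : NeZero N := ⟨by omega⟩
  exact stmt15_general f (Nat.divModEquiv N).symm hSg hPi1 hJ
end
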